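/- Let S be a level-2 collapsible pushdown system whose input alphabet Γ contains the symbol ε, let G be its configuration graph and G/ε its ε-contraction, and let L₁,…,L_n be regular languages over Γ. Then the expansion of G/ε by the relations Reach_{L₁},…,Reach_{L_n} is a tree-automatic structure. -/

import Mathlib

namespace CPG

/-! ## Level-2 collapsible pushdown stacks -/

/-- Stack letters: `Sum.inl σ` is a letter with a level-1 link,
`Sum.inr (σ, k)` is a letter with a level-2 link to the substack of width `k`. -/
abbrev Letter (A : Type) := A ⊕ (A × ℕ)

def symOf {A : Type} : Letter A → A
  | Sum.inl a => a
  | Sum.inr (a, _) => a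

def lvlOf {A : Type} : Letter A → ℕ
  | Sum.inl _ => 1
  | Sum.inr _ => 2

abbrev Word (A : Type) := List (Letter A)

/-- A 2-word: a list of words; the last word is the topmost one. -/
abbrev Stack2 (A : Type) := List (Word A)

/-- The initial level-2 stack `⊥₂`. -/
def bottom2 {A : Type} (bot : A) : Stack2 A := [[Sum.inl bot]]

def top2 {A : Type} (s : Stack2 A) : Option (Word A) := s.getLast?

def top1 {A : Type} (s : Stack2 A) : Option (Letter A) := s.getLast?.bind List.getLast?

def symS {A : Type} (s : Stack2 A) : Option A := (top1 s).map symOf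

def lvlS {A : Type} (s : Stack2 A) : Option ℕ := (top1 s).map lvlOf

def lnkS {A : Type} (s : Stack2 A) : Option ℕ :=
  match top1 s, top2 s with
  | some (Sum.inr (_, j)), _ => some j
  | some (Sum.inl _), some w => some (w.length - 1)
  | _, _ => none

def clone2 {A : Type} (s : Stack2 A) : Option (Stack2 A) :=
  (top2 s).map fun w => s ++ [w]

def push1 {A : Type} [DecidableEq A] (bot a : A) (s : Stack2 A) : Option (Stack2 A) :=
  if a = bot then none else (top2 s).map fun w => s.dropLast ++ [w ++ [Sum.inl a]]

def push2 {A : Type} [DecidableEq A] (bot a : A) (s : Stack2 A) : Option (Stack2 A) :=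
  if a = bot then none else
    (top2 s).map fun w => s.dropLast ++ [w ++ [Sum.inr (a, s.length - 1)]]

def pop2 {A : Type} (s : Stack2 A) : Option (Stack2 A) :=
  if 1 < s.length then some s.dropLast else none

def pop1 {A : Type} (s : Stack2 A) : Option (Stack2 A) :=
  match s.getLast? with
  | some w => if 1 < w.length then some (s.dropLast ++ [w.dropLast]) else none
  | none => none

def collapse {A : Type} (s : Stack2 A) : Option (Stack2 A) :=
  match top1 s with
  | some (Sum.inr (_, k)) => if 0 < k then some (s.take k) else none
  | some (Sum.inl _) => pop1 s
  | none => none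

/-- The level-2 stack operations. -/
inductive Op (A : Type) where
  | clone2 | pop1 | pop2 | collapse
  | push1 (a : A) | push2 (a : A)

def applyOp {A : Type} [DecidableEq A] (bot : A) : Op A → Stack2 A → Option (Stack2 A)
  | .clone2 => clone2
  | .pop1 => pop1
  | .pop2 => pop2
  | .collapse => collapse
  | .push1 a => push1 bot a
  | .push2 a => push2 bot a

/-- `Stacks(Σ)` : the smallest set containing `⊥₂` and closed under the operations. -/
inductive IsStack {A : Type} [DecidableEq A] (bot : A) : Stack2 A → Prop where
  | base : IsStack bot (bottom2 bot)
  | step {s t : Stack2 A} (op : Op A) : IsStack bot s → applyOp bot op s = some t →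
      IsStack bot t

/-- Iterated application of a partial stack operation. -/
def iter {A : Type} (f : Stack2 A → Option (Stack2 A)) : ℕ → Stack2 A → Option (Stack2 A)
  | 0, s => some s
  | n + 1, s => (f s).bind (iter f n)

/-- `t` is a substack of `s`: `t = Pop₁ⁿ(Pop₂ᵐ(s))`. -/
def Substack {A : Type} (t s : Stack2 A) : Prop :=
  ∃ n m, (iter pop2 m s).bind (iter pop1 n) = some t

def ProperSubstack {A : Type} (t s : Stack2 A) : Prop := Substack t s ∧ t ≠ s

/-- `s` is a prefix of `t` (`s ⊑ t`). -/
def StackPrefix {A : Type} (s t : Stack2 A) : Prop :=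
  s ≠ [] ∧ s.length ≤ t.length ∧ s.dropLast <+: t ∧
    ∀ j, s.length - 1 ≤ j → j < t.length → s.getLastD [] <+: t.getD j []

/-- `t[s/u]` : the stack obtained from `t` by replacing the prefix `s` by `u`. -/
def substPrefix {A : Type} (t s u : Stack2 A) : Stack2 A :=
  u.dropLast ++
    (t.drop (s.length - 1)).map fun v => u.getLastD [] ++ v.drop (s.getLastD []).length

/-! ## Collapsible pushdown systems and runs -/

/-- A level-2 collapsible pushdown system. -/
structure CPS (Q A Γ : Type) where
  bot : A
  q0 : Q
  Δ : Set (Q × A × Γ × Q × Op A)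

variable {Q A Γ : Type} [DecidableEq A]

/-- A `γ`-labelled transition realized by the operation `op`. -/
def TransOp (S : CPS Q A Γ) (γ : Γ) (op : Op A) (c c' : Q × Stack2 A) : Prop :=
  ∃ σ : A, symS c.2 = some σ ∧ (c.1, σ, γ, c'.1, op) ∈ S.Δ ∧
    applyOp S.bot op c.2 = some c'.2

def Trans (S : CPS Q A Γ) (γ : Γ) (c c' : Q × Stack2 A) : Prop :=
  ∃ op, TransOp S γ op c c'

/-- A run of a collapsible pushdown system (recording configurations, labels and
operations of each step). -/
structure Run (S : CPS Q A Γ) where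
  len : ℕ
  cfg : ℕ → Q × Stack2 A
  lab : ℕ → Γ
  op : ℕ → Op A
  ok : ∀ i, i < len → TransOp S (lab i) (op i) (cfg i) (cfg (i + 1))

def Run.stk {S : CPS Q A Γ} (ρ : Run S) (i : ℕ) : Stack2 A := (ρ.cfg i).2

/-- The word of labels along a run. -/
def Run.labels {S : CPS Q A Γ} (ρ : Run S) : List Γ :=
  List.ofFn fun i : Fin ρ.len => ρ.lab i

/-- `Reach_L`-reachability: a run from `c` to `c'` labelled by a word in `L`. -/
def ReachL (S : CPS Q A Γ) (L : Language Γ) (c c' : Q × Stack2 A) : Prop :=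
  ∃ ρ : Run S, ρ.cfg 0 = c ∧ ρ.cfg ρ.len = c' ∧ ρ.labels ∈ L

/-- Plain reachability. -/
def Reach (S : CPS Q A Γ) (c c' : Q × Stack2 A) : Prop :=
  ∃ ρ : Run S, ρ.cfg 0 = c ∧ ρ.cfg ρ.len = c'

/-! ## ε-contraction -/

def oneLetterLang (γ : Γ) : Language Γ := {[γ]}

def nonEpsLang (eps : Γ) : Language Γ := {w | ∃ γ : Γ, γ ≠ eps ∧ w = [γ]}

/-- The language `{ε}*`. -/
def epsStar (eps : Γ) : Language Γ := KStar.kstar (oneLetterLang eps)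

/-- The language `({ε}*(Γ∖{ε}))*`. -/
def domLang (eps : Γ) : Language Γ :=
  KStar.kstar (epsStar eps * nonEpsLang eps)

/-- The language `{ε}*γ`. -/
def edgeLang (eps γ : Γ) : Language Γ := epsStar eps * oneLetterLang γ

/-- The vertex set of the ε-contraction `G/ε`. -/
def EpsDomain (S : CPS Q A Γ) (eps : Γ) : Set (Q × Stack2 A) :=
  {c | ReachL S (domLang eps) (S.q0, bottom2 S.bot) c}

/-! ## (Generalised) milestones and the order ≪ -/

/-- `wordAt bot s i` is the word `wᵢ` of `s`, with the convention `w₀ = ⊥`. -/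
def wordAt {A : Type} (bot : A) (s : Stack2 A) (i : ℕ) : Word A :=
  if i = 0 then [Sum.inl bot] else s.getD (i - 1) []

/-- Longest common prefix of two words. -/
def lcp {α : Type} [DecidableEq α] : List α → List α → List α
  | a :: s, b :: t => if a = b then a :: lcp s t else []
  | _, _ => []

/-- `m` is a generalised milestone of `s`. -/
def GenMilestone (bot : A) (s m : Stack2 A) : Prop :=
  ∃ i v, i < s.length ∧ m = s.take i ++ [v] ∧
    lcp (wordAt bot s i) (wordAt bot s (i + 1)) <+: v ∧
    (v <+: wordAt bot s i ∨ v <+: wordAt bot s (i + 1))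

/-- `m` is a milestone of `s`. -/
def Milestone (bot : A) (s m : Stack2 A) : Prop :=
  ∃ i v, i < s.length ∧ m = s.take i ++ [v] ∧
    lcp (wordAt bot s i) (wordAt bot s (i + 1)) <+: v ∧
    v <+: wordAt bot s (i + 1)

def genMilestones (bot : A) (s : Stack2 A) : Set (Stack2 A) := {m | GenMilestone bot s m}

def milestones (bot : A) (s : Stack2 A) : Set (Stack2 A) := {m | Milestone bot s m}

/-- The base cases of the partial order `≪`. -/
def llBase (bot : A) (s t : Stack2 A) : Prop :=
  s.length < t.length ∨
    (s ≠ [] ∧ s.length = t.length ∧ s.dropLast = t.dropLast ∧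
      ((t.getLastD [] <+: s.getLastD [] ∧ t.getLastD [] ≠ s.getLastD [] ∧
          s.getLastD [] <+: wordAt bot s (s.length - 1)) ∨
        (s.getLastD [] <+: t.getLastD [] ∧ s.getLastD [] ≠ t.getLastD [] ∧
          ¬ t.getLastD [] <+: wordAt bot s (s.length - 1))))

/-- The order `≪`: the smallest reflexive transitive relation containing `llBase`. -/
def ll (bot : A) : Stack2 A → Stack2 A → Prop := Relation.ReflTransGen (llBase bot)

/-- `m'` is the ≪-successor of `m` within `genMilestones bot s`. -/
def LlSuccessor (bot : A) (s m m' : Stack2 A) : Prop :=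
  GenMilestone bot s m ∧ GenMilestone bot s m' ∧ m ≠ m' ∧ ll bot m m' ∧
    ∀ m'', GenMilestone bot s m'' → ll bot m m'' → m'' ≠ m → ll bot m' m''

/-! ## Loops, returns and 1-loops -/

/-- The segment `[i,j]` of `ρ` is a loop (of its initial stack). -/
def LoopSeg {S : CPS Q A Γ} (ρ : Run S) (i j : ℕ) : Prop :=
  i ≤ j ∧ j ≤ ρ.len ∧ ρ.stk j = ρ.stk i ∧
    (∀ k, i ≤ k → k ≤ j → ∀ t, pop2 (ρ.stk i) = some t → ¬ Substack (ρ.stk k) t) ∧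
    (∀ k, i ≤ k → k ≤ j → ∀ m, 0 < m → ∀ t, iter pop1 m (ρ.stk i) = some t →
      ρ.stk k = t → ∀ m', m' < m → ∃ t', iter pop1 m' (ρ.stk i) = some t' ∧
        lvlS t' = some 1)

/-- A high loop: a loop that never visits `Pop₁` of its stack. -/
def HighLoopSeg {S : CPS Q A Γ} (ρ : Run S) (i j : ℕ) : Prop :=
  LoopSeg ρ i j ∧ ∀ k, i ≤ k → k ≤ j → ∀ t, pop1 (ρ.stk i) = some t → ρ.stk k ≠ t

/-- A low loop: a loop whose second and second-to-last stacks are `Pop₁` of its stack. -/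
def LowLoopSeg {S : CPS Q A Γ} (ρ : Run S) (i j : ℕ) : Prop :=
  LoopSeg ρ i j ∧ i < j ∧
    ∃ t, pop1 (ρ.stk i) = some t ∧ ρ.stk (i + 1) = t ∧ ρ.stk (j - 1) = t

/-- The common part of the definition of a return on the segment `[i,j]`:
it leads from its initial stack `t` to `Pop₂(t)` and never visits a substack
of `Pop₂(t)` before its final configuration. -/
def RetShell {S : CPS Q A Γ} (ρ : Run S) (i j : ℕ) : Prop :=
  i < j ∧ j ≤ ρ.len ∧ pop2 (ρ.stk i) = some (ρ.stk j) ∧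
    ∀ k, i ≤ k → k < j → ¬ Substack (ρ.stk k) (ρ.stk j)

/-- The segment `[i,j]` of `ρ` is a return (from its initial stack `t` to `Pop₂(t)`). -/
inductive RetSeg {S : CPS Q A Γ} (ρ : Run S) : ℕ → ℕ → Prop where
  | pop2 {i j : ℕ} (h : RetShell ρ i j) (hop : ρ.op (j - 1) = Op.pop2) : RetSeg ρ i j
  | collapse {i j : ℕ} (h : RetShell ρ i j) (hop : ρ.op (j - 1) = Op.collapse)
      (hpre : ∃ w w', top2 (ρ.stk i) = some w ∧ top2 (ρ.stk (j - 1)) = some w' ∧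
        w <+: w' ∧ w ≠ w') : RetSeg ρ i j
  | sub {i k j : ℕ} (h : RetShell ρ i j) (hik : i < k) (hkj : k ≤ j)
      (hpop : pop1 (ρ.stk i) = some (ρ.stk k)) (hret : RetSeg ρ k j) : RetSeg ρ i j

/-- The segment `[i,j]` of `ρ` is a level-1-loop. -/
def OneLoopSeg {S : CPS Q A Γ} (ρ : Run S) (i j : ℕ) : Prop :=
  i ≤ j ∧ j ≤ ρ.len ∧
    ∃ (s : Stack2 A) (w : Word A) (s' : Stack2 A),
      ρ.stk i = s ++ [w] ∧ ρ.stk j = s ++ s' ++ [w] ∧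
      (∀ k, i ≤ k → k ≤ j → s.length < (ρ.stk k).length) ∧
      (∀ k, i ≤ k → k ≤ j → 1 < w.length → top2 (ρ.stk k) = some w.dropLast →
        ∃ m, k < m ∧ m ≤ j ∧ RetSeg ρ k m)

/-! ## ExRet, ExLoop, ... -/

/-- `w↓₀` : replace every level-2 link by `0`. -/
def down0 {A : Type} : Word A → Word A :=
  List.map fun a => match a with
    | Sum.inl x => Sum.inl x
    | Sum.inr (x, _) => Sum.inr (x, 0)

def ExRet (S : CPS Q A Γ) (w : Word A) : Set (Q × Q) :=
  {p | ∃ ρ : Run S, ρ.cfg 0 = (p.1, [down0 w, down0 w]) ∧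
    ρ.cfg ρ.len = (p.2, [down0 w]) ∧ RetSeg ρ 0 ρ.len}

def ExLoop (S : CPS Q A Γ) (w : Word A) : Set (Q × Q) :=
  {p | ∃ ρ : Run S, ρ.cfg 0 = (p.1, [down0 w]) ∧ ρ.cfg ρ.len = (p.2, [down0 w]) ∧
    LoopSeg ρ 0 ρ.len}

def ExHLoop (S : CPS Q A Γ) (w : Word A) : Set (Q × Q) :=
  {p | ∃ ρ : Run S, ρ.cfg 0 = (p.1, [down0 w]) ∧ ρ.cfg ρ.len = (p.2, [down0 w]) ∧
    HighLoopSeg ρ 0 ρ.len}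

def ExLLoop (S : CPS Q A Γ) (w : Word A) : Set (Q × Q) :=
  {p | ∃ ρ : Run S, ρ.cfg 0 = (p.1, [down0 w]) ∧ ρ.cfg ρ.len = (p.2, [down0 w]) ∧
    LowLoopSeg ρ 0 ρ.len}

def ExOneLoop (S : CPS Q A Γ) (w : Word A) : Set (Q × Q) :=
  {p | ∃ (ρ : Run S) (s' : Stack2 A), ρ.cfg 0 = (p.1, [down0 w]) ∧
    ρ.cfg ρ.len = (p.2, s' ++ [down0 w]) ∧ OneLoopSeg ρ 0 ρ.len}

/-! ## Finite binary trees -/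

/-- Finite binary trees with labels in `α` and optional left/right children. -/
inductive PTree (α : Type) where
  | node (a : α) (l r : Option (PTree α)) : PTree α

/-- The label of the node at address `d` (`false` = left/0, `true` = right/1). -/
def PTree.labelAt {α : Type} : PTree α → List Bool → Option α
  | .node a _ _, [] => some a
  | .node _ (some t) _, false :: d => t.labelAt d
  | .node _ none _, false :: _ => none
  | .node _ _ (some t), true :: d => t.labelAt d
  | .node _ _ none, true :: _ => none

def PTree.map {α β : Type} (f : α → β) : PTree α → PTree β
  | .node a l r =>
    .node (f a)
      (match l with | none => none | some t => some (t.map f))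
      (match r with | none => none | some t => some (t.map f))

/-- Convolution of two trees, with `none` as padding symbol `□`. -/
def PTree.conv {α β : Type} : PTree α → PTree β → PTree (Option α × Option β)
  | .node a l r, .node b l' r' =>
    .node (some a, some b)
      (match l, l' with
        | none, none => none
        | some t, none => some (t.map fun x => (some x, none))
        | none, some u => some (u.map fun x => (none, some x))
        | some t, some u => some (PTree.conv t u))
      (match r, r' with
        | none, none => none
        | some t, none => some (t.map fun x => (some x, none))
        | none, some u => some (u.map fun x => (none, some x))
        | some t, some u => some (PTree.conv t u))

/-- A (bottom-up nondeterministic) finite tree automaton. -/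
structure TreeAut (α : Type) where
  St : Type
  fin : Finite St
  qI : St
  F : Set St
  Δ : Set (St × α × St × St)

/-- Acceptance of a finite tree by a tree automaton. -/
def TreeAut.Accepts {α : Type} (M : TreeAut α) (t : PTree α) : Prop :=
  ∃ ρ : List Bool → M.St,
    (∀ d, t.labelAt d = none → ρ d = M.qI) ∧
    (∀ d a, t.labelAt d = some a → (ρ d, a, ρ (d ++ [false]), ρ (d ++ [true])) ∈ M.Δ) ∧
    ρ [] ∈ M.F

/-- A family of binary relations on `B` is tree-automatic. -/
def IsTreeAutomatic {B : Type} {I : Type} (E : I → B → B → Prop) : Prop :=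
  ∃ (α : Type) (_ : Finite α) (AB : TreeAut α) (AE : I → TreeAut (Option α × Option α))
    (f : {t : PTree α // AB.Accepts t} → B),
    Function.Bijective f ∧
      ∀ (i : I) (t₁ t₂ : {t : PTree α // AB.Accepts t}),
        (AE i).Accepts (PTree.conv t₁.1 t₂.1) ↔ E i (f t₁) (f t₂)

/-! ## The encoding of configurations as trees -/

/-- Labels of encoding trees: a state, a pair (symbol, link level), or `ε`. -/
abbrev EncLabel (Q A : Type) := Q ⊕ ((A × ℕ) ⊕ Unit)

def epsLab {Q A : Type} : EncLabel Q A := Sum.inr (Sum.inr ())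

def symLab {Q A : Type} (τ : Letter A) : EncLabel Q A := Sum.inr (Sum.inl (symOf τ, lvlOf τ))

/-- Encoding of blocklines as trees (with a fuel parameter driving the recursion;
the fuel used in `encStack` is large enough so that it never runs out on actual
blocklines). The left subtree encodes the blockline induced by the first maximal
block, the right subtree the remaining blocks. -/
def encBL (Q : Type) {A : Type} [DecidableEq A] :
    ℕ → EncLabel Q A → List (Word A) → PTree (EncLabel Q A)
  | 0, σ, _ => .node σ none none
  | _ + 1, σ, [] => .node σ none none
  | fuel + 1, σ, w :: rest =>
    if w.length ≤ 1 then
      match rest with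
      | [] => .node σ none none
      | _ :: _ => .node σ none (some (encBL Q fuel epsLab rest))
    else
      let p : Word A → Bool := fun v => decide (v.take 2 = w.take 2)
      let blk := (w :: rest).takeWhile p
      let restBlk := (w :: rest).dropWhile p
      .node σ
        (some (encBL Q fuel
          (match w[1]? with | some τ' => symLab τ' | none => epsLab)
          (blk.map List.tail)))
        (match restBlk with
          | [] => none
          | _ :: _ => some (encBL Q fuel epsLab restBlk))

/-- The total number of letters of a 2-word. -/
def size2 {A : Type} (s : Stack2 A) : ℕ := (s.map List.length).sum

/-- The encoding `Enc(s) = Enc(s, (⊥,1))` of a stack. -/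
def encStack (Q : Type) {A : Type} [DecidableEq A] (bot : A) (s : Stack2 A) :
    PTree (EncLabel Q A) :=
  encBL Q (size2 s + 1) (Sum.inr (Sum.inl (bot, 1))) s

/-- The encoding of a configuration: the state at the root, `Enc(s)` as left subtree. -/
def Enc {Q A : Type} [DecidableEq A] (bot : A) (c : Q × Stack2 A) : PTree (EncLabel Q A) :=
  .node (Sum.inl c.1) (some (encStack Q bot c.2)) none

/-- The class `EncTrees` of encoding trees. -/
def EncTrees (Q A : Type) (bot : A) : Set (PTree (EncLabel Q A)) :=
  {T | (∃ q : Q, T.labelAt [] = some (Sum.inl q)) ∧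
    T.labelAt [true] = none ∧ T.labelAt [false] ≠ none ∧
    T.labelAt [false] = some (Sum.inr (Sum.inl (bot, 1))) ∧
    (∀ (d : List Bool) (x : EncLabel Q A),
      T.labelAt (false :: (d ++ [false])) = some x →
        ∃ (σ : A) (l : ℕ), σ ≠ bot ∧ (l = 1 ∨ l = 2) ∧ x = Sum.inr (Sum.inl (σ, l))) ∧
    (∀ (d : List Bool) (x : EncLabel Q A), T.labelAt (d ++ [true]) = some x → x = epsLab) ∧
    (∀ (d : List Bool) (σ : A), ¬ (T.labelAt (d ++ [false]) = some (Sum.inr (Sum.inl (σ, 1))) ∧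
      T.labelAt (d ++ [true, false]) = some (Sum.inr (Sum.inl (σ, 1)))))}

/-- Restriction of a tree to the nodes lexicographically ≤ `d`. -/
def restrictLex {α : Type} : PTree α → List Bool → PTree α
  | .node a _ _, [] => .node a none none
  | .node a l _, false :: d =>
      .node a (match l with | none => none | some t => some (restrictLex t d)) none
  | .node a l r, true :: d =>
      .node a l (match r with | none => none | some t => some (restrictLex t d))

/-- The lexicographic order on tree addresses. -/
def lexLe (d e : List Bool) : Prop :=
  d <+: e ∨ ∃ (c x y : List Bool), d = c ++ false :: x ∧ e = c ++ true :: y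

/-! ## Deterministic finite automata with output (Moore machines) -/

structure Moore (α ω : Type) where
  St : Type
  fin : Finite St
  init : St
  step : St → α → St
  out : St → ω

def Moore.output {α ω : Type} (M : Moore α ω) (w : List α) : ω :=
  M.out (w.foldl M.step M.init)

/-! ## Own development, part 1: exit relations on abstract words -/

section Part1

variable {P B : Type} (bot : B) (δ : P → B → Op B → P → Prop)

/-- Abstract letters: a symbol and a tag: `none` = level 1, `some true` = marked level-2 link,
`some false` = unmarked level-2 link. -/
abbrev AL (B : Type) := B × Option Bool

/-- Remove the mark. -/
def um (x : AL B) : AL B := (x.1, x.2.map fun _ => false)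

def umW (w : List (AL B)) : List (AL B) := w.map um

theorem um_um (x : AL B) : um (um x) = um x := by
  rcases x with ⟨a, _ | b⟩ <;> rfl

theorem umW_umW (w : List (AL B)) : umW (umW w) = umW w := by
  simp only [umW, List.map_map]; congr 1; funext x; exact um_um x

theorem umW_cons (a : AL B) (w : List (AL B)) : umW (a :: w) = um a :: umW w := rfl

theorem umW_append (u w : List (AL B)) : umW (u ++ w) = umW u ++ umW w := by
  simp [umW]

/-- `E b w q q'`: starting in state `q` with topmost word `w` (top letter first) the system can
leave the current width for the first time by reaching the marked target in state `q'`.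
If `b` is true, the target is the substack reached by `pop2`. -/
inductive E : Bool → List (AL B) → P → P → Prop
  | pop2 {a w q q'} : δ q a.1 .pop2 q' → E true (a :: w) q q'
  | col {b a w q q'} : a.2 = some true → δ q a.1 .collapse q' → E b (a :: w) q q'
  | push1 {b a w q p q' x} : x ≠ bot → δ q a.1 (.push1 x) p → E b ((x, none) :: a :: w) p q' →
      E b (a :: w) q q'
  | push2 {b a w q p q' x} : x ≠ bot → δ q a.1 (.push2 x) p →
      E b ((x, some b) :: a :: w) p q' → E b (a :: w) q q'
  | pop1 {b a w q p q'} : δ q a.1 .pop1 p → E b w p q' → E b (a :: w) q q'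
  | col1 {b a w q p q'} : a.2 = none → δ q a.1 .collapse p → E b w p q' → E b (a :: w) q q'
  | cloneExit {b a w q p q'} : δ q a.1 .clone2 p → E false (a :: w) p q' → E b (a :: w) q q'
  | cloneRet {b a w q p p' q'} : δ q a.1 .clone2 p → E true (umW (a :: w)) p p' →
      E b (a :: w) p' q' → E b (a :: w) q q'

variable {bot δ}

theorem E.ne_nil {b : Bool} {w : List (AL B)} {q q' : P} (h : E bot δ b w q q') : w ≠ [] := by
  cases h <;> simp

/-- A non-`pop2` target is reached only via a marked letter. -/
theorem E.marked {b : Bool} {w : List (AL B)} {q q' : P} (h : E bot δ b w q q') :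
    b = true ∨ ∃ a ∈ w, a.2 = some true := by
  induction h with
  | pop2 _ => exact Or.inl rfl
  | col h _ => exact Or.inr ⟨_, by simp, h⟩
  | push1 _ _ _ ih => 
    rcases ih with h | ⟨a, ha, h⟩
    · exact Or.inl h
    · rcases List.mem_cons.1 ha with rfl | ha
      · simp at h
      · exact Or.inr ⟨a, ha, h⟩
  | push2 _ _ _ ih => 
    rcases ih with h | ⟨a, ha, h⟩
    · exact Or.inl h
    · rcases List.mem_cons.1 ha with rfl | ha
      · left; simpa using h
      · exact Or.inr ⟨a, ha, h⟩
  | pop1 _ _ ih => 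
    rcases ih with h | ⟨a, ha, h⟩
    · exact Or.inl h
    · exact Or.inr ⟨a, List.mem_cons_of_mem _ ha, h⟩
  | col1 _ _ _ ih => 
    rcases ih with h | ⟨a, ha, h⟩
    · exact Or.inl h
    · exact Or.inr ⟨a, List.mem_cons_of_mem _ ha, h⟩
  | cloneExit _ _ ih => 
    rcases ih with h | h
    · simp at h
    · exact Or.inr h
  | cloneRet _ _ _ _ ih => exact ih

theorem E.not_false_um {w : List (AL B)} {q q' : P} : ¬ E bot δ false (umW w) q q' := by
  intro h
  rcases h.marked with h | ⟨a, ha, h⟩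
  · simp at h
  · simp only [umW, List.mem_map] at ha
    obtain ⟨x, _, rfl⟩ := ha
    rcases x with ⟨x, _ | b⟩ <;> simp [um] at h

/-- Exchange of the bottom part of a word. -/
theorem E.subst {b : Bool} {x : List (AL B)} {q q' : P} (h : E bot δ b x q q') :
    ∀ (u w w' : List (AL B)), x = u ++ w →
      (∀ b q q', E bot δ b w q q' → E bot δ b w' q q') →
      (∀ b q q', E bot δ b (umW w) q q' → E bot δ b (umW w') q q') →
      E bot δ b (u ++ w') q q' := by
  induction h with
  | @pop2 a x q q' h =>
    intro u w w' hx H1 H2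
    rcases u with _ | ⟨c, u⟩
    · simp only [List.nil_append] at hx ⊢; subst hx; exact H1 _ _ _ (.pop2 h)
    · simp only [List.cons_append, List.cons.injEq] at hx; obtain ⟨rfl, rfl⟩ := hx
      exact .pop2 h
  | @col b a x q q' h0 h =>
    intro u w w' hx H1 H2
    rcases u with _ | ⟨c, u⟩
    · simp only [List.nil_append] at hx ⊢; subst hx; exact H1 _ _ _ (.col h0 h)
    · simp only [List.cons_append, List.cons.injEq] at hx; obtain ⟨rfl, rfl⟩ := hx
      exact .col h0 h
  | @push1 b a x q p q' y h0 h h1 ih =>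
    intro u w w' hx H1 H2
    rcases u with _ | ⟨c, u⟩
    · simp only [List.nil_append] at hx ⊢; subst hx; exact H1 _ _ _ (.push1 h0 h h1)
    · have hx' := hx
      simp only [List.cons_append, List.cons.injEq] at hx; obtain ⟨rfl, rfl⟩ := hx
      exact .push1 h0 h (ih ((y, none) :: a :: u) w w' rfl H1 H2)
  | @push2 b a x q p q' y h0 h h1 ih =>
    intro u w w' hx H1 H2
    rcases u with _ | ⟨c, u⟩
    · simp only [List.nil_append] at hx ⊢; subst hx; exact H1 _ _ _ (.push2 h0 h h1)
    · simp only [List.cons_append, List.cons.injEq] at hx; obtain ⟨rfl, rfl⟩ := hx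
      exact .push2 h0 h (ih ((y, some b) :: a :: u) w w' rfl H1 H2)
  | @pop1 b a x q p q' h h1 ih =>
    intro u w w' hx H1 H2
    rcases u with _ | ⟨c, u⟩
    · simp only [List.nil_append] at hx ⊢; subst hx; exact H1 _ _ _ (.pop1 h h1)
    · simp only [List.cons_append, List.cons.injEq] at hx; obtain ⟨rfl, rfl⟩ := hx
      exact .pop1 h (ih u w w' rfl H1 H2)
  | @col1 b a x q p q' h0 h h1 ih =>
    intro u w w' hx H1 H2
    rcases u with _ | ⟨c, u⟩
    · simp only [List.nil_append] at hx ⊢; subst hx; exact H1 _ _ _ (.col1 h0 h h1)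
    · simp only [List.cons_append, List.cons.injEq] at hx; obtain ⟨rfl, rfl⟩ := hx
      exact .col1 h0 h (ih u w w' rfl H1 H2)
  | @cloneExit b a x q p q' h h1 ih =>
    intro u w w' hx H1 H2
    rcases u with _ | ⟨c, u⟩
    · simp only [List.nil_append] at hx ⊢; subst hx; exact H1 _ _ _ (.cloneExit h h1)
    · have hx' := hx
      simp only [List.cons_append, List.cons.injEq] at hx; obtain ⟨rfl, rfl⟩ := hx
      exact .cloneExit h (ih (a :: u) w w' rfl H1 H2)
  | @cloneRet b a x q p p' q' h h1 h2 ih1 ih2 =>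
    intro u w w' hx H1 H2
    rcases u with _ | ⟨c, u⟩
    · simp only [List.nil_append] at hx ⊢; subst hx; exact H1 _ _ _ (.cloneRet h h1 h2)
    · have hx' := hx
      simp only [List.cons_append, List.cons.injEq] at hx; obtain ⟨rfl, rfl⟩ := hx
      refine .cloneRet h ?_ (ih2 (a :: u) w w' rfl H1 H2)
      have := ih1 (umW (a :: u)) (umW w) (umW w') (by rw [← umW_append]; rfl) H2
        (by simpa only [umW_umW] using H2)
      rwa [← umW_append] at this

/-! ### Runs on a fixed level -/

variable (bot δ)

/-- One step on a fixed level: push, pop, or a clone followed by a return. -/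
inductive Mst {X : Type} (lab : X → AL B) (f1 f2 : B → X) : P × List X → P × List X → Prop
  | push1 {a w q p x} : x ≠ bot → δ q (lab a).1 (.push1 x) p →
      Mst lab f1 f2 (q, a :: w) (p, f1 x :: a :: w)
  | push2 {a w q p x} : x ≠ bot → δ q (lab a).1 (.push2 x) p →
      Mst lab f1 f2 (q, a :: w) (p, f2 x :: a :: w)
  | pop1 {a w q p} : w ≠ [] → δ q (lab a).1 .pop1 p → Mst lab f1 f2 (q, a :: w) (p, w)
  | col1 {a w q p} : w ≠ [] → (lab a).2 = none → δ q (lab a).1 .collapse p →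
      Mst lab f1 f2 (q, a :: w) (p, w)
  | loop {a w q p q'} : δ q (lab a).1 .clone2 p → E bot δ true (umW ((a :: w).map lab)) p q' →
      Mst lab f1 f2 (q, a :: w) (q', a :: w)

/-- Runs on a fixed level. -/
abbrev Mrun {X : Type} (lab : X → AL B) (f1 f2 : B → X) : P × List X → P × List X → Prop :=
  Relation.ReflTransGen (Mst bot δ lab f1 f2)

variable {bot δ}

theorem Mst.shape {X : Type} {lab : X → AL B} {f1 f2 : B → X} {c c' : P × List X}
    (h : Mst bot δ lab f1 f2 c c') :
    c.2 = c'.2 ∨ (∃ a, c'.2 = a :: c.2) ∨ (∃ a, c.2 = a :: c'.2) := by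
  cases h <;> simp

theorem Mst.enter {X : Type} {lab : X → AL B} {f1 f2 : B → X} {c c' : P × List X}
    (h : Mst bot δ lab f1 f2 c c') {a : X} {v : List X} (h1 : ¬ (a :: v) <:+ c.2)
    (h2 : (a :: v) <:+ c'.2) : c.2 = v ∧ c'.2 = a :: v := by
  rcases h.shape with h | ⟨x, h⟩ | ⟨x, h⟩
  · rw [h] at h1; exact absurd h2 h1
  · rw [h, List.suffix_cons_iff] at h2
    rcases h2 with h2 | h2
    · simp only [List.cons.injEq] at h2; obtain ⟨rfl, rfl⟩ := h2; exact ⟨rfl, h⟩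
    · exact absurd h2 h1
  · rw [h, List.suffix_cons_iff] at h1
    exact absurd (Or.inr h2) h1

theorem Mst.leave {X : Type} {lab : X → AL B} {f1 f2 : B → X} {c c' : P × List X}
    (h : Mst bot δ lab f1 f2 c c') {a : X} {v : List X} (h1 : (a :: v) <:+ c.2)
    (h2 : ¬ (a :: v) <:+ c'.2) : c.2 = a :: v ∧ c'.2 = v := by
  rcases h.shape with h | ⟨x, h⟩ | ⟨x, h⟩
  · rw [h] at h1; exact absurd h1 h2
  · rw [h, List.suffix_cons_iff] at h2
    exact absurd (Or.inr h1) h2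
  · rw [h, List.suffix_cons_iff] at h1
    rcases h1 with h1 | h1
    · simp only [List.cons.injEq] at h1; obtain ⟨rfl, rfl⟩ := h1; exact ⟨h, rfl⟩
    · exact absurd h1 h2

theorem Mrun.crossIn {X : Type} {lab : X → AL B} {f1 f2 : B → X} {c c' : P × List X}
    (h : Mrun bot δ lab f1 f2 c c') {a : X} {v : List X} (h1 : ¬ (a :: v) <:+ c.2)
    (h2 : (a :: v) <:+ c'.2) : ∃ r r', Mrun bot δ lab f1 f2 c (r, v) ∧
      Mst bot δ lab f1 f2 (r, v) (r', a :: v) ∧ Mrun bot δ lab f1 f2 (r', a :: v) c' := by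
  induction h with
  | refl => exact absurd h2 h1
  | @tail d e hcd hde ih =>
    by_cases hd : (a :: v) <:+ d.2
    · obtain ⟨r, r', h3, h4, h5⟩ := ih hd
      exact ⟨r, r', h3, h4, h5.tail hde⟩
    · obtain ⟨h3, h4⟩ := hde.enter hd h2
      obtain ⟨d1, d2⟩ := d
      obtain ⟨e1, e2⟩ := e
      simp only at h3 h4
      subst h3 h4
      exact ⟨_, _, hcd, hde, .refl⟩

theorem Mrun.crossOut {X : Type} {lab : X → AL B} {f1 f2 : B → X} {c c' : P × List X}
    (h : Mrun bot δ lab f1 f2 c c') {a : X} {v : List X} (h1 : (a :: v) <:+ c.2)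
    (h2 : ¬ (a :: v) <:+ c'.2) : ∃ r r', Mrun bot δ lab f1 f2 c (r, a :: v) ∧
      Mst bot δ lab f1 f2 (r, a :: v) (r', v) ∧ Mrun bot δ lab f1 f2 (r', v) c' := by
  induction h with
  | refl => exact absurd h1 h2
  | @tail d e hcd hde ih =>
    by_cases hd : (a :: v) <:+ d.2
    · obtain ⟨h3, h4⟩ := hde.leave hd h2
      obtain ⟨d1, d2⟩ := d
      obtain ⟨e1, e2⟩ := e
      simp only at h3 h4
      subst h3 h4
      exact ⟨_, _, hcd, hde, .refl⟩
    · obtain ⟨r, r', h3, h4, h5⟩ := ih hd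
      exact ⟨r, r', h3, h4, h5.tail hde⟩

/-! ### Abstract loops and types -/

variable (bot δ)

abbrev af1 (x : B) : AL B := (x, none)
abbrev af2 (x : B) : AL B := (x, some true)

/-- Abstract steps. -/
abbrev Ast : P × List (AL B) → P × List (AL B) → Prop := Mst bot δ id af1 af2
abbrev Arun : P × List (AL B) → P × List (AL B) → Prop := Mrun bot δ id af1 af2

def LL (w : List (AL B)) (p q : P) : Prop := Arun bot δ (p, w) (q, w)

abbrev Bty (P B : Type) := Option B × (Bool → P → P → Prop) × (P → P → Prop)

def beta (w : List (AL B)) : Bty P B :=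
  (w.head?.map Prod.fst, fun b => E bot δ b w, LL bot δ w)

/-- The finite type of an abstract word. -/
abbrev Ty (P B : Type) := Bty P B × Bty P B

def ty (w : List (AL B)) : Ty P B := (beta bot δ w, beta bot δ (umW w))

def umT (t : Ty P B) : Ty P B := (t.2, t.2)

theorem ty_umW (w : List (AL B)) : ty bot δ (umW w) = umT (ty bot δ w) := by
  simp [ty, umT, umW_umW]

/-- Runs relative to a bottom word `w`. -/
def RSt (w : List (AL B)) (c c' : P × List (AL B)) : Prop :=
  Ast bot δ (c.1, c.2 ++ w) (c'.1, c'.2 ++ w) ∨ (c.2 = [] ∧ c'.2 = [] ∧ LL bot δ w c.1 c'.1)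

theorem Arun.rel {w : List (AL B)} {c c' : P × List (AL B)} (h : Arun bot δ c c')
    (q : P) (u' : List (AL B)) (hc' : c' = (q, u' ++ w)) :
    (∀ u, c.2 = u ++ w → Relation.ReflTransGen (RSt bot δ w) (c.1, u) (q, u')) ∧
    (¬ w <:+ c.2 → ∃ r, Arun bot δ c (r, w) ∧
      Relation.ReflTransGen (RSt bot δ w) (r, []) (q, u')) := by
  subst hc'
  induction h using Relation.ReflTransGen.head_induction_on with
  | refl =>
    constructor
    · intro u hu; simp only [List.append_cancel_right_eq] at hu; subst hu; exact .refl
    · intro h; exact absurd (List.suffix_append _ _) h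
  | @head c d hcd hd ih =>
    obtain ⟨c1, c2⟩ := c
    obtain ⟨d1, d2⟩ := d
    by_cases hds : w <:+ d2
    · obtain ⟨ud, rfl⟩ := hds
      have ih1 := ih.1 ud rfl
      constructor
      · intro u hu
        simp only at hu; subst hu
        exact .head (Or.inl hcd) ih1
      · intro hc
        refine ⟨d1, ?_, ?_⟩
        · have : ud = [] := by
            rcases hcd.shape with h | ⟨x, h⟩ | ⟨x, h⟩
            · simp only at h; rw [h] at hc; exact absurd (List.suffix_append _ _) hc
            · simp only at h
              rcases ud with _ | ⟨y, ud⟩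
              · rfl
              · simp only [List.cons_append, List.cons.injEq] at h
                rw [← h.2] at hc; exact absurd (List.suffix_append _ _) hc
            · simp only at h; rw [h] at hc
              exact absurd ((List.suffix_append ud w).trans (List.suffix_cons _ _)) hc
          subst this
          exact .single hcd
        · have : ud = [] := by
            rcases hcd.shape with h | ⟨x, h⟩ | ⟨x, h⟩
            · simp only at h; rw [h] at hc; exact absurd (List.suffix_append _ _) hc
            · simp only at h
              rcases ud with _ | ⟨y, ud⟩
              · rfl
              · simp only [List.cons_append, List.cons.injEq] at h
                rw [← h.2] at hc; exact absurd (List.suffix_append _ _) hc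
            · simp only at h; rw [h] at hc
              exact absurd ((List.suffix_append ud w).trans (List.suffix_cons _ _)) hc
          subst this
          exact ih1
    · obtain ⟨r, h1, h2⟩ := ih.2 hds
      constructor
      · intro u hu
        simp only at hu; subst hu
        have : u = [] := by
          rcases hcd.shape with h | ⟨x, h⟩ | ⟨x, h⟩
          · simp only at h; rw [← h] at hds; exact absurd (List.suffix_append _ _) hds
          · simp only at h; rw [h] at hds
            exact absurd ((List.suffix_append u w).trans (List.suffix_cons _ _)) hds
          · simp only at h
            rcases u with _ | ⟨y, u⟩
            · rfl
            · simp only [List.cons_append, List.cons.injEq] at h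
              rw [← h.2] at hds; exact absurd (List.suffix_append _ _) hds
        subst this
        exact .head (Or.inr ⟨rfl, rfl, .head hcd h1⟩) h2
      · intro hc
        exact ⟨r, .head hcd h1, h2⟩

theorem RSt.toArun {w : List (AL B)} {c c' : P × List (AL B)}
    (h : Relation.ReflTransGen (RSt bot δ w) c c') :
    Arun bot δ (c.1, c.2 ++ w) (c'.1, c'.2 ++ w) := by
  induction h with
  | refl => exact .refl
  | tail _ h ih =>
    rcases h with h | ⟨h1, h2, h3⟩
    · exact ih.tail h
    · rw [h1] at ih; rw [h2]; exact ih.trans h3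

theorem head_append_congr {α : Type} (u v w : List α) {β : Type} (f : α → β)
    (h : v.head?.map f = w.head?.map f) :
    (u ++ v).head?.map f = (u ++ w).head?.map f := by
  cases u <;> simp [h]

theorem beta_subst_E {v w : List (AL B)} (h : ty bot δ v = ty bot δ w) (u : List (AL B))
    (b : Bool) (q q' : P) (hE : E bot δ b (u ++ v) q q') : E bot δ b (u ++ w) q q' := by
  have e1 : beta bot δ v = beta bot δ w := congrArg Prod.fst h
  have e2 : beta bot δ (umW v) = beta bot δ (umW w) := congrArg Prod.snd h
  have e3 := congrArg (fun t => t.2.1) e1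
  have e4 := congrArg (fun t => t.2.1) e2
  simp only [beta] at e3 e4
  refine hE.subst u v w rfl (fun b q q' h => ?_) (fun b q q' h => ?_)
  · rw [← congrFun e3 b]; exact h
  · rw [← congrFun e4 b]; exact h

theorem RSt_congr {v w : List (AL B)} (h : ty bot δ v = ty bot δ w) {c c' : P × List (AL B)}
    (hR : RSt bot δ v c c') : RSt bot δ w c c' := by
  have hu : ty bot δ (umW v) = ty bot δ (umW w) := by rw [ty_umW, ty_umW, h]
  have e1 : beta bot δ v = beta bot δ w := congrArg Prod.fst h
  have eL := congrArg (fun t => t.2.2) e1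
  have eT := congrArg (fun t => t.1) e1
  simp only [beta] at eL eT
  rcases hR with hR | ⟨h1, h2, h3⟩
  · obtain ⟨q, u⟩ := c
    obtain ⟨q', u'⟩ := c'
    simp only at hR
    have hv : v = [] ↔ w = [] := by
      cases v <;> cases w <;> simp_all
    rcases u with _ | ⟨a, u⟩
    · -- top letter in the bottom part
      by_cases hu' : u' = []
      · subst hu'
        right
        refine ⟨rfl, rfl, ?_⟩
        rw [← eL]; exact .single hR
      · left
        rcases v with _ | ⟨a, v⟩
        · simp only [List.append_nil] at hR; cases hR
        rcases w with _ | ⟨a', w⟩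
        · simp at hv
        simp only [List.head?_cons, Option.map_some, Option.some.injEq] at eT
        simp only [List.nil_append] at hR ⊢
        generalize hy : u' ++ a :: v = y at hR
        have key : ∀ x : AL B, x :: a :: v = u' ++ a :: v → u' = [x] := by
          intro x hx
          have : [x] ++ (a :: v) = u' ++ (a :: v) := by simpa using hx
          exact (List.append_cancel_right this).symm
        cases hR with
        | push1 h1 h2 => 
          rw [key _ hy.symm]; exact .push1 h1 (by simpa [← eT] using h2)
        | push2 h1 h2 => 
          rw [key _ hy.symm]; exact .push2 h1 (by simpa [← eT] using h2)
        | pop1 h1 h2 =>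
          have := congrArg List.length hy
          rcases u' with _ | ⟨z, u'⟩
          · exact absurd rfl hu'
          · simp at this; omega
        | col1 h1 h2 =>
          have := congrArg List.length hy
          rcases u' with _ | ⟨z, u'⟩
          · exact absurd rfl hu'
          · simp at this; omega
        | loop h1 h2 =>
          have := congrArg List.length hy
          rcases u' with _ | ⟨z, u'⟩
          · exact absurd rfl hu'
          · simp at this; omega
    · left
      simp only [List.cons_append] at hR ⊢
      generalize hy : u' ++ v = y at hR
      cases hR with
      | push1 h1 h2 =>
        have : u' = af1 _ :: a :: u := List.append_cancel_right (bs := v) (by simpa using hy)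
        subst this; exact .push1 h1 h2
      | push2 h1 h2 =>
        have : u' = af2 _ :: a :: u := List.append_cancel_right (bs := v) (by simpa using hy)
        subst this; exact .push2 h1 h2
      | pop1 h1 h2 =>
        have : u' = u := List.append_cancel_right hy
        subst this; refine .pop1 ?_ h2
        intro h; apply h1; simp_all
      | col1 h1 h2 h3 =>
        have : u' = u := List.append_cancel_right hy
        subst this; refine .col1 ?_ h2 h3
        intro h; apply h1; simp_all
      | loop h1 h2 =>
        have : u' = a :: u := List.append_cancel_right (bs := v) (by simpa using hy)
        subst this; refine .loop h1 ?_
        simp only [List.map_id] at h2 ⊢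
        rw [← List.cons_append, umW_append] at h2 ⊢
        exact beta_subst_E bot δ hu _ _ _ _ h2
  · right; exact ⟨h1, h2, by rw [← eL]; exact h3⟩

theorem LL_subst {v w : List (AL B)} (h : ty bot δ v = ty bot δ w) (u : List (AL B))
    {q q' : P} (hL : LL bot δ (u ++ v) q q') : LL bot δ (u ++ w) q q' := by
  have := (Arun.rel bot δ hL q' u rfl).1 u rfl
  have := Relation.ReflTransGen.mono (fun _ _ hr => RSt_congr bot δ h hr) _ _ this
  exact RSt.toArun bot δ this

theorem beta_cons {v w : List (AL B)} (h : ty bot δ v = ty bot δ w) (a : AL B) :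
    beta bot δ (a :: v) = beta bot δ (a :: w) := by
  refine Prod.ext rfl (Prod.ext ?_ ?_)
  · funext b q q'
    exact propext ⟨beta_subst_E bot δ h [a] b q q', beta_subst_E bot δ h.symm [a] b q q'⟩
  · funext q q'
    exact propext ⟨LL_subst bot δ h [a], LL_subst bot δ h.symm [a]⟩

theorem ty_cons {v w : List (AL B)} (h : ty bot δ v = ty bot δ w) (a : AL B) :
    ty bot δ (a :: v) = ty bot δ (a :: w) := by
  refine Prod.ext (beta_cons bot δ h a) ?_
  have hu : ty bot δ (umW v) = ty bot δ (umW w) := by rw [ty_umW, ty_umW, h]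
  exact beta_cons bot δ hu (um a)

/-- The transition function on types. -/
noncomputable def consT (a : AL B) (t : Ty P B) : Ty P B :=
  ty bot δ (a :: Function.invFun (ty bot δ) t)

theorem consT_ty (a : AL B) (w : List (AL B)) :
    consT bot δ a (ty bot δ w) = ty bot δ (a :: w) := by
  unfold consT
  apply ty_cons
  exact Function.invFun_eq ⟨w, rfl⟩

end Part1



/-! ## Part 2: concrete runs on reversed stacks -/

section Part2

variable {P B : Type}

abbrev Stk (B : Type) := List (List (Letter B))

abbrev Cf (P B : Type) := P × Stk B

variable (bot : B) (δ : P → B → Op B → P → Prop)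

/-- Steps on reversed stacks (top word first, top letter first). -/
inductive Step : Cf P B → Cf P B → Prop
  | clone {a w s q p} : δ q (symOf a) .clone2 p →
      Step (q, (a :: w) :: s) (p, (a :: w) :: (a :: w) :: s)
  | push1 {a w s q p x} : x ≠ bot → δ q (symOf a) (.push1 x) p →
      Step (q, (a :: w) :: s) (p, (Sum.inl x :: a :: w) :: s)
  | push2 {a w s q p x} : x ≠ bot → δ q (symOf a) (.push2 x) p →
      Step (q, (a :: w) :: s) (p, (Sum.inr (x, s.length) :: a :: w) :: s)
  | pop2 {a w s q p} : s ≠ [] → δ q (symOf a) .pop2 p → Step (q, (a :: w) :: s) (p, s)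
  | pop1 {a w s q p} : w ≠ [] → δ q (symOf a) .pop1 p → Step (q, (a :: w) :: s) (p, w :: s)
  | col1 {x w s q p} : w ≠ [] → δ q x .collapse p → Step (q, (Sum.inl x :: w) :: s) (p, w :: s)
  | col2 {x w s q p y} : y ≠ [] → y <:+ s → δ q x .collapse p →
      Step (q, (Sum.inr (x, y.length) :: w) :: s) (p, y)

/-- Abstraction of a letter with respect to a target width. -/
def tg (k : ℕ) : Letter B → AL B
  | Sum.inl a => (a, none)
  | Sum.inr (a, j) => (a, some (decide (j = k)))

theorem tg_fst (k : ℕ) (a : Letter B) : (tg k a).1 = symOf a := by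
  rcases a with a | ⟨a, j⟩ <;> rfl

theorem um_tg (k l : ℕ) (a : Letter B) : um (tg k a) = um (tg l a) := by
  rcases a with a | ⟨a, j⟩ <;> rfl

theorem umW_tg (k l : ℕ) (w : List (Letter B)) : umW (w.map (tg k)) = umW (w.map (tg l)) := by
  simp only [umW, List.map_map]; congr 1; funext a; exact um_tg k l a

/-- All links of `w` are at most `n`. -/
def lkLe (n : ℕ) (w : List (Letter B)) : Prop := ∀ x k, Sum.inr (x, k) ∈ w → k ≤ n

theorem lkLe.mono {n m : ℕ} {w : List (Letter B)} (h : lkLe n w) (hm : n ≤ m) : lkLe m w :=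
  fun x k hk => (h x k hk).trans hm

theorem lkLe.tail {n : ℕ} {a : Letter B} {w : List (Letter B)} (h : lkLe n (a :: w)) :
    lkLe n w := fun x k hk => h x k (List.mem_cons_of_mem _ hk)

theorem lkLe.suffix {n : ℕ} {u w : List (Letter B)} (h : lkLe n w) (hs : u <:+ w) :
    lkLe n u := fun x k hk => h x k (hs.subset hk)

theorem lkLe.cons1 {n : ℕ} {a : B} {w : List (Letter B)} (h : lkLe n w) :
    lkLe n (Sum.inl a :: w) := by
  intro x k hk
  rcases List.mem_cons.1 hk with hk | hk
  · simp at hk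
  · exact h x k hk

theorem lkLe.cons2 {n : ℕ} {a : B} {w : List (Letter B)} (h : lkLe n w) {m : ℕ} (hm : m ≤ n) :
    lkLe n (Sum.inr (a, m) :: w) := by
  intro x k hk
  rcases List.mem_cons.1 hk with hk | hk
  · simp only [Sum.inr.injEq, Prod.mk.injEq] at hk; omega
  · exact h x k hk

theorem map_tg_high {n k : ℕ} {w : List (Letter B)} (h : lkLe n w) (hk : n < k) :
    w.map (tg k) = umW (w.map (tg k)) := by
  simp only [umW, List.map_map]
  apply List.map_congr_left
  intro a ha
  rcases a with a | ⟨a, j⟩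
  · rfl
  · have := h a j ha
    have : ¬ j = k := by omega
    simp [tg, um, this]

theorem map_tg_high' {n k l : ℕ} {w : List (Letter B)} (h : lkLe n w) (hk : n < k) :
    w.map (tg k) = umW (w.map (tg l)) := by
  rw [map_tg_high h hk, umW_tg]

/-- Valid stacks. -/
def VS : Stk B → Prop
  | [] => True
  | w :: s => lkLe s.length w ∧ VS s

theorem VS.suffix {s t : Stk B} (h : VS s) (ht : t <:+ s) : VS t := by
  induction s with
  | nil => rw [List.suffix_nil] at ht; subst ht; exact h
  | cons w s ih =>
    rcases List.suffix_cons_iff.1 ht with rfl | ht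
    · exact h
    · exact ih h.2 ht

variable {bot δ}

theorem Step.valid {c c' : Cf P B} (h : Step bot δ c c') (hv : VS c.2) : VS c'.2 := by
  cases h with
  | clone h => exact ⟨hv.1.mono (by simp), hv⟩
  | push1 h1 h2 => exact ⟨hv.1.cons1, hv.2⟩
  | push2 h1 h2 => exact ⟨hv.1.cons2 le_rfl, hv.2⟩
  | pop2 h1 h2 => exact hv.2
  | pop1 h1 h2 => exact ⟨hv.1.tail, hv.2⟩
  | col1 h1 h2 => exact ⟨hv.1.tail, hv.2⟩
  | col2 h1 h2 h3 => exact hv.2.suffix h2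

variable (bot δ)

/-- Runs on a fixed concrete level. -/
abbrev MCst (n : ℕ) : P × List (Letter B) → P × List (Letter B) → Prop :=
  Mst bot δ (tg n) Sum.inl (fun x => Sum.inr (x, n))

abbrev MC (n : ℕ) : P × List (Letter B) → P × List (Letter B) → Prop :=
  Mrun bot δ (tg n) Sum.inl (fun x => Sum.inr (x, n))

/-- Exits to a proper suffix of the stack. -/
def Ex (c c1 : Cf P B) : Prop :=
  ∃ w s, c.2 = w :: s ∧ c1.2 <:+ s ∧ c1.2 ≠ [] ∧
    E bot δ (decide (c1.2.length = s.length)) (w.map (tg c1.2.length)) c.1 c1.1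

inductive Ch (m : ℕ) : Cf P B → Cf P B → Prop
  | zero {c} : c.2.length ≤ m → Ch m c c
  | step {c c1 c2} : m < c.2.length → Ex bot δ c c1 → Ch m c1 c2 → Ch m c c2

/-- Runs that stay above width `m`. -/
def G (m : ℕ) (c c' : Cf P B) : Prop :=
  m < c.2.length ∧ Relation.ReflTransGen (fun c c' => Step bot δ c c' ∧ m < c'.2.length) c c'

variable {bot δ}

theorem G.refl {m : ℕ} {c : Cf P B} (h : m < c.2.length) : G bot δ m c c := ⟨h, .refl⟩

theorem G.trans {m : ℕ} {c d e : Cf P B} (h : G bot δ m c d) (h' : G bot δ m d e) :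
    G bot δ m c e := ⟨h.1, h.2.trans h'.2⟩

theorem G.single {m : ℕ} {c d : Cf P B} (h : Step bot δ c d) (h1 : m < c.2.length)
    (h2 : m < d.2.length) : G bot δ m c d := ⟨h1, .single ⟨h, h2⟩⟩

theorem G.left {m : ℕ} {c d : Cf P B} (h : G bot δ m c d) : m < c.2.length := h.1

theorem G.right {m : ℕ} {c d : Cf P B} (h : G bot δ m c d) : m < d.2.length := by
  rcases h with ⟨h, h'⟩
  induction h' with
  | refl => exact h
  | tail _ h _ => exact h.2

theorem G.mono {m n : ℕ} {c d : Cf P B} (h : G bot δ m c d) (hn : n ≤ m) : G bot δ n c d :=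
  ⟨hn.trans_lt h.1, Relation.ReflTransGen.mono (fun _ _ hr => ⟨hr.1, hn.trans_lt hr.2⟩) _ _ h.2⟩

theorem G.valid {m : ℕ} {c d : Cf P B} (h : G bot δ m c d) (hv : VS c.2) : VS d.2 := by
  rcases h with ⟨h, h'⟩
  induction h' with
  | refl => exact hv
  | tail _ h ih => exact h.1.valid ih

/-- Head induction for `G`. -/
@[elab_as_elim]
theorem G.rec' {m : ℕ} {d : Cf P B} {M : Cf P B → Prop} {c : Cf P B} (h : G bot δ m c d)
    (h0 : M d)
    (h1 : ∀ c c1, m < c.2.length → Step bot δ c c1 → G bot δ m c1 d → M c1 → M c) : M c := by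
  rcases h with ⟨h, h'⟩
  induction h' using Relation.ReflTransGen.head_induction_on with
  | refl => exact h0
  | head h2 h3 ih => exact h1 _ _ h h2.1 ⟨h2.2, h3⟩ (ih h2.2)

theorem Step.shape {c c' : Cf P B} (h : Step bot δ c c') :
    ∃ w s, c.2 = w :: s ∧
      ((∃ w', c'.2 = w' :: s ∧ MCst bot δ s.length (c.1, w) (c'.1, w')) ∨
       (c'.2 = w :: w :: s ∧ ∃ a u, w = a :: u ∧ δ c.1 (symOf a) .clone2 c'.1) ∨
       (c'.2 <:+ s ∧ c'.2 ≠ [] ∧ Ex bot δ c c')) := by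
  cases h with
  | clone h => exact ⟨_, _, rfl, Or.inr (Or.inl ⟨rfl, _, _, rfl, h⟩)⟩
  | push1 h1 h2 => exact ⟨_, _, rfl, Or.inl ⟨_, rfl, .push1 h1 (by rwa [tg_fst])⟩⟩
  | push2 h1 h2 => exact ⟨_, _, rfl, Or.inl ⟨_, rfl, .push2 h1 (by rwa [tg_fst])⟩⟩
  | pop2 h1 h2 => 
    refine ⟨_, _, rfl, Or.inr (Or.inr ⟨List.suffix_refl _, h1, _, _, rfl, List.suffix_refl _, h1, ?_⟩)⟩
    simp only [decide_true, List.map_cons]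
    exact .pop2 (by rwa [tg_fst])
  | pop1 h1 h2 => exact ⟨_, _, rfl, Or.inl ⟨_, rfl, .pop1 h1 (by rwa [tg_fst])⟩⟩
  | col1 h1 h2 => exact ⟨_, _, rfl, Or.inl ⟨_, rfl, .col1 h1 rfl (by rwa [tg_fst])⟩⟩
  | col2 h1 h2 h3 =>
    refine ⟨_, _, rfl, Or.inr (Or.inr ⟨h2, h1, _, _, rfl, h2, h1, ?_⟩)⟩
    exact .col (by simp [tg]) h3

theorem MCst.exit {q p : P} {w w' : List (Letter B)} {s : Stk B} {c : Cf P B}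
    (h : MCst bot δ s.length (q, w) (p, w')) (he : Ex bot δ (p, w' :: s) c) :
    Ex bot δ (q, w :: s) c := by
  obtain ⟨r, y⟩ := c
  obtain ⟨w1, s1, h1, h2, h3, h4⟩ := he
  simp only [List.cons.injEq] at h1 h2 h3 h4
  obtain ⟨rfl, rfl⟩ := h1
  refine ⟨w, s, rfl, h2, h3, ?_⟩
  simp only
  generalize hb : decide (y.length = s.length) = b at h4
  cases h with
  | push1 h5 h6 => 
    rw [tg_fst, ← tg_fst y.length] at h6
    exact .push1 h5 h6 h4
  | push2 h5 h6 => 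
    rw [tg_fst, ← tg_fst y.length] at h6
    refine .push2 h5 h6 ?_
    have : tg y.length (Sum.inr (‹B›, s.length)) = (‹B›, some b) := by
      simp [tg, ← hb, eq_comm]
    simpa [tg, ← hb, eq_comm] using h4
  | pop1 h5 h6 => 
    rw [tg_fst, ← tg_fst y.length] at h6
    exact .pop1 h6 h4
  | @col1 a _ _ _ h5 h6 h7 => 
    rw [tg_fst, ← tg_fst y.length] at h7
    refine .col1 ?_ h7 h4
    rcases a with a | a
    · rfl
    · simp [tg] at h6
  | loop h5 h6 =>
    rw [tg_fst, ← tg_fst y.length] at h5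
    rw [umW_tg _ y.length] at h6
    exact .cloneRet h5 h6 h4

/-- Chains can be prolonged at the front. -/
theorem Ch.length_le {m : ℕ} {c c' : Cf P B} (h : Ch bot δ m c c') : c'.2.length ≤ m := by
  induction h with
  | zero h => exact h
  | step _ _ _ ih => exact ih

theorem Ch.eq_of_le {m : ℕ} {c c' : Cf P B} (h : Ch bot δ m c c') (hm : c.2.length ≤ m) :
    c = c' := by
  cases h with
  | zero => rfl
  | step h1 => omega

theorem Ex.suffix {c c' : Cf P B} (h : Ex bot δ c c') : c'.2 <:+ c.2 := by
  obtain ⟨w, s, h1, h2, -⟩ := h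
  rw [h1]; exact h2.trans (List.suffix_cons _ _)

theorem Ch.suffix {m : ℕ} {c c' : Cf P B} (h : Ch bot δ m c c') : c'.2 <:+ c.2 := by
  induction h with
  | zero h => exact List.suffix_refl _
  | step _ h _ ih => exact ih.trans h.suffix

theorem Ex.ne_nil {c c' : Cf P B} (h : Ex bot δ c c') : c'.2 ≠ [] := by
  obtain ⟨w, s, h1, h2, h3, -⟩ := h
  exact h3

/-- Returning from a clone. -/
theorem clone_exit {q p : P} {a : Letter B} {u : List (Letter B)} {s : Stk B} {c : Cf P B}
    (hd : δ q (symOf a) .clone2 p) (hl : lkLe s.length (a :: u))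
    (he : Ex bot δ (p, (a :: u) :: (a :: u) :: s) c) :
    (c.2 = (a :: u) :: s ∧ MCst bot δ s.length (q, a :: u) (c.1, a :: u)) ∨
    Ex bot δ (q, (a :: u) :: s) c := by
  obtain ⟨r, y⟩ := c
  obtain ⟨w1, s1, h1, h2, h3, h4⟩ := he
  simp only [List.cons.injEq] at h1
  obtain ⟨rfl, rfl⟩ := h1
  simp only at h2 h3 h4
  rcases List.suffix_cons_iff.1 h2 with rfl | h5
  · left
    refine ⟨rfl, .loop (by rwa [tg_fst]) ?_⟩
    rw [map_tg_high' hl (by simp), decide_eq_true rfl] at h4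
    exact h4
  · right
    refine ⟨_, _, rfl, h5, h3, ?_⟩
    have h6 := h5.length_le
    rw [decide_eq_false (by simp; omega)] at h4
    exact .cloneExit (by rwa [tg_fst]) h4

theorem Ch.prepend {m : ℕ} {c c1 c2 : Cf P B} (hv : VS c.2) (hm : m < c.2.length)
    (hs : Step bot δ c c1) (h : Ch bot δ m c1 c2) : Ch bot δ m c c2 := by
  obtain ⟨w, s, h1, h2⟩ := hs.shape
  obtain ⟨q, x⟩ := c
  obtain ⟨p, x1⟩ := c1
  simp only at h1 h2 hm hv
  subst h1
  have lift : ∀ {p' w'}, MCst bot δ s.length (q, w) (p', w') → Ch bot δ m (p', w' :: s) c2 →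
      Ch bot δ m (q, w :: s) c2 := by
    intro p' w' hM hC
    cases hC with
    | zero h0 => 
      have h' : (w' :: s).length ≤ m := h0
      simp only [List.length_cons] at h' hm; omega
    | step h3 h4 h5 => exact .step hm (hM.exit h4) h5
  rcases h2 with ⟨w', rfl, hM⟩ | ⟨rfl, a, u, rfl, hd⟩ | ⟨-, -, hE⟩
  · exact lift hM h
  · cases h with
    | zero h => 
      have h' : ((a :: u) :: (a :: u) :: s).length ≤ m := h
      simp only [List.length_cons] at h' hm; omega
    | @step _ d _ h3 h4 h5 =>
      rcases clone_exit hd hv.1 h4 with ⟨h6, h7⟩ | h6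
      · obtain ⟨d1, d2⟩ := d
        simp only at h6 h7
        subst h6
        exact lift h7 h5
      · exact .step hm h6 h5
  · exact .step hm hE h

theorem Ch.comp_iff {m m' : ℕ} (hm : m ≤ m') {c c2 : Cf P B} :
    Ch bot δ m c c2 ↔ ∃ c1, Ch bot δ m' c c1 ∧ Ch bot δ m c1 c2 := by
  constructor
  · intro h
    induction h with
    | zero h => exact ⟨_, .zero (h.trans hm), .zero h⟩
    | @step c d c2 h1 h2 h3 ih =>
      by_cases hc : m' < c.2.length
      · obtain ⟨c1, h4, h5⟩ := ih
        exact ⟨c1, .step hc h2 h4, h5⟩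
      · exact ⟨c, .zero (by omega), .step h1 h2 h3⟩
  · rintro ⟨c1, h1, h2⟩
    induction h1 with
    | zero h => exact h2
    | step h3 h4 h5 ih => exact .step (by omega) h4 (ih h2)

/-- Soundness of `E`. -/
theorem E.sound {b : Bool} {W : List (AL B)} {q p : P} (h : E bot δ b W q p) :
    ∀ (m : ℕ) (w : List (Letter B)) (s y : Stk B), lkLe s.length w → y <:+ s → m < y.length →
      b = decide (y.length = s.length) → W = w.map (tg y.length) →
      G bot δ m (q, w :: s) (p, y) := by
  induction h with
  | @pop2 a W q q' h =>
    intro m w s y hl hy hm hb hW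
    rcases w with _ | ⟨a', w⟩ <;> simp only [List.map_nil, List.map_cons, reduceCtorEq, List.cons.injEq] at hW
    obtain ⟨rfl, rfl⟩ := hW
    rw [tg_fst] at h
    have : y = s := hy.eq_of_length (by simpa using hb.symm)
    subst this
    refine .single (.pop2 (by rintro rfl; simp at hm) h) (by simp; omega) hm
  | @col b a W q q' h0 h =>
    intro m w s y hl hy hm hb hW
    rcases w with _ | ⟨a', w⟩ <;> simp only [List.map_nil, List.map_cons, reduceCtorEq, List.cons.injEq] at hW
    obtain ⟨rfl, rfl⟩ := hW
    rcases a' with a | ⟨a, j⟩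
    · simp [tg] at h0
    · simp only [tg, Option.some.injEq, decide_eq_true_eq] at h0 h
      subst h0
      have := hy.length_le
      refine .single (.col2 (by rintro rfl; simp at hm) hy h) (by simp; omega) hm
  | @push1 b a W q r q' y h0 h h1 ih =>
    intro m w s z hl hy hm hb hW
    rcases w with _ | ⟨a', w⟩ <;> simp only [List.map_nil, List.map_cons, reduceCtorEq, List.cons.injEq] at hW
    obtain ⟨rfl, rfl⟩ := hW
    rw [tg_fst] at h
    have := hy.length_le
    refine (G.single (.push1 h0 h) (by simp; omega) (by simp; omega)).trans
      (ih m _ s z hl.cons1 hy hm hb rfl)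
  | @push2 b a W q r q' y h0 h h1 ih =>
    intro m w s z hl hy hm hb hW
    rcases w with _ | ⟨a', w⟩ <;> simp only [List.map_nil, List.map_cons, reduceCtorEq, List.cons.injEq] at hW
    obtain ⟨rfl, rfl⟩ := hW
    rw [tg_fst] at h
    have := hy.length_le
    refine (G.single (.push2 h0 h) (by simp; omega) (by simp; omega)).trans
      (ih m _ s z (hl.cons2 le_rfl) hy hm hb ?_)
    simp [tg, hb, eq_comm]
  | @pop1 b a W q r q' h h1 ih =>
    intro m w s z hl hy hm hb hW
    rcases w with _ | ⟨a', w⟩ <;> simp only [List.map_nil, List.map_cons, reduceCtorEq, List.cons.injEq] at hW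
    obtain ⟨rfl, rfl⟩ := hW
    rw [tg_fst] at h
    have := hy.length_le
    have h2 := h1.ne_nil
    refine (G.single (.pop1 (by rintro rfl; simp at h2) h) (by simp; omega) (by simp; omega)).trans
      (ih m _ s z hl.tail hy hm hb rfl)
  | @col1 b a W q r q' h0 h h1 ih =>
    intro m w s z hl hy hm hb hW
    rcases w with _ | ⟨a', w⟩ <;> simp only [List.map_nil, List.map_cons, reduceCtorEq, List.cons.injEq] at hW
    obtain ⟨rfl, rfl⟩ := hW
    rcases a' with a | ⟨a, j⟩
    · have := hy.length_le
      have h2 := h1.ne_nil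
      refine (G.single (.col1 (by rintro rfl; simp at h2) h) (by simp; omega) (by simp; omega)).trans
        (ih m _ s z hl.tail hy hm hb rfl)
    · simp [tg] at h0
  | @cloneExit b a W q r q' h h1 ih =>
    intro m w s z hl hy hm hb hW
    rcases w with _ | ⟨a', w⟩ <;> simp only [List.map_nil, List.map_cons, reduceCtorEq, List.cons.injEq] at hW
    obtain ⟨rfl, rfl⟩ := hW
    rw [tg_fst] at h
    have := hy.length_le
    refine (G.single (.clone h) (by simp; omega) (by simp; omega)).trans
      (ih m (a' :: w) ((a' :: w) :: s) z (hl.mono (by simp)) (hy.trans (List.suffix_cons _ _)) hm ?_ rfl)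
    rw [eq_comm, decide_eq_false_iff_not]; simp; omega
  | @cloneRet b a W q r r' q' h h1 h2 ih1 ih2 =>
    intro m w s z hl hy hm hb hW
    rcases w with _ | ⟨a', w⟩ <;> simp only [List.map_nil, List.map_cons, reduceCtorEq, List.cons.injEq] at hW
    obtain ⟨rfl, rfl⟩ := hW
    rw [tg_fst] at h
    have := hy.length_le
    refine (G.single (.clone h) (by simp; omega) (by simp; omega)).trans
      ((ih1 m (a' :: w) ((a' :: w) :: s) ((a' :: w) :: s) (hl.mono (by simp)) (List.suffix_refl _)
        (by simp; omega) (by simp) ?_).trans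
        (ih2 m (a' :: w) s z hl hy hm hb rfl))
    rw [map_tg_high' (l := z.length) hl (by simp)]
    rfl

theorem Ex.sound {m : ℕ} {c d : Cf P B} (h : Ex bot δ c d) (hv : VS c.2) (hm : m < d.2.length) :
    G bot δ m c d := by
  obtain ⟨q, x⟩ := c
  obtain ⟨p, y⟩ := d
  obtain ⟨w, s, h1, h2, h3, h4⟩ := h
  simp only at h1 h2 h3 h4 hv hm
  subst h1
  exact h4.sound m w s y hv.1 h2 hm rfl rfl

theorem Ch.sound {m m' : ℕ} {c d : Cf P B} (h : Ch bot δ m' c d) (hv : VS c.2)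
    (hm : m < d.2.length) : G bot δ m c d := by
  induction h with
  | zero h => exact .refl hm
  | step h1 h2 h3 ih =>
    have h4 := h3.suffix.length_le
    exact (h2.sound hv (by omega)).trans (ih (hv.suffix h2.suffix) hm)

theorem MCst.sound {q p : P} {w w' : List (Letter B)} {s : Stk B}
    (h : MCst bot δ s.length (q, w) (p, w')) (hl : lkLe s.length w) :
    G bot δ s.length (q, w :: s) (p, w' :: s) := by
  cases h with
  | push1 h5 h6 => rw [tg_fst] at h6; exact .single (.push1 h5 h6) (by simp) (by simp)
  | push2 h5 h6 => rw [tg_fst] at h6; exact .single (.push2 h5 h6) (by simp) (by simp)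
  | pop1 h5 h6 => rw [tg_fst] at h6; exact .single (.pop1 h5 h6) (by simp) (by simp)
  | @col1 a _ _ _ h5 h6 h7 =>
    rcases a with a | a
    · exact .single (.col1 h5 h7) (by simp) (by simp)
    · simp [tg] at h6
  | @loop a w _ r _ h5 h6 =>
    rw [tg_fst] at h5
    refine (G.single (.clone h5) (by simp) (by simp)).trans
      (h6.sound s.length (a :: w) ((a :: w) :: s) ((a :: w) :: s) (hl.mono (by simp))
        (List.suffix_refl _) (by simp) (by simp) ?_)
    rw [← map_tg_high' (l := s.length) (k := ((a :: w) :: s).length) hl (by simp)]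

theorem MC.sound {c d : P × List (Letter B)} {s : Stk B}
    (h : MC bot δ s.length c d) (hl : VS (c.2 :: s)) :
    G bot δ s.length (c.1, c.2 :: s) (d.1, d.2 :: s) ∧ VS (d.2 :: s) := by
  induction h with
  | refl => exact ⟨.refl (by simp), hl⟩
  | tail _ h ih =>
    have h1 := MCst.sound h ih.2.1
    exact ⟨ih.1.trans h1, h1.valid ih.2⟩

/-- Composition for `G`. -/
theorem G.comp_iff {m m' : ℕ} (hm : m ≤ m') {c c' : Cf P B} (hv : VS c.2) (hc : m' < c.2.length) :
    G bot δ m c c' ↔ G bot δ m' c c' ∨ ∃ c1, Ch bot δ m' c c1 ∧ G bot δ m c1 c' := by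
  constructor
  · intro h
    revert hv hc
    refine G.rec' h ?_ ?_
    · intro hv hc; exact Or.inl (.refl hc)
    · intro d d1 hd hs hg ih hv hc
      by_cases hd1 : m' < d1.2.length
      · rcases ih (hs.valid hv) hd1 with h | ⟨c1, h1, h2⟩
        · exact Or.inl ((G.single hs hc hd1).trans h)
        · exact Or.inr ⟨c1, h1.prepend hv hc hs, h2⟩
      · exact Or.inr ⟨d1, Ch.prepend hv hc hs (.zero (by omega)), hg⟩
  · rintro (h | ⟨c1, h1, h2⟩)
    · exact h.mono hm
    · exact (h1.sound hv h2.left).trans h2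

theorem Step.suffix {c c' : Cf P B} (h : Step bot δ c c') {T : Stk B} (h1 : T.length < c.2.length)
    (h2 : T.length < c'.2.length) (h3 : T <:+ c'.2) : T <:+ c.2 := by
  obtain ⟨w, s, h4, h5⟩ := h.shape
  rw [h4] at h1 ⊢
  rcases h5 with ⟨w', h5, -⟩ | ⟨h5, -⟩ | ⟨h5, -⟩
  · rw [h5, List.suffix_cons_iff] at h3
    rcases h3 with rfl | h3
    · rw [h5] at h2; simp at h2
    · exact h3.trans (List.suffix_cons _ _)
  · rw [h5, List.suffix_cons_iff] at h3
    rcases h3 with rfl | h3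
    · rw [h5] at h2; simp at h2
    · exact h3
  · exact (h3.trans h5).trans (List.suffix_cons _ _)

theorem G.suffix {c c' : Cf P B} {T : Stk B} (h : G bot δ T.length c c') (h3 : T <:+ c'.2) :
    T <:+ c.2 := by
  refine G.rec' (M := fun c => T <:+ c.2) h h3 ?_
  intro c c1 h1 h2 h4 h5
  exact h2.suffix h1 h4.left h5

/-- The part of the run after the last visit of width `|Y|+1`. -/
def Tail (bot : B) (δ : P → B → Op B → P → Prop) (p2 : P) (w1 : List (Letter B)) (Y : Stk B)
    (q' : P) (z : Stk B) : Prop :=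
  (z = [] ∧ p2 = q') ∨ ∃ p3 a u, w1 = a :: u ∧ δ p2 (symOf a) .clone2 p3 ∧
    G bot δ (Y.length + 1) (p3, w1 :: w1 :: Y) (q', z ++ w1 :: Y)

theorem Tail.sound {p2 : P} {w1 : List (Letter B)} {Y : Stk B} {q' : P} {z : Stk B}
    (h : Tail bot δ p2 w1 Y q' z) : G bot δ Y.length (p2, w1 :: Y) (q', z ++ w1 :: Y) := by
  rcases h with ⟨rfl, rfl⟩ | ⟨p3, a, u, rfl, hd, hg⟩
  · exact .refl (by simp)
  · exact (G.single (.clone hd) (by simp) (by simp)).trans (hg.mono (by simp))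

theorem G.split {m : ℕ} {q q' : P} {X z Y : Stk B} {w1 : List (Letter B)} (hm : m ≤ Y.length)
    (h : G bot δ m (q, X) (q', z ++ w1 :: Y)) (hv : VS X) :
    (w1 :: Y <:+ X ∧ G bot δ (Y.length + 1) (q, X) (q', z ++ w1 :: Y)) ∨
    ∃ p1 w0 p2, MC bot δ Y.length (p1, w0) (p2, w1) ∧ Tail bot δ p2 w1 Y q' z ∧
      ((X = w0 :: Y ∧ q = p1) ∨
       (Y.length + 1 < X.length ∧ Ch bot δ (Y.length + 1) (q, X) (p1, w0 :: Y)) ∨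
       (m < Y.length ∧ ∃ p0 a u Y', w0 = a :: u ∧ Y = w0 :: Y' ∧ δ p0 (symOf a) .clone2 p1 ∧
          G bot δ m (q, X) (p0, Y))) := by
  suffices H : ∀ c : Cf P B, G bot δ m c (q', z ++ w1 :: Y) → VS c.2 → 
    (w1 :: Y <:+ c.2 ∧ G bot δ (Y.length + 1) c (q', z ++ w1 :: Y)) ∨
    ∃ p1 w0 p2, MC bot δ Y.length (p1, w0) (p2, w1) ∧ Tail bot δ p2 w1 Y q' z ∧
      ((c.2 = w0 :: Y ∧ c.1 = p1) ∨
       (Y.length + 1 < c.2.length ∧ Ch bot δ (Y.length + 1) c (p1, w0 :: Y)) ∨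
       (m < Y.length ∧ ∃ p0 a u Y', w0 = a :: u ∧ Y = w0 :: Y' ∧ δ p0 (symOf a) .clone2 p1 ∧
          G bot δ m c (p0, Y))) from H _ h hv
  clear h hv
  intro c h
  refine G.rec' h ?_ ?_
  · intro hv
    rcases z with _ | ⟨z0, z⟩
    · right
      exact ⟨q', w1, q', .refl, Or.inl ⟨rfl, rfl⟩, Or.inl ⟨rfl, rfl⟩⟩
    · left
      exact ⟨List.suffix_append _ _, .refl (by simp)⟩
  · clear h c
    rintro ⟨q, X⟩ ⟨p, X1⟩ hc hs hg ih hv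
    simp only at hc hv ih
    have hsh := hs.shape
    obtain ⟨w, s, h1, hsh⟩ := hsh
    simp only at h1 hsh
    subst h1
    rcases ih (hs.valid hv) with ⟨h1, h2⟩ | ⟨p1, w0, p2, hM, hT, h3⟩
    · by_cases hX : Y.length + 1 < (w :: s).length
      · left
        exact ⟨hs.suffix (by simpa using hX) h2.left h1, (G.single hs hX h2.left).trans h2⟩
      · have hl := h2.left
        simp only [List.length_cons] at hX hl
        rcases hsh with ⟨w', rfl, -⟩ | ⟨rfl, a, u, rfl, hd⟩ | ⟨h5, -⟩
        · simp at hl; omega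
        · have : w1 :: Y = (a :: u) :: s := by
            rcases List.suffix_cons_iff.1 h1 with h | h
            · have := congrArg List.length h; simp at this; simp at hl; omega
            · exact h.eq_of_length (by simp at hl ⊢; omega)
          simp only [List.cons.injEq] at this
          obtain ⟨rfl, rfl⟩ := this
          right
          exact ⟨q, _, q, .refl, Or.inr ⟨p, a, u, rfl, hd, h2⟩, Or.inl ⟨rfl, rfl⟩⟩
        · have := h5.length_le; omega
    · right
      rcases h3 with ⟨h3, rfl⟩ | ⟨h3, h4⟩ | ⟨h3, p0, a, u, Y', h4, h5, h6, h7⟩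
      · subst h3
        rcases hsh with ⟨w', h8, hM'⟩ | ⟨h8, a, u, rfl, hd⟩ | ⟨h5, h6, h7⟩
        · simp only [List.cons.injEq] at h8
          obtain ⟨rfl, rfl⟩ := h8
          exact ⟨q, w, p2, .head hM' hM, hT, Or.inl ⟨rfl, rfl⟩⟩
        · simp only [List.cons.injEq] at h8
          obtain ⟨rfl, rfl⟩ := h8
          exact ⟨p, _, p2, hM, hT, Or.inr (Or.inr ⟨by simpa using hc, q, a, u, s, rfl, rfl, hd,
            .refl hc⟩)⟩
        · have h9 := h5.length_le
          simp only [List.length_cons] at h9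
          refine ⟨p, w0, p2, hM, hT, Or.inr (Or.inl ⟨by simp; omega, ?_⟩)⟩
          exact .step (by simp; omega) h7 (.zero (by simp))
      · by_cases hX : Y.length + 1 < (w :: s).length
        · exact ⟨p1, w0, p2, hM, hT, Or.inr (Or.inl ⟨hX, h4.prepend hv hX hs⟩)⟩
        · simp only [List.length_cons] at hX
          rcases hsh with ⟨w', rfl, -⟩ | ⟨rfl, a, u, rfl, hd⟩ | ⟨h5, -⟩
          · simp at h3; omega
          · have hsl : s.length = Y.length := by simp at h3; omega
            cases h4 with
            | zero h => simp at h h3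
            | @step _ d _ h5 h6 h7 =>
              have hds : d.2.length ≤ Y.length + 1 := by
                have := h6
                obtain ⟨w', s', h8, h9, -⟩ := this
                simp only [List.cons.injEq] at h8
                obtain ⟨rfl, rfl⟩ := h8
                have := h9.length_le
                simp at this; omega
              have h8 := h7.eq_of_le hds
              subst h8
              rcases clone_exit hd hv.1 h6 with ⟨h9, h10⟩ | h9
              · simp only [List.cons.injEq] at h9 h10
                obtain ⟨rfl, rfl⟩ := h9
                exact ⟨q, _, p2, .head h10 hM, hT, Or.inl ⟨rfl, rfl⟩⟩
              · obtain ⟨w', s', h8, h10, -⟩ := h9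
                simp only [List.cons.injEq] at h8
                obtain ⟨-, rfl⟩ := h8
                have := h10.length_le
                simp at this; omega
          · have := h5.length_le; omega
      · exact ⟨p1, w0, p2, hM, hT, Or.inr (Or.inr ⟨h3, p0, a, u, Y', h4, h5, h6,
          (G.single hs hc hg.left).trans h7⟩)⟩

end Part2



/-! ## Part 3: concrete loops and abstract loops -/

section Part3

variable {P B : Type} {bot : B} {δ : P → B → Op B → P → Prop}

theorem G.comp_iff' {m m' : ℕ} (hm : m ≤ m') {c c' : Cf P B} (hv : VS c.2) :
    G bot δ m c c' ↔ G bot δ m' c c' ∨ ∃ c1, Ch bot δ m' c c1 ∧ G bot δ m c1 c' := by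
  by_cases hc : m' < c.2.length
  · exact G.comp_iff hm hv hc
  · constructor
    · intro h; exact Or.inr ⟨c, .zero (by omega), h⟩
    · rintro (h | ⟨c1, h1, h2⟩)
      · exact h.mono hm
      · exact (h1.sound hv h2.left).trans h2

/-- Letters that can be pushed at level `n`. -/
def fresh (n : ℕ) (a : Letter B) : Prop := ∃ x, a = Sum.inl x ∨ a = Sum.inr (x, n)

theorem tg_fresh {n : ℕ} {a b : Letter B} (ha : fresh n a) (h : tg n a = tg n b) : a = b := by
  obtain ⟨x, rfl | rfl⟩ := ha
  · rcases b with b | ⟨b, k⟩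
    · simp [tg] at h; rw [h]
    · simp [tg] at h
  · rcases b with b | ⟨b, k⟩
    · simp [tg] at h
    · simp only [tg, decide_true, Prod.mk.injEq, Option.some.injEq] at h
      obtain ⟨rfl, h2⟩ := h
      have : k = n := of_decide_eq_true h2.symm
      rw [this]

theorem map_tg_fresh {n : ℕ} : ∀ {u u' : List (Letter B)}, (∀ a ∈ u, fresh n a) →
    u.map (tg n) = u'.map (tg n) → u = u'
  | [], [], _, _ => rfl
  | [], b :: u', _, h => by simp at h
  | a :: u, [], _, h => by simp at h
  | a :: u, b :: u', hu, h => by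
    simp only [List.map_cons, List.cons.injEq] at h
    rw [tg_fresh (hu a (by simp)) h.1, map_tg_fresh (fun a ha => hu a (by simp [ha])) h.2]

def Inv (n : ℕ) (v w : List (Letter B)) : Prop :=
  ∃ u z, w = u ++ z ∧ z <:+ v ∧ ∀ a ∈ u, fresh n a

theorem Inv.tail {n : ℕ} {v w : List (Letter B)} {a : Letter B} (h : Inv n v (a :: w)) :
    Inv n v w := by
  obtain ⟨u, z, h1, h2, h3⟩ := h
  rcases u with _ | ⟨b, u⟩
  · simp only [List.nil_append] at h1; subst h1
    exact ⟨[], w, rfl, (List.suffix_cons _ _).trans h2, by simp⟩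
  · simp only [List.cons_append, List.cons.injEq] at h1
    exact ⟨u, z, h1.2, h2, fun a ha => h3 a (by simp [ha])⟩

theorem Inv.cons {n : ℕ} {v w : List (Letter B)} {a : Letter B} (h : Inv n v w)
    (ha : fresh n a) : Inv n v (a :: w) := by
  obtain ⟨u, z, h1, h2, h3⟩ := h
  exact ⟨a :: u, z, by simp [h1], h2, fun b hb => (List.mem_cons.1 hb).elim (fun e => e ▸ ha) (h3 b)⟩

theorem Inv.eq {n : ℕ} {v w : List (Letter B)} (h : Inv n v w)
    (he : w.map (tg n) = v.map (tg n)) : w = v := by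
  obtain ⟨u, z, rfl, ⟨u', rfl⟩, h3⟩ := h
  simp only [List.map_append, List.append_cancel_right_eq] at he
  rw [map_tg_fresh h3 he]

theorem Mst.toAst {n : ℕ} {c c' : P × List (Letter B)} (h : MCst bot δ n c c') :
    Ast bot δ (c.1, c.2.map (tg n)) (c'.1, c'.2.map (tg n)) := by
  cases h with
  | push1 h1 h2 => exact .push1 h1 h2
  | push2 h1 h2 => 
    simp only [List.map_cons, tg, decide_true]
    exact .push2 h1 h2
  | pop1 h1 h2 => exact .pop1 (by simpa using h1) h2
  | col1 h1 h2 h3 => exact .col1 (by simpa using h1) h2 h3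
  | loop h1 h2 => exact .loop h1 (by simpa using h2)

theorem Mst.ofAst {n : ℕ} {q q' : P} {v w : List (Letter B)} {W : List (AL B)}
    (h : Ast bot δ (q, w.map (tg n)) (q', W)) (hi : Inv n v w) :
    ∃ w', W = w'.map (tg n) ∧ Inv n v w' ∧ MCst bot δ n (q, w) (q', w') := by
  rcases w with _ | ⟨a, w⟩
  · simp only [List.map_nil] at h; cases h
  simp only [List.map_cons] at h
  cases h with
  | @push1 _ _ _ _ x h1 h2 =>
    exact ⟨Sum.inl x :: a :: w, rfl, hi.cons ⟨x, Or.inl rfl⟩, .push1 h1 h2⟩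
  | @push2 _ _ _ _ x h1 h2 =>
    exact ⟨Sum.inr (x, n) :: a :: w, by simp [tg], hi.cons ⟨x, Or.inr rfl⟩, .push2 h1 h2⟩
  | pop1 h1 h2 => exact ⟨w, rfl, hi.tail, .pop1 (by simpa using h1) h2⟩
  | col1 h1 h2 h3 => exact ⟨w, rfl, hi.tail, .col1 (by simpa using h1) h2 h3⟩
  | loop h1 h2 => exact ⟨a :: w, rfl, hi, .loop h1 (by simpa using h2)⟩

theorem MC_loop_iff {n : ℕ} {p q : P} {v : List (Letter B)} :
    MC bot δ n (p, v) (q, v) ↔ LL bot δ (v.map (tg n)) p q := by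
  constructor
  · intro h
    have : ∀ c : P × List (Letter B), MC bot δ n (p, v) c →
        Arun bot δ (p, v.map (tg n)) (c.1, c.2.map (tg n)) := by
      intro c h
      induction h with
      | refl => exact .refl
      | tail _ h ih => exact ih.tail (Mst.toAst h)
    exact this _ h
  · intro h
    have : ∀ c, Arun bot δ (p, v.map (tg n)) c →
        ∃ w, c.2 = w.map (tg n) ∧ Inv n v w ∧ MC bot δ n (p, v) (c.1, w) := by
      intro c h
      induction h with
      | refl => exact ⟨v, rfl, ⟨[], v, rfl, List.suffix_refl _, by simp⟩, .refl⟩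
      | @tail c d _ h ih =>
        obtain ⟨c1, c2⟩ := c
        obtain ⟨d1, d2⟩ := d
        obtain ⟨w, h1, h2, h3⟩ := ih
        simp only at h1 h3
        subst h1
        obtain ⟨w', h4, h5, h6⟩ := Mst.ofAst h h2
        exact ⟨w', h4, h5, h3.tail h6⟩
    obtain ⟨w, h1, h2, h3⟩ := this _ h
    simp only at h1 h3
    rw [h2.eq h1.symm] at h3
    exact h3

end Part3



/-! ## Part 4: encoding of stacks as binary trees -/

/-- Binary trees with explicit empty tree. -/
inductive BT (α : Type) where
  | nil : BT α
  | node (a : α) (l r : BT α) : BT α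

section Part4

variable {B : Type}

/-- Labels of forest nodes: `none` for the end of a word, `some (σ, l)` for a letter. -/
abbrev Lb (B : Type) := Option (B × Bool)

/-- The letter described by a label at width `n`. -/
def ltr (x : B × Bool) (n : ℕ) : Letter B := if x.2 then Sum.inr (x.1, n) else Sum.inl x.1

/-- Decoding of forests: push the words of the forest (all extending `v`) onto `s`. -/
def decS : BT (Lb B) → List (Letter B) → Stk B → Stk B
  | .nil, _, s => s
  | .node none _ r, v, s => decS r v (v :: s)
  | .node (some x) C r, v, s => decS r v (decS C (ltr x s.length :: v) s)

/-- The root label. -/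
def hd {α : Type} : BT α → Option α
  | .nil => none
  | .node a _ _ => some a

/-- Canonical forests. -/
def Can : BT (Lb B) → Prop
  | .nil => True
  | .node none l r => l = .nil ∧ Can r
  | .node (some x) C r => C ≠ .nil ∧ Can C ∧ Can r ∧ (x.2 = false → hd r ≠ some (some x))

def vw (e : Bool) (v : List (Letter B)) (s : Stk B) : Stk B := if e then v :: s else s

@[simp] theorem vw_true (v : List (Letter B)) (s : Stk B) : vw true v s = v :: s := rfl
@[simp] theorem vw_false (v : List (Letter B)) (s : Stk B) : vw false v s = s := rfl

/-- `Z` arises from `s` by adding words with suffix `v`. -/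
def Ext (v : List (Letter B)) (s Z : Stk B) : Prop := ∃ z, Z = z ++ s ∧ ∀ w ∈ z, v <:+ w

theorem Ext.refl (v : List (Letter B)) (s : Stk B) : Ext v s s := ⟨[], rfl, by simp⟩

theorem Ext.suffix {v : List (Letter B)} {s Z : Stk B} (h : Ext v s Z) : s <:+ Z := by
  obtain ⟨z, rfl, -⟩ := h; exact List.suffix_append _ _

theorem Ext.cons {v w : List (Letter B)} {s Z : Stk B} (h : Ext v s Z) (hw : v <:+ w) :
    Ext v s (w :: Z) := by
  obtain ⟨z, rfl, h⟩ := h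
  exact ⟨w :: z, rfl, fun b hb => (List.mem_cons.1 hb).elim (fun e => e ▸ hw) (h b)⟩

theorem Ext.trans {v : List (Letter B)} {s Y Z : Stk B} (h : Ext v s Y) (h' : Ext v Y Z) :
    Ext v s Z := by
  obtain ⟨z, rfl, h⟩ := h
  obtain ⟨z', rfl, h'⟩ := h'
  refine ⟨z' ++ z, by simp, fun w hw => ?_⟩
  rcases List.mem_append.1 hw with hw | hw
  · exact h' w hw
  · exact h w hw

theorem Ext.weaken {u v : List (Letter B)} {s Z : Stk B} (h : Ext v s Z) (hu : u <:+ v) :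
    Ext u s Z := by
  obtain ⟨z, rfl, h⟩ := h
  exact ⟨z, rfl, fun w hw => hu.trans (h w hw)⟩

theorem Ext.mem {v w : List (Letter B)} {s T Z : Stk B} (h : Ext v s Z) (hT : w :: T <:+ Z)
    (hl : s.length ≤ T.length) : v <:+ w := by
  obtain ⟨z, rfl, h⟩ := h
  obtain ⟨u, hu⟩ := hT
  rcases List.append_eq_append_iff.1 hu with ⟨t, h1, h2⟩ | ⟨t, h1, h2⟩
  · rcases t with _ | ⟨a, t⟩
    · have := congrArg List.length h2
      simp only [List.nil_append, List.length_cons] at this; omega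
    · simp only [List.cons_append, List.cons.injEq] at h2
      obtain ⟨rfl, -⟩ := h2
      exact h w (by simp [h1])
  · have := congrArg List.length h2
    simp only [List.length_append, List.length_cons] at this; omega

theorem Ext.vw {v w : List (Letter B)} {s Z : Stk B} (h : Ext v s Z) (hw : v <:+ w) (e : Bool) :
    Ext v s (vw e w Z) := by
  cases e
  · exact h
  · exact h.cons hw

theorem decS_ext (F : BT (Lb B)) : ∀ (v : List (Letter B)) (s : Stk B),
    Ext v s (decS F v s) := by
  induction F with
  | nil => intro v s; exact Ext.refl _ _
  | node a l r ihl ihr =>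
    intro v s
    rcases a with _ | x
    · exact Ext.trans ((Ext.refl v s).cons (List.suffix_refl _)) (ihr _ _)
    · exact Ext.trans ((ihl _ _).weaken (List.suffix_cons _ _)) (ihr _ _)

theorem decS_suffix (F : BT (Lb B)) (v : List (Letter B)) (s : Stk B) : s <:+ decS F v s :=
  (decS_ext F v s).suffix

theorem decS_le (F : BT (Lb B)) (v : List (Letter B)) (s : Stk B) :
    s.length ≤ (decS F v s).length := (decS_suffix F v s).length_le

theorem decS_lt {F : BT (Lb B)} (hF : Can F) (hn : F ≠ .nil) : ∀ (v : List (Letter B)) (s : Stk B),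
    s.length < (decS F v s).length := by
  induction F with
  | nil => exact absurd rfl hn
  | node a l r ihl ihr =>
    intro v s
    rcases a with _ | x
    · exact lt_of_lt_of_le (by simp) (decS_le r v (v :: s))
    · exact lt_of_lt_of_le (ihl hF.2.1 hF.1 _ s) (decS_le r v _)

theorem vw_length (e : Bool) (v : List (Letter B)) (s : Stk B) :
    (vw e v s).length = s.length + if e then 1 else 0 := by
  cases e <;> simp

theorem suffix_unique {α : Type} {w w' : α} {T Z : List α} (h : w :: T <:+ Z) (h' : w' :: T <:+ Z) :
    w = w' := by
  obtain ⟨u, rfl⟩ := h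
  obtain ⟨u', h'⟩ := h'
  have := (List.append_inj' h' (by simp)).2
  simp at this; exact this.symm

theorem suffix_unique' {α : Type} {T T' Z : List α} (h : T <:+ Z) (h' : T' <:+ Z)
    (hl : T.length = T'.length) : T = T' := by
  obtain ⟨u, rfl⟩ := h
  obtain ⟨u', h'⟩ := h'
  exact (List.append_inj' h' hl.symm).2.symm

theorem exists_top {α : Type} {T Z : List α} (h : T <:+ Z) (hl : T.length < Z.length) :
    ∃ z w, Z = z ++ w :: T := by
  obtain ⟨u, rfl⟩ := h
  rcases List.eq_nil_or_concat u with rfl | ⟨u, a, rfl⟩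
  · simp at hl
  · exact ⟨u, a, by simp⟩

/-- `HW F v n w` : what is known about the first word above the base of a forest `F`. -/
def HW (F : BT (Lb B)) (v : List (Letter B)) (n : ℕ) (w : List (Letter B)) : Prop :=
  match hd F with
  | some (some x) => ltr x n :: v <:+ w
  | _ => w = v

theorem HW_of {F : BT (Lb B)} (hF : Can F) {e : Bool} {v w : List (Letter B)} {s : Stk B}
    (h : w :: s <:+ vw e v (decS F v s)) : HW F v s.length w := by
  rcases F with _ | ⟨_ | x, C, r⟩
  · simp only [HW, hd]
    cases e
    · have := h.length_le; simp [decS] at this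
    · have := h.eq_of_length (by simp [decS]); simp [decS] at this; exact this
  · simp only [HW, hd]
    have h1 : v :: s <:+ vw e v (decS (.node none C r) v s) := 
      (((decS_ext r v (v :: s))).vw (List.suffix_refl _) e).suffix
    exact suffix_unique h h1
  · simp only [HW, hd]
    obtain ⟨z, w', h1⟩ := exists_top (decS_suffix C (ltr x s.length :: v) s) (decS_lt hF.2.1 hF.1 _ s)
    have h2 : w' :: s <:+ decS C (ltr x s.length :: v) s := ⟨z, h1.symm⟩
    have h3 := (decS_ext C (ltr x s.length :: v) s).mem h2 le_rfl
    have h4 : w' :: s <:+ vw e v (decS (.node (some x) C r) v s) :=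
      h2.trans (((decS_ext r v _)).vw (List.suffix_refl _) e).suffix
    rw [suffix_unique h h4]; exact h3

theorem not_cons_suffix {α : Type} (a : α) (v : List α) : ¬ a :: v <:+ v := by
  intro h; have := h.length_le; simp at this

theorem cons_suffix_unique {α : Type} {a a' : α} {v w : List α} (h : a :: v <:+ w)
    (h' : a' :: v <:+ w) : a = a' := suffix_unique h h'

theorem ltr_inj {x y : B × Bool} {n : ℕ} (h : ltr x n = ltr y n) : x = y := by
  rcases x with ⟨x, _ | _⟩ <;> rcases y with ⟨y, _ | _⟩ <;> simp_all [ltr]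

theorem ltr_eq {x y : B × Bool} {n m : ℕ} (hnm : n ≠ m) (h : ltr x n = ltr y m) :
    x = y ∧ x.2 = false := by
  rcases x with ⟨x, _ | _⟩ <;> rcases y with ⟨y, _ | _⟩ <;> simp_all [ltr]

/-- The head of `F` is the letter `x`, if the first word extends it. -/
theorem HW.hd_eq {F : BT (Lb B)} {v w : List (Letter B)} {n : ℕ} (h : HW F v n w) {x : B × Bool}
    (hx : ltr x n :: v <:+ w) : hd F = some (some x) := by
  unfold HW at h
  split at h
  · next y hy => rw [hy, ltr_inj (cons_suffix_unique hx h)]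
  · subst h; exact absurd hx (not_cons_suffix _ _)

theorem hd_some {α : Type} {F : BT α} {a : α} (h : hd F = some a) : ∃ C r, F = .node a C r := by
  rcases F with _ | ⟨b, C, r⟩
  · simp [hd] at h
  · simp only [hd, Option.some.injEq] at h; subst h; exact ⟨C, r, rfl⟩

/-- The word following a block does not extend the letter of the block. -/
theorem no_ext {x : B × Bool} {C r : BT (Lb B)} (hF : Can (.node (some x) C r)) {e : Bool}
    {v w : List (Letter B)} {s : Stk B}
    (h : w :: decS C (ltr x s.length :: v) s <:+
      vw e v (decS r v (decS C (ltr x s.length :: v) s))) : ¬ ltr x s.length :: v <:+ w := by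
  intro hx
  have h1 := HW_of hF.2.2.1 h
  have hlt := decS_lt hF.2.1 hF.1 (ltr x s.length :: v) s
  unfold HW at h1
  split at h1
  · next y hy =>
    have h2 := cons_suffix_unique hx h1
    obtain ⟨rfl, h4⟩ := ltr_eq (by omega) h2
    exact hF.2.2.2 h4 hy
  · subst h1; exact absurd hx (not_cons_suffix _ _)

theorem decS_inj {F F' : BT (Lb B)} : ∀ {v : List (Letter B)} {s : Stk B}, Can F → Can F' →
    decS F v s = decS F' v s → F = F' := by
  induction F generalizing F' with
  | nil =>
    intro v s hF hF' h
    by_contra hn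
    have := decS_lt hF' (Ne.symm hn) v s
    rw [← h] at this; simp [decS] at this
  | node a C r ihC ihr =>
    intro v s hF hF' h
    have hlt := decS_lt hF (by simp) v s
    obtain ⟨z, w, hz⟩ := exists_top (decS_suffix _ v s) hlt
    have hw : w :: s <:+ vw false v (decS (.node a C r) v s) := ⟨z, hz.symm⟩
    have hw' : w :: s <:+ vw false v (decS F' v s) := by rw [← h]; exact hw
    have h1 := HW_of hF hw
    have h2 := HW_of hF' hw'
    rcases a with _ | x
    · simp only [HW, hd] at h1
      subst h1
      rcases F' with _ | ⟨_ | x', C', r'⟩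
      · rw [h] at hlt; simp [decS] at hlt
      · simp only [decS] at h
        rw [ihr hF.2 hF'.2 h, hF.1, hF'.1]
      · simp only [HW, hd] at h2
        exact absurd h2 (not_cons_suffix _ _)
    · simp only [HW, hd] at h1
      obtain ⟨C', r', rfl⟩ := hd_some (h2.hd_eq h1)
      simp only [decS] at h
      have e1 := decS_suffix r v (decS C (ltr x s.length :: v) s)
      have e2 := decS_suffix r' v (decS C' (ltr x s.length :: v) s)
      have hl := decS_lt hF.2.1 hF.1 (ltr x s.length :: v) s
      have hl' := decS_lt hF'.2.1 hF'.1 (ltr x s.length :: v) s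
      rcases lt_trichotomy (decS C (ltr x s.length :: v) s).length
        (decS C' (ltr x s.length :: v) s).length with hlt | heq | hlt
      · exfalso
        have e3 := List.suffix_of_suffix_length_le e1 (h ▸ e2) hlt.le
        obtain ⟨z, w, hz⟩ := exists_top e3 hlt
        have e4 := (decS_ext C' (ltr x s.length :: v) s).mem ⟨z, hz.symm⟩ hl.le
        refine no_ext (e := false) (w := w) hF (v := v) (s := s) ?_ e4
        rw [vw_false, h]
        exact List.IsSuffix.trans ⟨z, hz.symm⟩ e2
      · have e3 := suffix_unique' (h ▸ e1) e2 heq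
        have e4 := ihC hF.2.1 hF'.2.1 e3
        subst e4
        rw [ihr hF.2.2.1 hF'.2.2.1 h]
      · exfalso
        have e3 := List.suffix_of_suffix_length_le (h ▸ e2) e1 hlt.le
        obtain ⟨z, w, hz⟩ := exists_top e3 hlt
        have e4 := (decS_ext C (ltr x s.length :: v) s).mem ⟨z, hz.symm⟩ hl'.le
        refine no_ext (e := false) (w := w) hF' (v := v) (s := s) ?_ e4
        rw [vw_false, ← h]
        exact List.IsSuffix.trans ⟨z, hz.symm⟩ e1

theorem lkLe.ltr {n : ℕ} {v : List (Letter B)} (h : lkLe n v) (x : B × Bool) :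
    lkLe n (ltr x n :: v) := by
  rcases x with ⟨x, _ | _⟩
  · exact h.cons1
  · exact h.cons2 le_rfl

theorem decS_VS (F : BT (Lb B)) : ∀ (v : List (Letter B)) (s : Stk B), lkLe s.length v → VS s →
    VS (decS F v s) := by
  induction F with
  | nil => intro v s _ h; exact h
  | node a C r ihC ihr =>
    intro v s h1 h2
    rcases a with _ | x
    · exact ihr _ _ (h1.mono (by simp)) ⟨h1, h2⟩
    · exact ihr _ _ (h1.mono (decS_le _ _ _)) (ihC _ _ (h1.ltr x) h2)

theorem vw_VS {v : List (Letter B)} {s : Stk B} (e : Bool) (h1 : lkLe s.length v) (h : VS s) :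
    VS (vw e v s) := by
  cases e
  · exact h
  · exact ⟨h1, h⟩

end Part4



/-! ## Part 5: the recursive predicates -/

section Part5

variable {P B : Type} (bot : B) (δ : P → B → Op B → P → Prop)

def symT (τ : Ty P B) (op : Op B) (p p' : P) : Prop := ∃ a, τ.1.1 = some a ∧ δ p a op p'

def pushR (τ : Ty P B) (x : B × Bool) (p p' : P) : Prop :=
  x.1 ≠ bot ∧ symT δ τ (if x.2 then .push2 x.1 else .push1 x.1) p p'

def popR (x : B × Bool) (p p' : P) : Prop :=
  δ p x.1 .pop1 p' ∨ (x.2 = false ∧ δ p x.1 .collapse p')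

def atag (x : B × Bool) (b : Bool) : AL B := (x.1, if x.2 then some b else none)

/-- Descending from a forest. -/
def D : BT (Lb B) → Bool → Bool → Ty P B → P → P → Prop
  | .nil, e, b, τ, q, q' => if e then τ.1.2.1 b q q' else b = true ∧ q = q'
  | .node none _ r, e, b, τ, q, q' =>
    D r e false τ q q' ∨ ∃ p, D r e true (umT τ) q p ∧ τ.1.2.1 b p q'
  | .node (some x) C r, e, b, τ, q, q' =>
    D r e false τ q q' ∨
      ∃ p, D r e true (umT τ) q p ∧ D C false b (consT bot δ (atag x b) τ) p q'

def TT (x : B × Bool) (z : Prop) (X : Bool → P → P → Prop) (U : P → P → Prop) (p q' : P) : Prop :=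
  (z ∧ X false p q') ∨ ∃ p1 p2, X true p p1 ∧ popR δ x p1 p2 ∧ U p2 q'

/-- Ascending into a forest. -/
def uu : BT (Lb B) → Bool → Ty P B → P → P → Prop
  | .nil, e', τ, p, q' => e' = true ∧ τ.1.2.2 p q'
  | .node none _ r, e', τ, p, q' =>
    (r = .nil ∧ e' = false ∧ τ.1.2.2 p q') ∨
      ∃ p1 p2, τ.1.2.2 p p1 ∧ symT δ τ .clone2 p1 p2 ∧ uu r e' (umT τ) p2 q'
  | .node (some x) C r, e', τ, p, q' =>
    ∃ p1 p2, τ.1.2.2 p p1 ∧ pushR bot δ τ x p1 p2 ∧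
      TT δ x (r = .nil ∧ e' = false) (fun e'' => uu C e'' (consT bot δ (atag x true) τ))
        (uu r e' (umT τ)) p2 q'

/-- Moving from one forest to another one. -/
def rr : BT (Lb B) → BT (Lb B) → Bool → Bool → Ty P B → P → P → Prop
  | .nil, F', e, e', τ, q, q' => e = true ∧ uu bot δ F' e' τ q q'
  | .node none _ r, F', e, e', τ, q, q' =>
    (∃ p, D bot δ r e true (umT τ) q p ∧ uu bot δ F' e' τ p q') ∨
      (match F' with
        | .node none _ r' => rr r r' e e' (umT τ) q q'
        | _ => False)
  | .node (some x) C r, F', e, e', τ, q, q' =>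
    (∃ p, D bot δ r e true (umT τ) q p ∧
      ((∃ p1 p2, rr C .nil false true (consT bot δ (atag x true) τ) p p1 ∧ popR δ x p1 p2 ∧
          uu bot δ F' e' τ p2 q') ∨
        (match F' with
          | .node (some x') C' r' => x' = x ∧ TT δ x (r' = .nil ∧ e' = false)
              (fun e'' => rr C C' false e'' (consT bot δ (atag x true) τ))
              (uu bot δ r' e' (umT τ)) p q'
          | _ => False))) ∨
      (match F' with
        | .node (some x') C' r' => x' = x ∧
            ((C' = C ∧ rr r r' e e' (umT τ) q q') ∨
             (x.2 = false ∧ ∃ p1 p2, rr r .nil e true (umT τ) q p1 ∧ pushR bot δ (umT τ) x p1 p2 ∧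
                TT δ x (r' = .nil ∧ e' = false)
                  (fun e'' => rr C C' true e'' (consT bot δ (atag x true) τ))
                  (uu bot δ r' e' (umT τ)) p2 q'))
        | _ => False)

variable {bot δ}

theorem Ch.ne_nil {m : ℕ} {c c' : Cf P B} (h : Ch bot δ m c c') (hc : c.2 ≠ []) : c'.2 ≠ [] := by
  induction h with
  | zero => exact hc
  | step _ h _ ih => exact ih h.ne_nil

theorem Ch_le {m : ℕ} {c c' : Cf P B} (hc : c.2.length ≤ m) : Ch bot δ m c c' ↔ c = c' :=
  ⟨fun h => h.eq_of_le hc, fun h => h ▸ .zero hc⟩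

theorem Ch_one {w : List (Letter B)} {s y : Stk B} {q q' : P} (hy : y <:+ s) (hn : y ≠ []) :
    Ch bot δ s.length (q, w :: s) (q', y) ↔
      E bot δ (decide (y.length = s.length)) (w.map (tg y.length)) q q' := by
  constructor
  · intro h
    cases h with
    | zero h => have := hy.length_le; simp at h
    | @step _ d _ h1 h2 h3 =>
      obtain ⟨w', s', h4, h5, h6, h7⟩ := h2
      simp only [List.cons.injEq] at h4
      obtain ⟨rfl, rfl⟩ := h4
      have := h3.eq_of_le h5.length_le
      subst this
      exact h7
  · intro h
    exact .step (by simp) ⟨w, s, rfl, hy, hn, h⟩ (.zero hy.length_le)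

theorem ty_high {n k : ℕ} {w : List (Letter B)} (l : ℕ) (h : lkLe n w) (hk : n < k) :
    ty bot δ (w.map (tg k)) = umT (ty bot δ (w.map (tg l))) := by
  rw [map_tg_high' (l := l) h hk, ty_umW]

theorem um_atag (x : B × Bool) : um (atag x false) = atag x false := by
  rcases x with ⟨x, _ | _⟩ <;> rfl

theorem tg_ltr (x : B × Bool) (n k : ℕ) : tg k (ltr x n) = atag x (decide (k = n)) := by
  rcases x with ⟨x, _ | _⟩ <;> simp [ltr, tg, atag, eq_comm]

theorem D_false (F : BT (Lb B)) : ∀ (e : Bool) (w : List (AL B)) (q q' : P),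
    ¬ D bot δ F e false (ty bot δ (umW w)) q q' := by
  induction F with
  | nil =>
    intro e w q q' h
    cases e
    · simp [D] at h
    · exact E.not_false_um h
  | node a C r ihC ihr =>
    intro e w q q' h
    rcases a with _ | x
    · rcases h with h | ⟨p, -, h⟩
      · exact ihr _ _ _ _ h
      · exact E.not_false_um h
    · rcases h with h | ⟨p, -, h⟩
      · exact ihr _ _ _ _ h
      · rw [consT_ty, ← um_atag, ← umW_cons] at h
        exact ihC _ _ _ _ h

theorem D_iff (F : BT (Lb B)) : ∀ (_ : Can F) (e : Bool) (v : List (Letter B)) (s y : Stk B)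
    (q q' : P), y <:+ s → y ≠ [] → lkLe s.length v →
    (D bot δ F e (decide (y.length = s.length)) (ty bot δ (v.map (tg y.length))) q q' ↔
      Ch bot δ s.length (q, vw e v (decS F v s)) (q', y)) := by
  induction F with
  | nil =>
    intro _ e v s y q q' hy hn hl
    cases e
    · simp only [D, vw_false, decS, Bool.false_eq_true, if_false]
      rw [Ch_le (by simp)]
      simp only [decide_eq_true_eq, Prod.mk.injEq]
      constructor
      · rintro ⟨h1, rfl⟩; exact ⟨rfl, (hy.eq_of_length h1).symm⟩
      · rintro ⟨rfl, rfl⟩; exact ⟨rfl, rfl⟩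
    · simp only [D, vw_true, decS]
      rw [Ch_one hy hn]
      rfl
  | node a C r ihC ihr =>
    intro hF e v s y q q' hy hn hl
    have hyl := hy.length_le
    rcases a with _ | x
    · simp only [D, decS]
      have hsuf : v :: s <:+ vw e v (decS r v (v :: s)) :=
        ((decS_ext r v (v :: s)).vw (List.suffix_refl _) e).suffix
      have key : ∀ p, (D bot δ r e true (umT (ty bot δ (v.map (tg y.length)))) q p ↔
          Ch bot δ (s.length + 1) (q, vw e v (decS r v (v :: s))) (p, v :: s)) := by
        intro p
        have := ihr hF.2 e v (v :: s) (v :: s) q p (List.suffix_refl _) (by simp)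
          (hl.mono (by simp))
        rw [ty_high y.length hl (by simp), decide_eq_true rfl] at this
        exact this
      have key2 := ihr hF.2 e v (v :: s) y q q' (hy.trans (List.suffix_cons _ _)) hn
          (hl.mono (by simp))
      rw [decide_eq_false (by simp; omega)] at key2
      rw [Ch.comp_iff (Nat.le_succ s.length)]
      constructor
      · rintro (h | ⟨p, h1, h2⟩)
        · exact ⟨(q', y), key2.1 h, .zero hyl⟩
        · exact ⟨(p, v :: s), (key p).1 h1, (Ch_one hy hn).2 h2⟩
      · rintro ⟨⟨p, y1⟩, h1, h2⟩
        have h3 := List.suffix_of_suffix_length_le h1.suffix hsuf (by simpa using h1.length_le)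
        rcases List.suffix_cons_iff.1 h3 with h4 | h4
        · simp only at h4; subst h4
          exact Or.inr ⟨p, (key p).2 h1, (Ch_one hy hn).1 h2⟩
        · have := h2.eq_of_le h4.length_le
          rw [this] at h1
          exact Or.inl (key2.2 h1)
    · simp only [D, decS]
      have hlt := decS_lt hF.2.1 hF.1 (ltr x s.length :: v) s
      have hS1s := decS_suffix C (ltr x s.length :: v) s
      have hCi := fun p => ihC hF.2.1 false (ltr x s.length :: v) s y p q' hy hn (hl.ltr x)
      simp only [vw_false] at hCi
      generalize hS1 : decS C (ltr x s.length :: v) s = S1 at *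
      have hsuf : S1 <:+ vw e v (decS r v S1) :=
        ((decS_ext r v S1).vw (List.suffix_refl _) e).suffix
      have hl1 : lkLe S1.length v := hl.mono hlt.le
      have hS1n : S1 ≠ [] := by rintro rfl; simp at hlt
      have key : ∀ p, (D bot δ r e true (umT (ty bot δ (v.map (tg y.length)))) q p ↔
          Ch bot δ S1.length (q, vw e v (decS r v S1)) (p, S1)) := by
        intro p
        have := ihr hF.2.2.1 e v S1 S1 q p (List.suffix_refl _) hS1n hl1
        rw [ty_high y.length hl hlt, decide_eq_true rfl] at this
        exact this
      have key2 := ihr hF.2.2.1 e v S1 y q q' (hy.trans hS1s) hn hl1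
      rw [decide_eq_false (by omega)] at key2
      have hCi' : ∀ p, (D bot δ C false (decide (y.length = s.length)) (consT bot δ
          (atag x (decide (y.length = s.length))) (ty bot δ (v.map (tg y.length)))) p q' ↔
          Ch bot δ s.length (p, S1) (q', y)) := by
        intro p
        rw [← hCi p, consT_ty, List.map_cons, tg_ltr]
      rw [Ch.comp_iff hlt.le]
      constructor
      · rintro (h | ⟨p, h1, h2⟩)
        · exact ⟨(q', y), key2.1 h, .zero hyl⟩
        · exact ⟨(p, S1), (key p).1 h1, (hCi' p).1 h2⟩
      · rintro ⟨⟨p, y1⟩, h1, h2⟩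
        have h3 := List.suffix_of_suffix_length_le h1.suffix hsuf h1.length_le
        by_cases h4 : y1.length ≤ s.length
        · have := h2.eq_of_le h4
          rw [this] at h1
          exact Or.inl (key2.2 h1)
        · have h5 : y1 = S1 := by
            by_contra hne
            have h6 : y1.length ≠ S1.length := fun h => hne (h3.eq_of_length h)
            have := (ihr hF.2.2.1 e v S1 y1 q p h3 (by rintro rfl; simp at h4) hl1).2 h1
            rw [decide_eq_false h6, map_tg_high hl (by omega)] at this
            exact D_false _ _ _ _ _ this
          subst h5
          exact Or.inr ⟨p, (key p).2 h1, (hCi' p).1 |> fun _ => (hCi' p).2 h2⟩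

/-- First exits from a block only lead to its base, if they stay above `s`. -/
theorem D_block {r : BT (Lb B)} (hr : Can r) {e : Bool} {v : List (Letter B)} {n : ℕ} {S1 y : Stk B}
    {q p : P} (hl : lkLe n v) (hn : n < S1.length) (hy : n < y.length)
    (h : Ch bot δ S1.length (q, vw e v (decS r v S1)) (p, y)) (k : ℕ) :
    y = S1 ∧ D bot δ r e true (umT (ty bot δ (v.map (tg k)))) q p := by
  have hsuf : S1 <:+ vw e v (decS r v S1) :=
    ((decS_ext r v S1).vw (List.suffix_refl _) e).suffix
  have h3 := List.suffix_of_suffix_length_le h.suffix hsuf h.length_le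
  have hl1 := hl.mono hn.le
  have h7 := (D_iff r hr e v S1 y q p h3 (by rintro rfl; simp at hy) hl1).2 h
  have h5 : y = S1 := by
    by_contra hne
    have h6 : y.length ≠ S1.length := fun h => hne (h3.eq_of_length h)
    rw [decide_eq_false h6, map_tg_high hl (by omega)] at h7
    exact D_false _ _ _ _ _ h7
  subst h5
  rw [decide_eq_true rfl, ty_high k hl hy] at h7
  exact ⟨rfl, h7⟩

theorem D_block' {r : BT (Lb B)} (hr : Can r) {e : Bool} {v : List (Letter B)} {n : ℕ} {S1 : Stk B}
    {q p : P} (hl : lkLe n v) (hn : n < S1.length) {k : ℕ}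
    (h : D bot δ r e true (umT (ty bot δ (v.map (tg k)))) q p) :
    Ch bot δ S1.length (q, vw e v (decS r v S1)) (p, S1) := by
  apply (D_iff r hr e v S1 S1 q p (List.suffix_refl _) (by rintro rfl; simp at hn) (hl.mono hn.le)).1
  rwa [decide_eq_true rfl, ty_high k hl hn]

/-! ### Single steps -/

theorem MCst_push {n : ℕ} {x : B × Bool} {v : List (Letter B)} {p p' : P} (k : ℕ)
    (hx : k = n ∨ x.2 = false) :
    MCst bot δ n (p, v) (p', ltr x k :: v) ↔ pushR bot δ (ty bot δ (v.map (tg n))) x p p' := by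
  constructor
  · intro h
    generalize hw : ltr x k :: v = w at h
    cases h with
    | @push1 a u _ _ y h1 h2 =>
      simp only [List.cons.injEq, and_true] at hw
      rcases x with ⟨x, _ | _⟩ <;> simp [ltr] at hw
      subst hw
      exact ⟨h1, _, rfl, h2⟩
    | @push2 a u _ _ y h1 h2 =>
      simp only [List.cons.injEq, and_true] at hw
      rcases x with ⟨x, _ | _⟩ <;> simp [ltr] at hw
      obtain ⟨rfl, -⟩ := hw
      exact ⟨h1, _, rfl, h2⟩
    | pop1 h1 h2 => have := congrArg List.length hw; simp at this; omega
    | col1 h1 h2 => have := congrArg List.length hw; simp at this; omega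
    | loop h1 h2 => have := congrArg List.length hw; simp at this
  · rintro ⟨h1, a, h2, h3⟩
    rcases v with _ | ⟨b, v⟩
    · simp [ty, beta] at h2
    simp only [ty, beta, List.map_cons, List.head?_cons, Option.map_some, Option.some.injEq] at h2
    subst h2
    rcases x with ⟨x, _ | _⟩
    · exact .push1 h1 h3
    · rcases hx with rfl | hx
      · exact .push2 h1 h3
      · simp at hx

theorem MCst_pop {n k : ℕ} {x : B × Bool} {v : List (Letter B)} {p p' : P} (hv : v ≠ []) :
    MCst bot δ n (p, ltr x k :: v) (p', v) ↔ popR δ x p p' := by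
  constructor
  · intro h
    generalize hw : ltr x k :: v = w at h
    cases h with
    | @push1 a u _ _ y h1 h2 => have := congrArg List.length hw; simp at this; omega
    | @push2 a u _ _ y h1 h2 => have := congrArg List.length hw; simp at this; omega
    | pop1 h1 h2 =>
      simp only [List.cons.injEq, and_true] at hw
      subst hw
      left
      rw [tg_ltr] at h2; exact h2
    | col1 h1 h2 h3 =>
      simp only [List.cons.injEq, and_true] at hw
      subst hw
      right
      rw [tg_ltr] at h2 h3
      refine ⟨?_, h3⟩
      rcases x with ⟨x, _ | _⟩
      · rfl
      · simp [atag] at h2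
    | loop h1 h2 => have := congrArg List.length hw; simp at this
  · rintro (h | ⟨h1, h2⟩)
    · exact .pop1 hv (by rw [tg_ltr]; exact h)
    · refine .col1 hv ?_ (by rw [tg_ltr]; exact h2)
      rw [tg_ltr]; simp [atag, h1]

theorem symT_clone {n : ℕ} {v : List (Letter B)} {p p' : P} :
    symT δ (ty bot δ (v.map (tg n))) .clone2 p p' ↔
      ∃ a u, v = a :: u ∧ δ p (symOf a) .clone2 p' := by
  constructor
  · rintro ⟨a, h2, h3⟩
    rcases v with _ | ⟨b, v⟩
    · simp [ty, beta] at h2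
    simp only [ty, beta, List.map_cons, List.head?_cons, Option.map_some, Option.some.injEq] at h2
    subst h2
    exact ⟨b, v, rfl, by rwa [tg_fst] at h3⟩
  · rintro ⟨a, u, rfl, h⟩
    refine ⟨_, rfl, by rwa [tg_fst]⟩

end Part5



/-! ## Part 6: correctness of the recursive predicates -/

section Part6

variable {P B : Type} {bot : B} {δ : P → B → Op B → P → Prop}

/-- Splitting a run at the last visit of a given width. -/
theorem G.split' {m : ℕ} {q q' : P} {X z Y : Stk B} {w1 : List (Letter B)} (hm : m ≤ Y.length)
    (h : G bot δ m (q, X) (q', z ++ w1 :: Y)) (hv : VS X) (hn : ¬ w1 :: Y <:+ X) :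
    ∃ p1 w0 p2, G bot δ m (q, X) (p1, w0 :: Y) ∧ MC bot δ Y.length (p1, w0) (p2, w1) ∧
      Tail bot δ p2 w1 Y q' z ∧ (w0 :: Y <:+ X ∨ (m < Y.length ∧ ∃ Y', Y = w0 :: Y')) := by
  rcases G.split hm h hv with ⟨h1, -⟩ | ⟨p1, w0, p2, h1, h2, h3⟩
  · exact absurd h1 hn
  · refine ⟨p1, w0, p2, ?_, h1, h2, ?_⟩
    · rcases h3 with ⟨rfl, rfl⟩ | ⟨h3, h4⟩ | ⟨h3, p0, a, u, Y', h4, h5, h6, h7⟩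
      · exact .refl (by simp; omega)
      · exact h4.sound hv (by simp; omega)
      · refine h7.trans ?_
        rw [h4] at h5 ⊢
        rw [h5]
        rw [h5] at h3
        exact .single (.clone h6) h3 (by simp at h3 ⊢; omega)
    · rcases h3 with ⟨rfl, rfl⟩ | ⟨h3, h4⟩ | ⟨h3, p0, a, u, Y', h4, h5, h6, h7⟩
      · exact Or.inl (List.suffix_refl _)
      · exact Or.inl h4.suffix
      · exact Or.inr ⟨h3, Y', h5⟩

theorem out_iff {m : ℕ} {q q' : P} {X Y Z : Stk B} {w1 v : List (Letter B)} {x : B × Bool} {k : ℕ}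
    (hm : m ≤ Y.length) (hv : VS X) (hvn : v ≠ [])
    (hZ : w1 :: Y <:+ Z) (hw1 : ¬ ltr x k :: v <:+ w1)
    (h0 : ∀ w, w :: Y <:+ X → ltr x k :: v <:+ w)
    (h1 : m < Y.length → ∀ w Y', Y = w :: Y' → ltr x k :: v <:+ w)
    (h : G bot δ m (q, X) (q', Z)) :
    ∃ p1 p2, G bot δ m (q, X) (p1, (ltr x k :: v) :: Y) ∧ popR δ x p1 p2 ∧
      G bot δ Y.length (p2, v :: Y) (q', Z) := by
  obtain ⟨z, rfl⟩ := hZ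
  obtain ⟨p1, w0, p2, h2, h3, h4, h5⟩ := G.split' hm h hv (fun h => hw1 (h0 _ h))
  have h6 : ltr x k :: v <:+ w0 := by
    rcases h5 with h5 | ⟨h5, Y', h6⟩
    · exact h0 _ h5
    · exact h1 h5 _ _ h6
  obtain ⟨r, r', h7, h8, h9⟩ := Mrun.crossOut h3 h6 hw1
  have hv1 : VS (w0 :: Y) := h2.valid hv
  have a1 := MC.sound h7 hv1
  have a2 := MCst.sound h8 a1.2.1
  have a3 := MC.sound h9 (a2.valid a1.2)
  exact ⟨r, r', h2.trans (a1.1.mono hm), (MCst_pop hvn).1 h8, a3.1.trans h4.sound⟩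

theorem out_comp {m : ℕ} {q q' p1 p2 : P} {X Y Z : Stk B} {v : List (Letter B)} {x : B × Bool}
    {k : ℕ} (hm : m ≤ Y.length) (hv : VS X) (hvn : v ≠ [])
    (h1 : G bot δ m (q, X) (p1, (ltr x k :: v) :: Y)) (h2 : popR δ x p1 p2)
    (h3 : G bot δ Y.length (p2, v :: Y) (q', Z)) : G bot δ m (q, X) (q', Z) := by
  have hv1 : VS ((ltr x k :: v) :: Y) := h1.valid hv
  exact (h1.trans ((MCst.sound ((MCst_pop hvn).2 h2) hv1.1).mono hm)).trans (h3.mono hm)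

theorem in_iff {m : ℕ} {q q' : P} {X Y Z : Stk B} {w1 v : List (Letter B)} {a : Letter B}
    (hm : m ≤ Y.length) (hv : VS X)
    (hZ : w1 :: Y <:+ Z) (hw1 : a :: v <:+ w1)
    (h0 : ∀ w, w :: Y <:+ X → ¬ a :: v <:+ w)
    (h1 : m < Y.length → ∀ w Y', Y = w :: Y' → ¬ a :: v <:+ w)
    (h : G bot δ m (q, X) (q', Z)) :
    ∃ p1 p2, G bot δ m (q, X) (p1, v :: Y) ∧ MCst bot δ Y.length (p1, v) (p2, a :: v) ∧
      G bot δ Y.length (p2, (a :: v) :: Y) (q', Z) := by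
  obtain ⟨z, rfl⟩ := hZ
  obtain ⟨p1, w0, p2, h2, h3, h4, h5⟩ := G.split' hm h hv (fun h => h0 _ h hw1)
  have h6 : ¬ a :: v <:+ w0 := by
    rcases h5 with h5 | ⟨h5, Y', h6⟩
    · exact h0 _ h5
    · exact h1 h5 _ _ h6
  obtain ⟨r, r', h7, h8, h9⟩ := Mrun.crossIn h3 h6 hw1
  have hv1 : VS (w0 :: Y) := h2.valid hv
  have a1 := MC.sound h7 hv1
  have a2 := MCst.sound h8 a1.2.1
  have a3 := MC.sound h9 (a2.valid a1.2)
  exact ⟨r, r', h2.trans (a1.1.mono hm), h8, a3.1.trans h4.sound⟩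

theorem base_iff {q q' : P} {s z : Stk B} {v : List (Letter B)} (hv : VS (v :: s)) :
    G bot δ s.length (q, v :: s) (q', z ++ v :: s) ↔
      ∃ p1, LL bot δ (v.map (tg s.length)) q p1 ∧ Tail bot δ p1 v s q' z := by
  constructor
  · intro h
    rcases G.split le_rfl h hv with ⟨-, h1⟩ | ⟨p1, w0, p2, h1, h2, h3⟩
    · have := h1.left; simp at this
    · rcases h3 with ⟨h3, rfl⟩ | ⟨h3, h4⟩ | ⟨h3, -⟩
      · simp only [List.cons.injEq, and_true] at h3
        subst h3
        exact ⟨p2, MC_loop_iff.1 h1, h2⟩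
      · simp at h3
      · simp at h3
  · rintro ⟨p1, h1, h2⟩
    exact (MC.sound (MC_loop_iff.2 h1) hv).1.trans h2.sound

theorem loop_iff {q q' : P} {s : Stk B} {v : List (Letter B)} (hv : VS (v :: s)) :
    G bot δ s.length (q, v :: s) (q', v :: s) ↔ LL bot δ (v.map (tg s.length)) q q' := by
  refine (base_iff (z := []) hv).trans ?_
  constructor
  · rintro ⟨p1, h1, ⟨-, rfl⟩ | ⟨p3, a, u, -, -, h⟩⟩
    · exact h1
    · have := h.right; simp at this
  · intro h
    exact ⟨q', h, Or.inl ⟨rfl, rfl⟩⟩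

theorem vw_decS_eq {r : BT (Lb B)} (hr : Can r) {e : Bool} {v : List (Letter B)} {s : Stk B}
    (h : (vw e v (decS r v s)).length ≤ s.length) : r = .nil ∧ e = false := by
  rw [vw_length] at h
  constructor
  · by_contra hn
    have := decS_lt hr hn v s
    omega
  · have := decS_le r v s
    cases e
    · rfl
    · simp at h; omega

theorem TT_iff {x : B × Bool} {C r : BT (Lb B)} (hF : Can (.node (some x) C r))
    {v : List (Letter B)} {s X0 : Stk B} {e' : Bool} (hvn : v ≠ [])
    (hX : Ext (ltr x s.length :: v) s X0) (hV : VS X0)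
    {XX : Bool → P → P → Prop} {U : P → P → Prop} {p q' : P}
    (hXX : ∀ e'' p', XX e'' p p' ↔ G bot δ s.length (p, X0)
      (p', vw e'' (ltr x s.length :: v) (decS C (ltr x s.length :: v) s)))
    (hU : ∀ p2, U p2 q' ↔ G bot δ (decS C (ltr x s.length :: v) s).length
      (p2, v :: decS C (ltr x s.length :: v) s)
      (q', vw e' v (decS r v (decS C (ltr x s.length :: v) s)))) :
    TT δ x (r = .nil ∧ e' = false) XX U p q' ↔
      G bot δ s.length (p, X0) (q', vw e' v (decS r v (decS C (ltr x s.length :: v) s))) := by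
  have hne := fun (w : List (Letter B)) => no_ext hF (e := e') (v := v) (s := s) (w := w)
  have hlt := decS_lt hF.2.1 hF.1 (ltr x s.length :: v) s
  have hext := decS_ext C (ltr x s.length :: v) s
  generalize hS1 : decS C (ltr x s.length :: v) s = S1 at *
  constructor
  · rintro (⟨⟨rfl, rfl⟩, h⟩ | ⟨p1, p2, h1, h2, h3⟩)
    · exact (hXX _ _).1 h
    · exact out_comp hlt.le hV hvn ((hXX _ _).1 h1) h2 ((hU _).1 h3)
  · intro h
    by_cases hz : r = .nil ∧ e' = false
    · refine Or.inl ⟨hz, (hXX _ _).2 ?_⟩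
      obtain ⟨rfl, rfl⟩ := hz
      exact h
    · right
      have hsuf : S1 <:+ vw e' v (decS r v S1) :=
        ((decS_ext r v S1).vw (List.suffix_refl _) e').suffix
      have hl : S1.length < (vw e' v (decS r v S1)).length := by
        by_contra hc
        exact hz (vw_decS_eq hF.2.2.1 (not_lt.1 hc))
      obtain ⟨z, w1, hz1⟩ := exists_top hsuf hl
      have hw1 : w1 :: S1 <:+ vw e' v (decS r v S1) := ⟨z, hz1.symm⟩
      obtain ⟨p1, p2, a1, a2, a3⟩ := out_iff (x := x) (k := s.length) hlt.le hV hvn hw1 (hne _ hw1)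
        (fun w hw => hX.mem hw hlt.le)
        (fun _ w Y' hY => hext.mem (T := Y') (by rw [hY]) (by
          have := congrArg List.length hY; simp at this; omega)) h
      exact ⟨p1, p2, (hXX _ _).2 a1, a2, (hU _).2 a3⟩

theorem ty_ltr (x : B × Bool) (v : List (Letter B)) (n : ℕ) :
    ty bot δ ((ltr x n :: v).map (tg n)) =
      consT bot δ (atag x true) (ty bot δ (v.map (tg n))) := by
  rw [consT_ty, List.map_cons, tg_ltr, decide_eq_true rfl]

theorem uu_iff (F : BT (Lb B)) : ∀ (_ : Can F) (e' : Bool) (v : List (Letter B)) (s : Stk B)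
    (p q' : P), v ≠ [] → lkLe s.length v → VS s →
    (uu bot δ F e' (ty bot δ (v.map (tg s.length))) p q' ↔
      G bot δ s.length (p, v :: s) (q', vw e' v (decS F v s))) := by
  induction F with
  | nil =>
    intro _ e' v s p q' hvn hl hs
    cases e'
    · simp only [uu, decS, vw_false, Bool.false_eq_true, false_and, false_iff]
      intro h; have := h.right; simp at this
    · simp only [uu, decS, vw_true, true_and]
      rw [loop_iff ⟨hl, hs⟩]; rfl
  | node a C r ihC ihr =>
    intro hF e' v s p q' hvn hl hs
    rcases a with _ | x
    · simp only [uu, decS]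
      have hsuf : v :: s <:+ vw e' v (decS r v (v :: s)) :=
        ((decS_ext r v (v :: s)).vw (List.suffix_refl _) e').suffix
      have hr := fun p => ihr hF.2 e' v (v :: s) p q' hvn (hl.mono (by simp)) ⟨hl, hs⟩
      rw [ty_high s.length hl (by simp)] at hr
      have hlen : (vw e' v (decS r v (v :: s))).length ≤ (v :: s).length → r = .nil ∧ e' = false :=
        vw_decS_eq hF.2
      have hlen2 : r = .nil ∧ e' = false → vw e' v (decS r v (v :: s)) = v :: s := by
        rintro ⟨rfl, rfl⟩; rfl
      generalize vw e' v (decS r v (v :: s)) = Z at *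
      obtain ⟨z, rfl⟩ := hsuf
      rw [base_iff ⟨hl, hs⟩]
      constructor
      · rintro (⟨h1, h2, h3⟩ | ⟨p1, p2, h1, h2, h3⟩)
        · have := hlen2 ⟨h1, h2⟩
          exact ⟨q', h3, Or.inl ⟨by simpa using this, rfl⟩⟩
        · obtain ⟨a, u, h4, h5⟩ := symT_clone.1 h2
          exact ⟨p1, h1, Or.inr ⟨p2, a, u, h4, h5, (hr _).1 h3⟩⟩
      · rintro ⟨p1, h1, ⟨rfl, rfl⟩ | ⟨p3, a, u, h2, h3, h4⟩⟩
        · obtain ⟨h5, h6⟩ := hlen le_rfl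
          exact Or.inl ⟨h5, h6, h1⟩
        · exact Or.inr ⟨p1, p3, h1, symT_clone.2 ⟨a, u, h2, h3⟩, (hr _).2 h4⟩
    · have hla := hl.ltr x
      have hlt := decS_lt hF.2.1 hF.1 (ltr x s.length :: v) s
      have hl1 := hl.mono hlt.le
      have hVS1 := decS_VS C _ s hla hs
      have key : ∀ p, TT δ x (r = .nil ∧ e' = false)
          (fun e'' => uu bot δ C e'' (consT bot δ (atag x true) (ty bot δ (v.map (tg s.length)))))
          (uu bot δ r e' (umT (ty bot δ (v.map (tg s.length))))) p q' ↔
          G bot δ s.length (p, (ltr x s.length :: v) :: s)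
            (q', vw e' v (decS r v (decS C (ltr x s.length :: v) s))) := by
        intro p
        apply TT_iff hF hvn ((Ext.refl _ s).cons (List.suffix_refl _)) ⟨hla, hs⟩
        · intro e'' p'
          rw [← ihC hF.2.1 e'' _ s p p' (by simp) hla hs, ty_ltr]
        · intro p2
          rw [← ihr hF.2.2.1 e' v _ p2 q' hvn hl1 hVS1, ty_high s.length hl hlt]
      simp only [uu, decS]
      constructor
      · rintro ⟨p1, p2, h1, h2, h3⟩
        have a1 := (loop_iff (s := s) ⟨hl, hs⟩).2 h1
        have a2 := MCst.sound ((MCst_push s.length (Or.inl rfl)).2 h2) hl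
        exact (a1.trans a2).trans ((key _).1 h3)
      · intro h
        obtain ⟨z, w1, hz⟩ := exists_top (decS_suffix C (ltr x s.length :: v) s) hlt
        have hw1 := (decS_ext C (ltr x s.length :: v) s).mem ⟨z, hz.symm⟩ le_rfl
        have hw2 : w1 :: s <:+ vw e' v (decS r v (decS C (ltr x s.length :: v) s)) :=
          List.IsSuffix.trans ⟨z, hz.symm⟩
            ((decS_ext r v _).vw (List.suffix_refl _) e').suffix
        obtain ⟨p1, p2, a1, a2, a3⟩ := in_iff le_rfl (show VS (v :: s) from ⟨hl, hs⟩) hw2 hw1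
          (fun w hw => by
            have := hw.eq_of_length (by simp)
            simp only [List.cons.injEq, and_true] at this
            subst this; exact not_cons_suffix _ _)
          (fun h => absurd h (lt_irrefl _)) h
        exact ⟨p1, p2, (loop_iff ⟨hl, hs⟩).1 a1, (MCst_push s.length (Or.inl rfl)).1 a2,
          (key _).2 a3⟩

theorem push_back {n k : ℕ} {x : B × Bool} {v : List (Letter B)} {p p' : P} (hk : k ≠ n)
    (h : MCst bot δ n (p, v) (p', ltr x k :: v)) : x.2 = false := by
  generalize hw : ltr x k :: v = w at h
  cases h with
  | @push1 a u _ _ y h1 h2 =>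
    simp only [List.cons.injEq, and_true] at hw
    rcases x with ⟨x, _ | _⟩ <;> simp [ltr] at hw
    rfl
  | @push2 a u _ _ y h1 h2 =>
    simp only [List.cons.injEq, and_true] at hw
    rcases x with ⟨x, _ | _⟩ <;> simp [ltr] at hw
    exact absurd hw.2 hk
  | pop1 h1 h2 => have := congrArg List.length hw; simp at this; omega
  | col1 h1 h2 => have := congrArg List.length hw; simp at this; omega
  | loop h1 h2 => have := congrArg List.length hw; simp at this

theorem rr_none (C r F' : BT (Lb B)) (e e' : Bool) (τ : Ty P B) (q q' : P) :
    rr bot δ (.node none C r) F' e e' τ q q' ↔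
    (∃ p, D bot δ r e true (umT τ) q p ∧ uu bot δ F' e' τ p q') ∨
      (match F' with
        | .node none _ r' => rr bot δ r r' e e' (umT τ) q q'
        | _ => False) := by
  rcases F' with _ | ⟨_ | x', C', r'⟩ <;> simp [rr]

theorem rr_some (x : B × Bool) (C r F' : BT (Lb B)) (e e' : Bool) (τ : Ty P B) (q q' : P) :
    rr bot δ (.node (some x) C r) F' e e' τ q q' ↔
    (∃ p, D bot δ r e true (umT τ) q p ∧
      ((∃ p1 p2, rr bot δ C .nil false true (consT bot δ (atag x true) τ) p p1 ∧ popR δ x p1 p2 ∧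
          uu bot δ F' e' τ p2 q') ∨
        (match F' with
          | .node (some x') C' r' => x' = x ∧ TT δ x (r' = .nil ∧ e' = false)
              (fun e'' => rr bot δ C C' false e'' (consT bot δ (atag x true) τ))
              (uu bot δ r' e' (umT τ)) p q'
          | _ => False))) ∨
      (match F' with
        | .node (some x') C' r' => x' = x ∧
            ((C' = C ∧ rr bot δ r r' e e' (umT τ) q q') ∨
             (x.2 = false ∧ ∃ p1 p2, rr bot δ r .nil e true (umT τ) q p1 ∧
                pushR bot δ (umT τ) x p1 p2 ∧
                TT δ x (r' = .nil ∧ e' = false)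
                  (fun e'' => rr bot δ C C' true e'' (consT bot δ (atag x true) τ))
                  (uu bot δ r' e' (umT τ)) p2 q'))
        | _ => False) := by
  rcases F' with _ | ⟨_ | x', C', r'⟩ <;> simp only [rr]

theorem rr_iff (F : BT (Lb B)) : ∀ (F' : BT (Lb B)) (_ : Can F) (_ : Can F') (e e' : Bool)
    (v : List (Letter B)) (s : Stk B) (q q' : P), v ≠ [] → lkLe s.length v → VS s →
    (rr bot δ F F' e e' (ty bot δ (v.map (tg s.length))) q q' ↔
      G bot δ s.length (q, vw e v (decS F v s)) (q', vw e' v (decS F' v s))) := by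
  induction F with
  | nil =>
    intro F' _ hF' e e' v s q q' hvn hl hs
    cases e
    · simp only [rr, decS, vw_false, Bool.false_eq_true, false_and, false_iff]
      intro h; have := h.left; simp at this
    · simp only [rr, decS, vw_true, true_and]
      exact uu_iff F' hF' e' v s q q' hvn hl hs
  | node a C r ihC ihr =>
    intro F' hF hF' e e' v s q q' hvn hl hs
    have hVX : VS (vw e v (decS (.node a C r) v s)) :=
      vw_VS e (hl.mono (decS_le _ v s)) (decS_VS _ _ _ hl hs)
    have hU := fun p => uu_iff F' hF' (bot := bot) (δ := δ) e' v s p q' hvn hl hs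
    rcases a with _ | x
    · have hsuf : v :: s <:+ vw e v (decS r v (v :: s)) :=
        ((decS_ext r v (v :: s)).vw (List.suffix_refl _) e).suffix
      simp only [decS] at hVX
      rw [rr_none]
      simp only [decS]
      rw [G.comp_iff' (Nat.le_succ s.length) hVX, or_comm]
      apply or_congr
      · rcases F' with _ | ⟨_ | x', C', r'⟩
        · simp only [false_iff]
          intro h; have := h.right; simp [decS, vw_length] at this
          split at this <;> omega
        · simp only [decS]
          have := ihr r' hF.2 hF'.2 e e' v (v :: s) q q' hvn (hl.mono (by simp)) ⟨hl, hs⟩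
          rw [ty_high s.length hl (by simp)] at this
          exact this
        · simp only [false_iff]
          intro h
          have hr := h.right
          obtain ⟨z, w1, hz⟩ := exists_top (((decS_ext (.node (some x') C' r') v s).vw
            (List.suffix_refl _) e').suffix) (lt_trans (Nat.lt_succ_self _) hr)
          have hw1 : w1 :: s <:+ vw e' v (decS (.node (some x') C' r') v s) := ⟨z, hz.symm⟩
          have h1 := G.suffix (T := w1 :: s) h hw1
          have h2 := suffix_unique h1 hsuf
          have h3 := HW_of hF' hw1
          subst h2
          exact not_cons_suffix _ _ h3
      · constructor
        · rintro ⟨p, h1, h2⟩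
          exact ⟨(p, v :: s), D_block' (S1 := v :: s) hF.2 hl (by simp) h1, (hU p).1 h2⟩
        · rintro ⟨⟨p, y⟩, h1, h2⟩
          obtain ⟨rfl, h3⟩ := D_block (S1 := v :: s) hF.2 hl (by simp) h2.left h1 s.length
          exact ⟨p, h3, (hU p).2 h2⟩
    · have hla := hl.ltr x
      have hlt := decS_lt hF.2.1 hF.1 (ltr x s.length :: v) s
      have hl1 := hl.mono hlt.le
      have hVS1 := decS_VS C _ s hla hs
      have hext := decS_ext C (ltr x s.length :: v) s
      have hne := fun (w : List (Letter B)) => no_ext hF (e := e) (v := v) (s := s) (w := w)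
      have hR := fun F'' (hF'' : Can F'') e'' p => ihr (F'') hF.2.2.1 hF'' e e'' v
        (decS C (ltr x s.length :: v) s) q p hvn hl1 hVS1
      simp only [decS] at hVX
      have hCC := fun F'' (hF'' : Can F'') e1 e2 p1 p2 =>
        ihC F'' hF.2.1 hF'' e1 e2 (ltr x s.length :: v) s p1 p2 (by simp) hla hs
      simp only [ty_ltr] at hCC
      have hinj : ∀ C', Can C' → decS C (ltr x s.length :: v) s = decS C' (ltr x s.length :: v) s →
        C = C' := fun C' hC' h => decS_inj hF.2.1 hC' h
      rw [ty_high s.length hl hlt] at hR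
      rw [rr_some]
      simp only [decS]
      generalize hS1 : decS C (ltr x s.length :: v) s = S1 at *
      have hsuf : S1 <:+ vw e v (decS r v S1) :=
        ((decS_ext r v S1).vw (List.suffix_refl _) e).suffix
      -- the two kinds of `TT`
      have keyT : ∀ (C' r' : BT (Lb B)), F' = .node (some x) C' r' → ∀ (eX : Bool) p,
          TT δ x (r' = .nil ∧ e' = false)
              (fun e'' => rr bot δ C C' eX e''
                (consT bot δ (atag x true) (ty bot δ (v.map (tg s.length)))))
              (uu bot δ r' e' (umT (ty bot δ (v.map (tg s.length))))) p q' ↔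
            G bot δ s.length (p, vw eX (ltr x s.length :: v) S1)
              (q', vw e' v (decS F' v s)) := by
        rintro C' r' rfl eX p
        have hlt' := decS_lt hF'.2.1 hF'.1 (ltr x s.length :: v) s
        apply TT_iff hF' hvn (hext.vw (List.suffix_refl _) eX)
          (vw_VS eX (hla.mono hlt.le) hVS1)
        · intro e'' p'
          rw [← hCC _ hF'.2.1]
        · intro p2
          rw [← uu_iff r' hF'.2.2.1 e' v _ p2 q' hvn (hl.mono hlt'.le)
            (decS_VS C' _ s hla hs), ty_high s.length hl hlt']
      -- from the end of the first block
      have keyA : ∀ p, ((∃ p1 p2, rr bot δ C .nil false true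
            (consT bot δ (atag x true) (ty bot δ (v.map (tg s.length)))) p p1 ∧ popR δ x p1 p2 ∧
            uu bot δ F' e' (ty bot δ (v.map (tg s.length))) p2 q') ∨
          (match (generalizing := false) F' with
            | .node (some x') C' r' => x' = x ∧ TT δ x (r' = .nil ∧ e' = false)
                (fun e'' => rr bot δ C C' false e''
                  (consT bot δ (atag x true) (ty bot δ (v.map (tg s.length)))))
                (uu bot δ r' e' (umT (ty bot δ (v.map (tg s.length))))) p q'
            | _ => False)) ↔ G bot δ s.length (p, S1) (q', vw e' v (decS F' v s)) := by
        intro p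
        constructor
        · rintro (⟨p1, p2, h1, h2, h3⟩ | h)
          · exact out_comp le_rfl hVS1 hvn ((hCC .nil trivial false true _ _).1 h1) h2 ((hU _).1 h3)
          · rcases F' with _ | ⟨_ | x', C', r'⟩
            · exact h.elim
            · exact h.elim
            · obtain ⟨rfl, h⟩ := h
              exact (keyT C' r' rfl false p).1 h
        · intro h
          obtain ⟨z, w1, hz⟩ := exists_top (((decS_ext F' v s).vw
            (List.suffix_refl _) e').suffix) h.right
          have hw1 : w1 :: s <:+ vw e' v (decS F' v s) := ⟨z, hz.symm⟩
          by_cases hw : ltr x s.length :: v <:+ w1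
          · right
            obtain ⟨C', r', rfl⟩ := hd_some ((HW_of hF' hw1).hd_eq hw)
            exact ⟨rfl, (keyT C' r' rfl false p).2 h⟩
          · left
            obtain ⟨p1, p2, a1, a2, a3⟩ := out_iff (x := x) (k := s.length) le_rfl hVS1 hvn hw1 hw
              (fun w hw => hext.mem hw le_rfl) (fun h => absurd h (lt_irrefl _)) h
            exact ⟨p1, p2, (hCC .nil trivial false true _ _).2 a1, a2, (hU _).2 a3⟩
      rw [G.comp_iff' hlt.le hVX]
      constructor
      · rintro (⟨p, h1, h2⟩ | h)
        · exact Or.inr ⟨(p, S1), D_block' hF.2.2.1 hl hlt h1, (keyA p).1 h2⟩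
        · rcases F' with _ | ⟨_ | x', C', r'⟩
          · exact h.elim
          · exact h.elim
          · obtain ⟨rfl, h⟩ := h
            rcases h with ⟨rfl, h⟩ | ⟨hx, p1, p2, h1, h2, h3⟩
            · left
              simp only [decS, hS1]
              exact (hR r' hF'.2.2.1 e' q').1 h
            · rw [← G.comp_iff' hlt.le hVX]
              have a1 := (hR .nil trivial true p1).1 h1
              rw [← ty_high s.length hl hlt] at h2
              have a2 := MCst.sound ((MCst_push s.length (Or.inr hx)).2 h2) hl1
              exact ((a1.trans a2).mono hlt.le).trans ((keyT C' r' rfl true p2).1 h3)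
      · rintro (h | ⟨⟨p, y⟩, h1, h2⟩)
        · right
          have hS1Z : S1 <:+ vw e' v (decS F' v s) := by
            have hr := h.right
            have e1 : ((vw e' v (decS F' v s)).drop
                ((vw e' v (decS F' v s)).length - S1.length)).length = S1.length := by
              simp only [List.length_drop]; simp only at hr; omega
            have e2 := List.drop_suffix ((vw e' v (decS F' v s)).length - S1.length)
              (vw e' v (decS F' v s))
            have e3 := G.suffix (T := (vw e' v (decS F' v s)).drop
                ((vw e' v (decS F' v s)).length - S1.length)) (by rw [e1]; exact h) e2
            rw [← suffix_unique' e3 hsuf e1]; exact e2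
          obtain ⟨z, w1, hz⟩ := exists_top hext.suffix hlt
          have hw1 : w1 :: s <:+ S1 := ⟨z, hz.symm⟩
          have hw2 := hext.mem hw1 le_rfl
          obtain ⟨C', r', rfl⟩ := hd_some ((HW_of hF' (hw1.trans hS1Z)).hd_eq hw2)
          refine ⟨rfl, ?_⟩
          have hlt' := decS_lt hF'.2.1 hF'.1 (ltr x s.length :: v) s
          have hext' := decS_ext C' (ltr x s.length :: v) s
          have hne' := fun (w : List (Letter B)) => no_ext hF' (e := e') (v := v) (s := s) (w := w)
          have hinj' := hinj C' hF'.2.1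
          have hkT := keyT C' r' rfl
          simp only [decS] at h hS1Z hkT
          generalize hS1' : decS C' (ltr x s.length :: v) s = S1' at *
          have hsuf' : S1' <:+ vw e' v (decS r' v S1') :=
            ((decS_ext r' v S1').vw (List.suffix_refl _) e').suffix
          rcases lt_trichotomy S1.length S1'.length with hc | hc | hc
          · right
            have e3 := List.suffix_of_suffix_length_le hS1Z hsuf' hc.le
            obtain ⟨z, w, hz⟩ := exists_top e3 hc
            have e4 : w :: S1 <:+ S1' := ⟨z, hz.symm⟩
            obtain ⟨p1, p2, a1, a2, a3⟩ := in_iff le_rfl hVX (e4.trans hsuf')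
              (hext'.mem e4 hlt.le) hne (fun h => absurd h (lt_irrefl _)) h
            have hx := push_back (by omega) a2
            refine ⟨hx, p1, p2, (hR .nil trivial true p1).2 a1, ?_,
              (hkT true p2).2 (a3.mono hlt.le)⟩
            rw [← ty_high s.length hl hlt]
            exact (MCst_push s.length (Or.inr hx)).1 a2
          · left
            have e3 := suffix_unique' hS1Z hsuf' hc
            refine ⟨(hinj' e3).symm, (hR r' hF'.2.2.1 e' q').2 ?_⟩
            rw [← e3] at h
            exact h
          · exfalso
            have e3 := List.suffix_of_suffix_length_le hsuf' hS1Z hc.le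
            obtain ⟨z, w, hz⟩ := exists_top e3 hc
            have e4 : w :: S1' <:+ S1 := ⟨z, hz.symm⟩
            exact hne' _ (e4.trans hS1Z) (hext.mem e4 hlt'.le)
        · left
          obtain ⟨rfl, h3⟩ := D_block hF.2.2.1 hl hlt h2.left h1 s.length
          exact ⟨p, h3, (keyA p).2 h2⟩

end Part6



/-! ## Part 7: every reachable stack is encoded by a canonical forest -/

section Part7

variable {P B : Type} {bot : B} {δ : P → B → Op B → P → Prop}

def Adm (w : List (Letter B)) (y : Stk B) : Prop :=
  ∀ σ k t, Sum.inr (σ, k) :: t <:+ w → k = y.length ∨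
    ∃ w' y', y = w' :: y' ∧ Sum.inr (σ, k) :: t <:+ w'

def OK (bot : B) : Stk B → Prop
  | [] => True
  | w :: y => [Sum.inl bot] <:+ w ∧ Adm w y ∧ OK bot y

theorem OK.suffix {s t : Stk B} (h : OK bot s) (ht : t <:+ s) : OK bot t := by
  induction s with
  | nil => rw [List.suffix_nil] at ht; subst ht; exact h
  | cons w s ih =>
    rcases List.suffix_cons_iff.1 ht with rfl | ht
    · exact h
    · exact ih h.2.2 ht

theorem OK.pop1 {a : Letter B} {w : List (Letter B)} {s : Stk B} (h : OK bot ((a :: w) :: s))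
    (hw : w ≠ []) : OK bot (w :: s) := by
  refine ⟨?_, fun σ k t ht => h.2.1 σ k t (ht.trans (List.suffix_cons _ _)), h.2.2⟩
  rcases List.suffix_cons_iff.1 h.1 with h1 | h1
  · simp only [List.cons.injEq] at h1
    exact absurd h1.2.symm hw
  · exact h1

theorem Step.ok {c c' : Cf P B} (h : Step bot δ c c') (hv : OK bot c.2) : OK bot c'.2 := by
  cases h with
  | clone h => exact ⟨hv.1, fun σ k t ht => Or.inr ⟨_, _, rfl, ht⟩, hv⟩
  | push1 h1 h2 =>
    refine ⟨hv.1.trans (List.suffix_cons _ _), fun σ k t ht => ?_, hv.2.2⟩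
    rcases List.suffix_cons_iff.1 ht with h | h
    · simp at h
    · exact hv.2.1 σ k t h
  | push2 h1 h2 =>
    refine ⟨hv.1.trans (List.suffix_cons _ _), fun σ k t ht => ?_, hv.2.2⟩
    rcases List.suffix_cons_iff.1 ht with h | h
    · simp at h; exact Or.inl h.1.2
    · exact hv.2.1 σ k t h
  | pop2 h1 h2 => exact hv.2.2
  | pop1 h1 h2 => exact hv.pop1 h1
  | col1 h1 h2 => exact hv.pop1 h1
  | col2 h1 h2 h3 => exact OK.suffix hv.2.2 h2

theorem ins_nil (u : List (Letter B)) : ∀ (v : List (Letter B)) (s : Stk B),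
    (∀ σ k, Sum.inr (σ, k) ∈ u → k = s.length) → ∃ F', Can F' ∧ F' ≠ .nil ∧
      decS F' v s = (u ++ v) :: s ∧
      ∀ x, hd F' = some (some x) → ltr x s.length :: v <:+ u ++ v := by
  induction u using List.reverseRecOn with
  | nil =>
    intro v s _
    exact ⟨.node none .nil .nil, ⟨rfl, trivial⟩, by simp, rfl, by simp [hd]⟩
  | append_singleton u a ih =>
    intro v s h
    obtain ⟨C, h1, h2, h3, -⟩ := ih (a :: v) s (fun σ k hk => h σ k (by simp [hk]))
    obtain ⟨x, rfl⟩ : ∃ x, a = ltr x s.length := by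
      rcases a with a | ⟨a, k⟩
      · exact ⟨(a, false), rfl⟩
      · refine ⟨(a, true), ?_⟩
        rw [h a k (by simp)]; rfl
    refine ⟨.node (some x) C .nil, ⟨h2, h1, trivial, by simp [hd]⟩, by simp, ?_, ?_⟩
    · simp [decS, h3]
    · intro y hy
      simp only [hd, Option.some.injEq] at hy
      subst hy
      exact ⟨u, by simp⟩

theorem mem_split_suffix {a : Letter B} {u v : List (Letter B)} (h : a ∈ u) :
    ∃ t, a :: t <:+ u ++ v ∧ v <:+ t := by
  obtain ⟨u1, u2, rfl⟩ := List.append_of_mem h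
  exact ⟨u2 ++ v, ⟨u1, by simp⟩, List.suffix_append _ _⟩

theorem ins (F : BT (Lb B)) : ∀ (v : List (Letter B)) (s : Stk B) (w : List (Letter B)), Can F →
    v <:+ w →
    (∀ σ k t, Sum.inr (σ, k) :: t <:+ w → v <:+ t → k = (decS F v s).length ∨
      ∃ w' y', decS F v s = w' :: y' ∧ s.length ≤ y'.length ∧ Sum.inr (σ, k) :: t <:+ w') →
    ∃ F', Can F' ∧ F' ≠ .nil ∧ decS F' v s = w :: decS F v s ∧ (F ≠ .nil → hd F' = hd F) ∧
      (F = .nil → ∀ x, hd F' = some (some x) → ltr x s.length :: v <:+ w) := by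
  induction F with
  | nil =>
    intro v s w _ hw H
    obtain ⟨u, rfl⟩ := hw
    obtain ⟨F', h1, h2, h3, h4⟩ := ins_nil u v s (fun σ k hk => by
      obtain ⟨t, h5, h6⟩ := mem_split_suffix (v := v) hk
      rcases H σ k t h5 h6 with h | ⟨w', y', h7, h8, -⟩
      · exact h
      · simp only [decS] at h7; rw [h7] at h8; simp at h8)
    exact ⟨F', h1, h2, h3, fun h => absurd rfl h, fun _ => h4⟩
  | node a C r ihC ihr =>
    intro v s w hF hw H
    rcases a with _ | x
    · obtain ⟨r', h1, h2, h3, h4, h5⟩ := ihr v (v :: s) w hF.2 hw (fun σ k t h5 h6 => by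
        rcases H σ k t h5 h6 with h | ⟨w', y', h7, h8, h9⟩
        · exact Or.inl h
        · refine Or.inr ⟨w', y', h7, ?_, h9⟩
          by_contra hc
          simp only [List.length_cons] at hc
          have hlen : y'.length = s.length := by omega
          have h10 := (decS_suffix r v (v :: s))
          simp only [decS] at h7
          rw [h7] at h10
          have h11 := h10.eq_of_length (by simp [hlen])
          simp only [List.cons.injEq] at h11
          rw [← h11.1] at h9
          have := h9.length_le
          have := h6.length_le
          simp at *; omega)
      exact ⟨.node none C r', ⟨hF.1, h1⟩, by simp, h3, fun _ => rfl, by simp⟩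
    · have hlt := decS_lt hF.2.1 hF.1 (ltr x s.length :: v) s
      have hext := decS_ext C (ltr x s.length :: v) s
      by_cases hr : r = .nil
      · subst hr
        by_cases hx : ltr x s.length :: v <:+ w
        · obtain ⟨C', h1, h2, h3, h4, h5⟩ := ihC (ltr x s.length :: v) s w hF.2.1 hx
            (fun σ k t h5 h6 => H σ k t h5 ((List.suffix_cons _ _).trans h6))
          exact ⟨.node (some x) C' .nil, ⟨h2, h1, trivial, by simp [hd]⟩, by simp, h3,
            fun _ => rfl, by simp⟩
        · obtain ⟨r', h1, h2, h3, h4, h5⟩ := ihr v (decS C (ltr x s.length :: v) s) w trivial hw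
            (fun σ k t h5 h6 => by
              rcases H σ k t h5 h6 with h | ⟨w', y', h7, h8, h9⟩
              · exact Or.inl h
              · exfalso
                simp only [decS] at h7
                have h10 := hext.mem (T := y') (by rw [h7]) h8
                exact hx ((List.suffix_of_suffix_length_le h10 h9
                  (by have := h6.length_le; simp; omega)).trans h5))
          refine ⟨.node (some x) C r', ⟨hF.1, hF.2.1, h1, fun hx2 hy => ?_⟩, by simp, h3,
            fun _ => rfl, by simp⟩
          have := h5 rfl x hy
          apply hx
          have e : ∀ n, ltr x n = Sum.inl x.1 := by intro n; simp [ltr, hx2]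
          rw [e] at this ⊢; exact this
      · have hlt2 := decS_lt hF.2.2.1 hr v (decS C (ltr x s.length :: v) s)
        obtain ⟨r', h1, h2, h3, h4, h5⟩ := ihr v (decS C (ltr x s.length :: v) s) w hF.2.2.1 hw
          (fun σ k t h5 h6 => by
            rcases H σ k t h5 h6 with h | ⟨w', y', h7, h8, h9⟩
            · exact Or.inl h
            · refine Or.inr ⟨w', y', h7, ?_, h9⟩
              simp only [decS] at h7
              rw [h7] at hlt2; simp at hlt2; omega)
        exact ⟨.node (some x) C r', ⟨hF.1, hF.2.1, h1, by rw [h4 hr]; exact hF.2.2.2⟩, by simp, h3,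
          fun _ => rfl, by simp⟩

theorem exists_forest : ∀ (Z : Stk B), OK bot Z → Z ≠ [] →
    ∃ F, Can F ∧ F ≠ .nil ∧ decS F [Sum.inl bot] [] = Z := by
  have : ∀ (Z : Stk B), OK bot Z → ∃ F, Can F ∧ decS F [Sum.inl bot] [] = Z := by
    intro Z
    induction Z with
    | nil => intro _; exact ⟨.nil, trivial, rfl⟩
    | cons w Z ih =>
      intro h
      obtain ⟨F, h1, rfl⟩ := ih h.2.2
      obtain ⟨F', h3, -, h4, -⟩ := ins F [Sum.inl bot] [] w h1 h.1 (fun σ k t h5 _ => by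
        rcases h.2.1 σ k t h5 with h | ⟨w', y', h7, h8⟩
        · exact Or.inl h
        · exact Or.inr ⟨w', y', h7, by simp, h8⟩)
      exact ⟨F', h3, h4⟩
  intro Z h hn
  obtain ⟨F, h1, rfl⟩ := this Z h
  refine ⟨F, h1, ?_, rfl⟩
  rintro rfl; exact hn rfl

end Part7



/-! ## Part 8: tree automata -/

section Part8

theorem PTree.ind {α : Type} {M : PTree α → Prop}
    (h : ∀ a l r, (∀ t, l = some t → M t) → (∀ t, r = some t → M t) → M (.node a l r)) :
    ∀ t, M t
  | .node a none none => h a _ _ (fun t ht => nomatch ht) (fun t ht => nomatch ht)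
  | .node a (some u) none => h a _ _ (fun t ht => by cases ht; exact PTree.ind h u)
      (fun t ht => nomatch ht)
  | .node a none (some v) => h a _ _ (fun t ht => nomatch ht)
      (fun t ht => by cases ht; exact PTree.ind h v)
  | .node a (some u) (some v) => h a _ _ (fun t ht => by cases ht; exact PTree.ind h u)
      (fun t ht => by cases ht; exact PTree.ind h v)

/-- Evaluation of a tree by a deterministic bottom-up automaton. -/
def PTree.ev {α V : Type} (v0 : V) (step : α → V → V → V) : PTree α → V
  | .node a l r =>
    step a (match l with | none => v0 | some t => t.ev v0 step)
      (match r with | none => v0 | some t => t.ev v0 step)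

def evO {α V : Type} (v0 : V) (step : α → V → V → V) : Option (PTree α) → V
  | none => v0
  | some t => t.ev v0 step

theorem PTree.ev_node {α V : Type} (v0 : V) (step : α → V → V → V) (a : α)
    (l r : Option (PTree α)) :
    (PTree.node a l r).ev v0 step = step a (evO v0 step l) (evO v0 step r) := by
  rcases l with _ | l <;> rcases r with _ | r <;> simp only [PTree.ev, evO]

def kid {α : Type} : Option (PTree α) → Bool → Option (PTree α)
  | none, _ => none
  | some (.node _ l _), false => l
  | some (.node _ _ r), true => r

def sub {α : Type} : Option (PTree α) → List Bool → Option (PTree α)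
  | t, [] => t
  | t, b :: d => sub (kid t b) d

def labO {α : Type} : Option (PTree α) → Option α
  | none => none
  | some (.node a _ _) => some a

theorem sub_none {α : Type} (d : List Bool) : sub (none : Option (PTree α)) d = none := by
  induction d with
  | nil => rfl
  | cons b d ih => exact ih

theorem sub_append {α : Type} (d : List Bool) (b : Bool) : ∀ t : Option (PTree α),
    sub t (d ++ [b]) = kid (sub t d) b := by
  induction d with
  | nil => intro t; rfl
  | cons c d ih => intro t; exact ih _

theorem labelAt_sub {α : Type} (d : List Bool) : ∀ t : PTree α,
    t.labelAt d = labO (sub (some t) d) := by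
  induction d with
  | nil => rintro ⟨a, l, r⟩; simp [PTree.labelAt, sub, labO]
  | cons b d ih =>
    rintro ⟨a, l, r⟩
    cases b
    · rcases l with _ | l
      · simp [PTree.labelAt, sub, kid, sub_none, labO]
      · simp only [PTree.labelAt, sub, kid]; exact ih l
    · rcases r with _ | r
      · simp [PTree.labelAt, sub, kid, sub_none, labO]
      · simp only [PTree.labelAt, sub, kid]; exact ih r

def detAut {α V : Type} [Finite V] (v0 : V) (step : α → V → V → V) (S : Set V) : TreeAut α where
  St := V
  fin := inferInstance
  qI := v0
  F := S
  Δ := {x | x.1 = step x.2.1 x.2.2.1 x.2.2.2}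

theorem ev_unique {α V : Type} (v0 : V) (step : α → V → V → V) (t : PTree α) :
    ∀ ρ : List Bool → V, (∀ d, t.labelAt d = none → ρ d = v0) →
      (∀ d a, t.labelAt d = some a → ρ d = step a (ρ (d ++ [false])) (ρ (d ++ [true]))) →
      ρ [] = t.ev v0 step := by
  induction t using PTree.ind with
  | h a l r ihl ihr =>
    intro ρ h1 h2
    have hl : ρ [false] = evO v0 step l := by
      rcases l with _ | l
      · exact h1 [false] rfl
      · exact ihl l rfl (fun d => ρ (false :: d)) (fun d hd => h1 (false :: d) (by simpa [PTree.labelAt] using hd))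
          (fun d b hd => h2 (false :: d) b (by simpa [PTree.labelAt] using hd))
    have hr : ρ [true] = evO v0 step r := by
      rcases r with _ | r
      · exact h1 [true] (by rcases l with _ | l <;> rfl)
      · exact ihr r rfl (fun d => ρ (true :: d)) (fun d hd => h1 (true :: d) (by simpa [PTree.labelAt] using hd))
          (fun d b hd => h2 (true :: d) b (by simpa [PTree.labelAt] using hd))
    rw [PTree.ev_node, ← hl, ← hr]
    exact h2 [] a (by simp [PTree.labelAt])

theorem detAut_accepts {α V : Type} [Finite V] (v0 : V) (step : α → V → V → V) (S : Set V)
    (t : PTree α) : (detAut v0 step S).Accepts t ↔ t.ev v0 step ∈ S := by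
  constructor
  · rintro ⟨ρ, h1, h2, h3⟩
    rw [← ev_unique v0 step t ρ h1 h2]; exact h3
  · intro h
    refine ⟨fun d => evO v0 step (sub (some t) d), ?_, ?_, h⟩
    · intro d hd
      rw [labelAt_sub] at hd
      change evO v0 step (sub (some t) d) = v0
      rcases hs : sub (some t) d with _ | ⟨a, l, r⟩
      · rfl
      · rw [hs] at hd; simp [labO] at hd
    · intro d a hd
      rw [labelAt_sub] at hd
      change evO v0 step (sub (some t) d) = step a (evO v0 step (sub (some t) (d ++ [false])))
        (evO v0 step (sub (some t) (d ++ [true])))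
      rw [sub_append, sub_append]
      rcases hs : sub (some t) d with _ | ⟨b, l, r⟩
      · rw [hs] at hd; simp [labO] at hd
      · rw [hs] at hd
        simp only [labO, Option.some.injEq] at hd
        subst hd
        exact PTree.ev_node _ _ _ _ _

/-! ### Conversion to `BT` -/

def PTree.bt {α : Type} : PTree α → BT α
  | .node a l r => .node a (match l with | none => .nil | some t => t.bt)
      (match r with | none => .nil | some t => t.bt)

def btO {α : Type} : Option (PTree α) → BT α
  | none => .nil
  | some t => t.bt

theorem PTree.bt_node {α : Type} (a : α) (l r : Option (PTree α)) :
    (PTree.node a l r).bt = .node a (btO l) (btO r) := by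
  rcases l with _ | l <;> rcases r with _ | r <;> simp only [PTree.bt, btO]

def ofBT {α : Type} : BT α → Option (PTree α)
  | .nil => none
  | .node a l r => some (.node a (ofBT l) (ofBT r))

theorem btO_ofBT {α : Type} (F : BT α) : btO (ofBT F) = F := by
  induction F with
  | nil => rfl
  | node a l r ihl ihr =>
    change PTree.bt (.node a (ofBT l) (ofBT r)) = _
    rw [PTree.bt_node, ihl, ihr]

theorem ofBT_bt {α : Type} (t : PTree α) : ofBT t.bt = some t := by
  induction t using PTree.ind with
  | h a l r ihl ihr =>
    have hl : ofBT (btO l) = l := by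
      rcases l with _ | l
      · rfl
      · exact ihl l rfl
    have hr : ofBT (btO r) = r := by
      rcases r with _ | r
      · rfl
      · exact ihr r rfl
    rw [PTree.bt_node, ofBT, hl, hr]

theorem PTree.bt_inj {α : Type} {t u : PTree α} (h : t.bt = u.bt) : t = u := by
  have := ofBT_bt t
  rw [h, ofBT_bt] at this
  exact (Option.some.inj this).symm

theorem exists_bt {α : Type} (a : α) (l r : BT α) : ∃ t : PTree α, t.bt = .node a l r :=
  ⟨.node a (ofBT l) (ofBT r), by rw [PTree.bt_node, btO_ofBT, btO_ofBT]⟩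

/-- Node or empty tree. -/
def pn {α : Type} : Option α → BT α → BT α → BT α
  | none, _, _ => .nil
  | some a, l, r => .node a l r

theorem exists_step1 {α V : Type} (g : BT α → V)
    (hg : ∀ a l r m s, g l = g m → g r = g s → g (.node a l r) = g (.node a m s)) :
    ∃ step : α → V → V → V, ∀ a l r, step a (g l) (g r) = g (.node a l r) := by
  classical
  have : Nonempty (BT α) := ⟨.nil⟩
  refine ⟨fun a u v => g (.node a (Function.invFun g u) (Function.invFun g v)), fun a l r => ?_⟩
  exact hg _ _ _ _ _ (Function.invFun_eq ⟨l, rfl⟩) (Function.invFun_eq ⟨r, rfl⟩)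

theorem exists_aut1 {α V : Type} [Finite V] (g : BT α → V)
    (hg : ∀ a l r m s, g l = g m → g r = g s → g (.node a l r) = g (.node a m s)) (S : Set V) :
    ∃ M : TreeAut α, ∀ t, M.Accepts t ↔ g t.bt ∈ S := by
  obtain ⟨step, hs⟩ := exists_step1 g hg
  refine ⟨detAut (g .nil) step S, fun t => ?_⟩
  rw [detAut_accepts]
  suffices h : t.ev (g .nil) step = g t.bt by rw [h]
  induction t using PTree.ind with
  | h a l r ihl ihr =>
    have hl : evO (g .nil) step l = g (btO l) := by
      rcases l with _ | l
      · rfl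
      · exact ihl l rfl
    have hr : evO (g .nil) step r = g (btO r) := by
      rcases r with _ | r
      · rfl
      · exact ihr r rfl
    rw [PTree.ev_node, PTree.bt_node, hl, hr, hs]

/-- Convolution of possibly empty trees. -/
def convO {α β : Type} : Option (PTree α) → Option (PTree β) → Option (PTree (Option α × Option β))
  | none, none => none
  | some t, none => some (t.map fun x => (some x, none))
  | none, some u => some (u.map fun x => (none, some x))
  | some t, some u => some (PTree.conv t u)

theorem conv_node {α β : Type} (a : α) (b : β) (l r : Option (PTree α)) (l' r' : Option (PTree β)) :
    PTree.conv (.node a l r) (.node b l' r') =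
      .node (some a, some b) (convO l l') (convO r r') := by
  rcases l with _ | l <;> rcases r with _ | r <;> rcases l' with _ | l' <;>
    rcases r' with _ | r' <;> simp only [PTree.conv, convO]

theorem map_node {α β : Type} (f : α → β) (a : α) (l r : Option (PTree α)) :
    PTree.map f (.node a l r) = .node (f a) (l.map (PTree.map f)) (r.map (PTree.map f)) := by
  rcases l with _ | l <;> rcases r with _ | r <;> simp [PTree.map]

theorem exists_aut2 {α β V : Type} [Finite V] (g : BT α → BT β → V)
    (hg : ∀ x y l l' r r' m m' s s', g l l' = g m m' → g r r' = g s s' →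
      g (pn x l r) (pn y l' r') = g (pn x m s) (pn y m' s')) (S : Set V) :
    ∃ M : TreeAut (Option α × Option β), ∀ t u, M.Accepts (PTree.conv t u) ↔ g t.bt u.bt ∈ S := by
  classical
  obtain ⟨step, hs⟩ : ∃ step : Option α × Option β → V → V → V, ∀ x y l l' r r',
      step (x, y) (g l l') (g r r') = g (pn x l r) (pn y l' r') := by
    have : Nonempty (BT α × BT β) := ⟨(.nil, .nil)⟩
    let g' : BT α × BT β → V := fun p => g p.1 p.2
    refine ⟨fun x u v => g (pn x.1 (Function.invFun g' u).1 (Function.invFun g' v).1)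
      (pn x.2 (Function.invFun g' u).2 (Function.invFun g' v).2), fun x y l l' r r' => ?_⟩
    exact hg _ _ _ _ _ _ _ _ _ _ (Function.invFun_eq (f := g') ⟨(l, l'), rfl⟩)
      (Function.invFun_eq (f := g') ⟨(r, r'), rfl⟩)
  refine ⟨detAut (g .nil .nil) step S, fun t u => ?_⟩
  rw [detAut_accepts]
  suffices h : (PTree.conv t u).ev (g .nil .nil) step = g t.bt u.bt by rw [h]
  have hm1 : ∀ t : PTree α, (t.map fun x => ((some x, none) : Option α × Option β)).ev
      (g .nil .nil) step = g t.bt .nil := by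
    intro t
    induction t using PTree.ind with
    | h a l r ihl ihr =>
      have hl : evO (g .nil .nil) step (l.map (PTree.map fun x => ((some x, none) : Option α × Option β)))
          = g (btO l) .nil := by
        rcases l with _ | l
        · rfl
        · exact ihl l rfl
      have hr : evO (g .nil .nil) step (r.map (PTree.map fun x => ((some x, none) : Option α × Option β)))
          = g (btO r) .nil := by
        rcases r with _ | r
        · rfl
        · exact ihr r rfl
      rw [map_node, PTree.ev_node, PTree.bt_node, hl, hr, hs]; rfl
  have hm2 : ∀ t : PTree β, (t.map fun x => ((none, some x) : Option α × Option β)).ev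
      (g .nil .nil) step = g .nil t.bt := by
    intro t
    induction t using PTree.ind with
    | h a l r ihl ihr =>
      have hl : evO (g .nil .nil) step (l.map (PTree.map fun x => ((none, some x) : Option α × Option β)))
          = g .nil (btO l) := by
        rcases l with _ | l
        · rfl
        · exact ihl l rfl
      have hr : evO (g .nil .nil) step (r.map (PTree.map fun x => ((none, some x) : Option α × Option β)))
          = g .nil (btO r) := by
        rcases r with _ | r
        · rfl
        · exact ihr r rfl
      rw [map_node, PTree.ev_node, PTree.bt_node, hl, hr, hs]; rfl
  induction t using PTree.ind generalizing u with
  | h a l r ihl ihr =>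
    obtain ⟨b, l', r'⟩ := u
    have hl : evO (g .nil .nil) step (convO l l') = g (btO l) (btO l') := by
      rcases l with _ | l <;> rcases l' with _ | l'
      · rfl
      · exact hm2 l'
      · exact hm1 l
      · exact ihl l rfl l'
    have hr : evO (g .nil .nil) step (convO r r') = g (btO r) (btO r') := by
      rcases r with _ | r <;> rcases r' with _ | r'
      · rfl
      · exact hm2 r'
      · exact hm1 r
      · exact ihr r rfl r'
    rw [conv_node, PTree.ev_node, PTree.bt_node, PTree.bt_node, hl, hr, hs]; rfl

/-! ### Relabelling -/

def BT.map {α β : Type} (f : α → β) : BT α → BT β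
  | .nil => .nil
  | .node a l r => .node (f a) (l.map f) (r.map f)

theorem BT.map_pn {α β : Type} (f : α → β) (x : Option α) (l r : BT α) :
    (pn x l r).map f = pn (x.map f) (l.map f) (r.map f) := by
  cases x <;> rfl

theorem BT.map_eq_nil {α β : Type} (f : α → β) (l : BT α) : l.map f = .nil ↔ l = .nil := by
  cases l <;> simp [BT.map]

theorem BT.map_map {α β γ : Type} (f : α → β) (h : β → γ) (l : BT α) :
    (l.map f).map h = l.map (h ∘ f) := by
  induction l with
  | nil => rfl
  | node a l r ihl ihr => simp [BT.map, ihl, ihr]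

theorem BT.map_id' {α : Type} (f : α → α) (hf : ∀ a, f a = a) (l : BT α) : l.map f = l := by
  induction l with
  | nil => rfl
  | node a l r ihl ihr => simp [BT.map, ihl, ihr, hf]

end Part8



/-! ## Part 9: finite summaries and the automata -/

section Part9

variable {P B C : Type} (bot : B) (δ : P → B → Op B → P → Prop)

abbrev RT (P B : Type) := Bool → Bool → Ty P B → P → P → Prop
abbrev UT (P B : Type) := Bool → Ty P B → P → P → Prop

theorem finite_Ty [Finite P] [Finite B] : Finite (Ty P B) := by
  have h1 : Finite (P → P → Prop) := inferInstance
  have h2 : Finite (Bool → P → P → Prop) := inferInstance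
  infer_instance

theorem finite_UT [Finite P] [Finite B] : Finite (UT P B) := by
  have h1 : Finite (P → P → Prop) := inferInstance
  have h2 : Finite (Ty P B) := finite_Ty
  have h3 : Finite (Ty P B → P → P → Prop) := Pi.finite
  exact Pi.finite

theorem finite_RT [Finite P] [Finite B] : Finite (RT P B) := by
  have h1 : Finite (UT P B) := finite_UT
  exact Pi.finite

/-- The summary of a pair of forests. -/
def sm (F F' : BT (Lb B)) : RT P B × RT P B × UT P B × RT P B × Prop × Prop :=
  (rr bot δ F F', rr bot δ F .nil, uu bot δ F', D bot δ F, F' = F, F' = .nil)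

theorem D_none' (l r : BT (Lb B)) : D bot δ (.node none l r) = fun e b τ q q' =>
    (D bot δ r e false τ q q' ∨ ∃ p, D bot δ r e true (umT τ) q p ∧ τ.1.2.1 b p q') := by
  funext e b τ q q'; simp only [D]

theorem D_some' (x : B × Bool) (l r : BT (Lb B)) : D bot δ (.node (some x) l r) =
    fun e b τ q q' => (D bot δ r e false τ q q' ∨
      ∃ p, D bot δ r e true (umT τ) q p ∧ D bot δ l false b (consT bot δ (atag x b) τ) p q') := by
  funext e b τ q q'; simp only [D]

theorem uu_none' (l r : BT (Lb B)) : uu bot δ (.node none l r) = fun e' τ p q' =>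
    ((r = .nil ∧ e' = false ∧ τ.1.2.2 p q') ∨
      ∃ p1 p2, τ.1.2.2 p p1 ∧ symT δ τ .clone2 p1 p2 ∧ uu bot δ r e' (umT τ) p2 q') := by
  funext e' τ p q'; simp only [uu]

theorem uu_some' (x : B × Bool) (l r : BT (Lb B)) : uu bot δ (.node (some x) l r) =
    fun e' τ p q' => ∃ p1 p2, τ.1.2.2 p p1 ∧ pushR bot δ τ x p1 p2 ∧
      TT δ x (r = .nil ∧ e' = false) (fun e'' => uu bot δ l e'' (consT bot δ (atag x true) τ))
        (uu bot δ r e' (umT τ)) p2 q' := by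
  funext e' τ p q'; simp only [uu]

theorem rr_nil' (F' : BT (Lb B)) : rr bot δ .nil F' = fun e e' τ q q' =>
    (e = true ∧ uu bot δ F' e' τ q q') := by
  funext e e' τ q q'; cases F' <;> simp only [rr]

theorem uu_congr (a : Lb B) {l m r s : BT (Lb B)} (h1 : uu bot δ l = uu bot δ m)
    (h2 : uu bot δ r = uu bot δ s) (h3 : (r = .nil) = (s = .nil)) :
    uu bot δ (.node a l r) = uu bot δ (.node a m s) := by
  rcases a with _ | x
  · simp only [uu_none', h2, h3]
  · simp only [uu_some', h1, h2, h3]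

theorem D_congr (a : Lb B) {l m r s : BT (Lb B)} (h1 : D bot δ l = D bot δ m)
    (h2 : D bot δ r = D bot δ s) :
    D bot δ (.node a l r) = D bot δ (.node a m s) := by
  rcases a with _ | x
  · simp only [D_none', h2]
  · simp only [D_some', h1, h2]

theorem rr_congr_nil (a : Lb B) {l m r s : BT (Lb B)} (h1 : rr bot δ l .nil = rr bot δ m .nil)
    (h2 : D bot δ r = D bot δ s) {F F' : BT (Lb B)} (h3 : uu bot δ F = uu bot δ F')
    (hF : F = .nil) (hF' : F' = .nil) :
    rr bot δ (.node a l r) F = rr bot δ (.node a m s) F' := by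
  subst hF hF'
  funext e e' τ q q'
  rcases a with _ | x
  · simp only [rr_none, h2]
  · simp only [rr_some, h1, h2]

theorem rr_congr (a b : Lb B) {l l' r r' m m' s s' : BT (Lb B)} (h1 : sm bot δ l l' = sm bot δ m m')
    (h2 : sm bot δ r r' = sm bot δ s s') :
    rr bot δ (.node a l r) (.node b l' r') = rr bot δ (.node a m s) (.node b m' s') := by
  simp only [sm, Prod.mk.injEq] at h1 h2
  obtain ⟨a1, a2, a3, a4, a5, a6⟩ := h1
  obtain ⟨b1, b2, b3, b4, b5, b6⟩ := h2
  have hu := uu_congr bot δ b a3 b3 b6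
  funext e e' τ q q'
  rcases a with _ | x <;> rcases b with _ | y
  · simp only [rr_none, b4, hu, b1]
  · simp only [rr_none, b4, hu]
  · simp only [rr_some, b4, hu, a2]
  · simp only [rr_some, b4, hu, a2, a1, b1, b2, a5, b6, b3]

theorem sm_congr (x y : Option (Lb B)) {l l' r r' m m' s s' : BT (Lb B)}
    (h1 : sm bot δ l l' = sm bot δ m m') (h2 : sm bot δ r r' = sm bot δ s s') :
    sm bot δ (pn x l r) (pn y l' r') = sm bot δ (pn x m s) (pn y m' s') := by
  have h1' := h1
  have h2' := h2
  simp only [sm, Prod.mk.injEq] at h1' h2'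
  obtain ⟨a1, a2, a3, a4, a5, a6⟩ := h1'
  obtain ⟨b1, b2, b3, b4, b5, b6⟩ := h2'
  rcases x with _ | a <;> rcases y with _ | b
  · rfl
  · have hu := uu_congr bot δ b a3 b3 b6
    simp only [sm, pn, rr_nil', hu, reduceCtorEq]
  · have hd := D_congr bot δ a a4 b4
    have hr := rr_congr_nil bot δ a a2 b4 (F := .nil) (F' := .nil) rfl rfl rfl
    simp only [sm, pn, hr, hd, reduceCtorEq]
  · have hu := uu_congr bot δ b a3 b3 b6
    have hd := D_congr bot δ a a4 b4
    have hr := rr_congr_nil bot δ a a2 b4 (F := .nil) (F' := .nil) rfl rfl rfl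
    have hR := rr_congr bot δ a b h1 h2
    simp only [sm, pn, hr, hd, hu, hR, reduceCtorEq, BT.node.injEq, a5, b5]

/-- Forgetting state labels. -/
def slb : C ⊕ Lb B → Lb B
  | .inl _ => none
  | .inr x => x

def st (T : BT (C ⊕ Lb B)) : BT (Lb B) := T.map slb

def emb (F : BT (Lb B)) : BT (C ⊕ Lb B) := F.map Sum.inr

theorem st_emb (F : BT (Lb B)) : st (C := C) (emb F) = F := by
  rw [st, emb, BT.map_map]; exact BT.map_id' _ (fun _ => rfl) _

/-- The acceptance condition for pairs. -/
def acc2 (W : C → C → RT P B → Prop) (T T' : BT (C ⊕ Lb B)) : Prop :=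
  ∃ q q' l r l' r', T = .node (.inl q) l r ∧ T' = .node (.inl q') l' r' ∧
    W q q' (rr bot δ (st l) (st l'))

theorem acc2_congr (W : C → C → RT P B → Prop) (x y : Option (C ⊕ Lb B))
    {l l' m m' : BT (C ⊕ Lb B)} (r r' s s' : BT (C ⊕ Lb B))
    (h : rr bot δ (st l) (st l') = rr bot δ (st m) (st m'))
    (ha : acc2 bot δ W (pn x l r) (pn y l' r')) : acc2 bot δ W (pn x m s) (pn y m' s') := by
  obtain ⟨q, q', l1, r1, l1', r1', h1, h2, h3⟩ := ha
  rcases x with _ | x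
  · simp [pn] at h1
  rcases y with _ | y
  · simp [pn] at h2
  simp only [pn, BT.node.injEq] at h1 h2
  obtain ⟨rfl, rfl, rfl⟩ := h1
  obtain ⟨rfl, rfl, rfl⟩ := h2
  exact ⟨q, q', m, s, m', s', rfl, rfl, h ▸ h3⟩

theorem aut_bin [Finite P] [Finite B] (W : C → C → RT P B → Prop) :
    ∃ M : TreeAut (Option (C ⊕ Lb B) × Option (C ⊕ Lb B)), ∀ t u,
      M.Accepts (PTree.conv t u) ↔ acc2 bot δ W t.bt u.bt := by
  have i1 : Finite (UT P B) := finite_UT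
  have i2 : Finite (RT P B) := finite_RT
  obtain ⟨M, hM⟩ := exists_aut2 (α := C ⊕ Lb B) (β := C ⊕ Lb B)
    (fun T T' => (sm bot δ (st T) (st T'), acc2 bot δ W T T')) (by
      intro x y l l' r r' m m' s s' h1 h2
      simp only [Prod.mk.injEq] at h1 h2
      have e1 : rr bot δ (st l) (st l') = rr bot δ (st m) (st m') := congrArg Prod.fst h1.1
      refine Prod.ext ?_ (propext ⟨acc2_congr bot δ W x y r r' s s' e1,
        acc2_congr bot δ W x y s s' r r' e1.symm⟩)
      simp only [st, BT.map_pn]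
      exact sm_congr bot δ _ _ h1.1 h2.1) {v | v.2}
  exact ⟨M, hM⟩

def acc1 (W : C → UT P B → Prop) (T : BT (C ⊕ Lb B)) : Prop :=
  ∃ q l, T = .node (.inl q) l .nil ∧ emb (st l) = l ∧ l ≠ .nil ∧ Can (st l) ∧
    W q (uu bot δ (st l))

def sm1 (T : BT (C ⊕ Lb B)) : Prop × Prop × Option (Lb B) × Prop × UT P B :=
  (emb (st T) = T, T = .nil, hd (st T), Can (st T), uu bot δ (st T))

theorem aut_un [Finite P] [Finite B] (W : C → UT P B → Prop) :
    ∃ M : TreeAut (C ⊕ Lb B), ∀ t, M.Accepts t ↔ acc1 bot δ W t.bt := by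
  have i1 : Finite (UT P B) := finite_UT
  have i2 : Finite (RT P B) := finite_RT
  have key : ∀ (a : C ⊕ Lb B) (l r m s : BT (C ⊕ Lb B)), sm1 bot δ l = sm1 bot δ m →
      sm1 bot δ r = sm1 bot δ s → acc1 bot δ W (.node a l r) → acc1 bot δ W (.node a m s) := by
    rintro a l r m s h1 h2 ⟨q, l1, h3, h4, h5, h6, h7⟩
    simp only [BT.node.injEq] at h3
    obtain ⟨rfl, rfl, rfl⟩ := h3
    simp only [sm1, Prod.mk.injEq] at h1 h2
    obtain ⟨a1, a2, a3, a4, a5⟩ := h1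
    refine ⟨q, m, ?_, ?_, ?_, ?_, ?_⟩
    · rw [← h2.2.1.mp trivial]
    · exact a1.mp h4
    · intro h; exact h5 (a2.mpr h)
    · exact a4.mp h6
    · exact a5 ▸ h7
  obtain ⟨M, hM⟩ := exists_aut1 (α := C ⊕ Lb B)
    (fun T => (sm1 bot δ T, acc1 bot δ W T)) (by
      intro a l r m s h1 h2
      simp only [Prod.mk.injEq] at h1 h2
      refine Prod.ext ?_ (propext ⟨key a l r m s h1.1 h2.1, key a m s l r h1.1.symm h2.1.symm⟩)
      have h1 := h1.1
      have h2 := h2.1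
      simp only [sm1, Prod.mk.injEq] at h1 h2
      obtain ⟨a1, a2, a3, a4, a5⟩ := h1
      obtain ⟨b1, b2, b3, b4, b5⟩ := h2
      have a2' : (st l = .nil) = (st m = .nil) := by
        simp only [st, BT.map_eq_nil]; exact a2
      have b2' : (st r = .nil) = (st s = .nil) := by
        simp only [st, BT.map_eq_nil]; exact b2
      have hc : ∀ l r : BT (C ⊕ Lb B), st (.node a l r) = .node (slb a) (st l) (st r) :=
        fun _ _ => rfl
      have he : ∀ l r : BT (Lb B), emb (C := C) (.node (slb a) l r) =
          .node (.inr (slb a)) (emb l) (emb r) := fun _ _ => rfl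
      have hu := uu_congr bot δ (slb a) a5 b5 b2'
      have hC : Can (.node (slb a) (st l) (st r)) = Can (.node (slb a) (st m) (st s)) := by
        generalize slb a = b
        rcases b with _ | x
        · simp only [Can, a2', b4]
        · simp only [Can, a2', b4, a4, b3, ne_eq]
      simp only [sm1, hc, he, hu, hC, BT.node.injEq, a1, b1, hd, reduceCtorEq]) {v | v.2}
  exact ⟨M, hM⟩

end Part9



/-! ## Part 10: runs of the system -/

section Part10

set_option linter.unusedSectionVars false

variable {P B K σ : Type} [DecidableEq B]

/-- Reversal of stacks. -/
def rv (s : List (List (Letter B))) : List (List (Letter B)) := (s.map List.reverse).reverse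


theorem rv_rv (s : List (List (Letter B))) : rv (rv s) = s := by
  simp [rv, List.map_reverse]

theorem rv_cons (w : List (Letter B)) (s : List (List (Letter B))) :
    rv (w :: s) = rv s ++ [w.reverse] := by
  simp [rv]

theorem rv_snoc (w : List (Letter B)) (s : List (List (Letter B))) :
    rv (s ++ [w]) = w.reverse :: rv s := by
  simp [rv]

theorem rv_length (s : List (List (Letter B))) : (rv s).length = s.length := by simp [rv]

/-- Transition relation of the product with an automaton. -/
def dl (S : CPS P B K) (M : DFA K σ) (c : P × σ) (a : B) (op : Op B) (c' : P × σ) : Prop :=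
  ∃ γ, (c.1, a, γ, c'.1, op) ∈ S.Δ ∧ c'.2 = M.step c.2 γ

theorem Trans.step {S : CPS P B K} (M : DFA K σ) {γ : K} {q q' : P} {s s' : Stack2 B}
    (h : Trans S γ (q, s) (q', s')) (d : σ) (hv : VS (rv s)) :
    Step S.bot (dl S M) ((q, d), rv s) ((q', M.step d γ), rv s') := by
  obtain ⟨op, x, h1, h2, h3⟩ := h
  simp only at h1 h2 h3
  rcases List.eq_nil_or_concat s with rfl | ⟨s0, w, rfl⟩
  · simp [symS, top1] at h1
  rcases List.eq_nil_or_concat w with rfl | ⟨w0, a, rfl⟩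
  · simp [symS, top1] at h1
  simp only [List.concat_eq_append] at *
  have ha : symOf a = x := by simpa [symS, top1] using h1
  subst ha
  have hd : dl S M (q, d) (symOf a) op (q', M.step d γ) := ⟨γ, h2, rfl⟩
  rw [rv_snoc, List.reverse_append] at hv ⊢
  simp only [List.reverse_cons, List.reverse_nil, List.nil_append, List.cons_append] at hv ⊢
  cases op with
  | clone2 =>
    simp [applyOp, clone2, top2] at h3
    subst h3
    have : rv (s0 ++ [w0 ++ [a], w0 ++ [a]]) = (a :: w0.reverse) :: (a :: w0.reverse) :: rv s0 := by
      simp [rv]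
    rw [this]
    exact .clone hd
  | pop1 =>
    simp [applyOp, pop1] at h3
    obtain ⟨h4, rfl⟩ := h3
    rw [rv_snoc]
    exact .pop1 (by rintro h; simp at h; simp [h] at h4) hd
  | pop2 =>
    simp [applyOp, pop2] at h3
    obtain ⟨h4, rfl⟩ := h3
    exact .pop2 (by rw [← List.length_pos_iff, rv_length]; exact h4) hd
  | push1 y =>
    simp [applyOp, push1, top2] at h3
    obtain ⟨h4, rfl⟩ := h3
    have : rv (s0 ++ [w0 ++ [a, Sum.inl y]]) = (Sum.inl y :: a :: w0.reverse) :: rv s0 := by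
      simp [rv]
    rw [this]
    exact .push1 h4 hd
  | push2 y =>
    simp [applyOp, push2, top2] at h3
    obtain ⟨h4, rfl⟩ := h3
    have : rv (s0 ++ [w0 ++ [a, Sum.inr (y, s0.length)]]) =
        (Sum.inr (y, (rv s0).length) :: a :: w0.reverse) :: rv s0 := by
      simp [rv]
    rw [this]
    exact .push2 h4 hd
  | collapse =>
    rcases a with a | ⟨a, k⟩
    · simp [applyOp, collapse, top1, pop1] at h3
      obtain ⟨h4, rfl⟩ := h3
      rw [rv_snoc]
      exact .col1 (by rintro h; simp at h; simp [h] at h4) hd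
    · simp [applyOp, collapse, top1] at h3
      obtain ⟨h4, rfl⟩ := h3
      have hk : k ≤ s0.length := by
        have := hv.1 a k (by simp)
        rwa [rv_length] at this
      rw [List.take_append_of_le_length hk]
      have hl : (rv (s0.take k)).length = k := by
        rw [rv_length, List.length_take]; omega
      have := Step.col2 (bot := S.bot) (δ := dl S M) (w := w0.reverse) (y := rv (s0.take k))
        (s := rv s0) (x := a) (q := (q, d)) (p := (q', M.step d γ))
        (by rw [← List.length_pos_iff, hl]; exact h4)
        (by
          simp only [rv]
          rw [List.reverse_suffix]
          exact (List.take_prefix _ _).map _) hd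
      rw [hl] at this
      exact this

theorem step_trans {S : CPS P B K} {M : DFA K σ} {c c' : Cf (P × σ) B}
    (h : Step S.bot (dl S M) c c') :
    ∃ γ, Trans S γ (c.1.1, rv c.2) (c'.1.1, rv c'.2) ∧ c'.1.2 = M.step c.1.2 γ := by
  cases h with
  | @clone a w s q p h =>
    obtain ⟨γ, h1, h2⟩ := h
    refine ⟨γ, ⟨_, _, ?_, h1, ?_⟩, h2⟩
    · simp [rv_cons, symS, top1]
    · simp [rv_cons, applyOp, clone2, top2]
  | @push1 a w s q p x hx h =>
    obtain ⟨γ, h1, h2⟩ := h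
    refine ⟨γ, ⟨_, _, ?_, h1, ?_⟩, h2⟩
    · simp [rv_cons, symS, top1]
    · simp [rv_cons, applyOp, push1, top2, hx]
  | @push2 a w s q p x hx h =>
    obtain ⟨γ, h1, h2⟩ := h
    refine ⟨γ, ⟨_, _, ?_, h1, ?_⟩, h2⟩
    · simp [rv_cons, symS, top1]
    · simp [rv_cons, applyOp, push2, top2, hx, rv_length]
  | @pop2 a w s q p hx h =>
    obtain ⟨γ, h1, h2⟩ := h
    refine ⟨γ, ⟨_, _, ?_, h1, ?_⟩, h2⟩
    · simp [rv_cons, symS, top1]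
    · simp [rv_cons, applyOp, pop2, rv_length, List.length_pos_iff, hx]
  | @pop1 a w s q p hx h =>
    obtain ⟨γ, h1, h2⟩ := h
    refine ⟨γ, ⟨_, _, ?_, h1, ?_⟩, h2⟩
    · simp [rv_cons, symS, top1]
    · simp [rv_cons, applyOp, pop1, List.length_pos_iff, hx]
  | @col1 a w s q p hx h =>
    obtain ⟨γ, h1, h2⟩ := h
    refine ⟨γ, ⟨_, _, ?_, h1, ?_⟩, h2⟩
    · simp [rv_cons, symS, top1, symOf]
    · simp [rv_cons, applyOp, collapse, top1, pop1, List.length_pos_iff, hx]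
  | @col2 a w s q p y hy hs h =>
    obtain ⟨γ, h1, h2⟩ := h
    refine ⟨γ, ⟨_, _, ?_, h1, ?_⟩, h2⟩
    · simp [rv_cons, symS, top1, symOf]
    · obtain ⟨z, rfl⟩ := hs
      have : rv (z ++ y) = rv y ++ rv z := by simp [rv]
      simp [rv_cons, applyOp, collapse, top1, List.length_pos_iff, hy, this]
      rw [← rv_length y, List.take_left]

/-- Labelled paths. -/
def Path (S : CPS P B K) : List K → P × Stack2 B → P × Stack2 B → Prop
  | [], c, c' => c = c'
  | γ :: w, c, c' => ∃ c1, Trans S γ c c1 ∧ Path S w c1 c'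

theorem path_of_run {S : CPS P B K} (n : ℕ) : ∀ (cfg : ℕ → P × Stack2 B) (lab : ℕ → K)
    (op : ℕ → Op B), (∀ i, i < n → TransOp S (lab i) (op i) (cfg i) (cfg (i + 1))) →
    Path S (List.ofFn fun i : Fin n => lab i) (cfg 0) (cfg n) := by
  induction n with
  | zero => intro cfg lab op h; simp [Path]
  | succ n ih =>
    intro cfg lab op h
    rw [List.ofFn_succ]
    refine ⟨cfg 1, ⟨op 0, h 0 (by omega)⟩, ?_⟩
    exact ih (fun i => cfg (i + 1)) (fun i => lab (i + 1)) (fun i => op (i + 1))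
      (fun i hi => h (i + 1) (by omega))

theorem run_of_path {S : CPS P B K} (k0 : K) (w : List K) : ∀ (c c' : P × Stack2 B),
    Path S w c c' → ∃ (cfg : ℕ → P × Stack2 B) (lab : ℕ → K) (op : ℕ → Op B),
      (∀ i, i < w.length → TransOp S (lab i) (op i) (cfg i) (cfg (i + 1))) ∧
      cfg 0 = c ∧ cfg w.length = c' ∧ (List.ofFn fun i : Fin w.length => lab i) = w := by
  induction w with
  | nil => rintro c _ rfl; exact ⟨fun _ => c, fun _ => k0, fun _ => .pop1, by simp, rfl, rfl, by simp⟩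
  | cons γ w ih =>
    rintro c c' ⟨c1, ⟨o, h1⟩, h2⟩
    obtain ⟨cfg, lab, op, a1, a2, a3, a4⟩ := ih c1 c' h2
    refine ⟨fun i => Nat.casesOn i c cfg, fun i => Nat.casesOn i γ lab, fun i => Nat.casesOn i o op,
      ?_, rfl, a3, ?_⟩
    · intro i hi
      rcases i with _ | i
      · change TransOp S γ o c (cfg 0)
        rw [a2]; exact h1
      · exact a1 i (by simpa using hi)
    · simp only [List.length_cons]
      rw [List.ofFn_succ]
      exact congrArg (List.cons γ) a4

theorem reachL_iff_path {S : CPS P B K} (k0 : K) (L : Language K) (c c' : P × Stack2 B) :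
    ReachL S L c c' ↔ ∃ w ∈ L, Path S w c c' := by
  constructor
  · rintro ⟨ρ, rfl, rfl, h⟩
    exact ⟨_, h, path_of_run ρ.len ρ.cfg ρ.lab ρ.op ρ.ok⟩
  · rintro ⟨w, hw, h⟩
    obtain ⟨cfg, lab, op, a1, a2, a3, a4⟩ := run_of_path k0 w c c' h
    exact ⟨⟨w.length, cfg, lab, op, a1⟩, a2, a3, by rw [Run.labels, a4]; exact hw⟩

theorem Step.ne_nil' {bot : B} {δ : P → B → Op B → P → Prop} {c c' : Cf P B}
    (h : Step bot δ c c') : 0 < c'.2.length := by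
  cases h with
  | pop2 h => exact List.length_pos_iff.2 h
  | col2 h => exact List.length_pos_iff.2 h
  | _ => simp

theorem Path.toG {S : CPS P B K} (M : DFA K σ) (w : List K) : ∀ (c c' : P × Stack2 B) (d : σ),
    Path S w c c' → VS (rv c.2) → c.2 ≠ [] →
    G S.bot (dl S M) 0 ((c.1, d), rv c.2) ((c'.1, M.evalFrom d w), rv c'.2) := by
  induction w with
  | nil =>
    rintro c _ d rfl hv hn
    exact .refl (by rw [rv_length]; exact List.length_pos_iff.2 hn)
  | cons γ w ih =>
    rintro c c' d ⟨c1, h1, h2⟩ hv hn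
    have h3 := Trans.step M h1 d hv
    have h4 := h3.ne_nil'
    refine (G.single h3 (by rw [rv_length]; exact List.length_pos_iff.2 hn) h4).trans ?_
    exact ih c1 c' (M.step d γ) h2 (h3.valid hv)
      (by rw [rv_length] at h4; exact List.length_pos_iff.1 h4)

theorem G.toPath {S : CPS P B K} {M : DFA K σ} {c c' : Cf (P × σ) B}
    (h : G S.bot (dl S M) 0 c c') :
    ∃ w, Path S w (c.1.1, rv c.2) (c'.1.1, rv c'.2) ∧ c'.1.2 = M.evalFrom c.1.2 w := by
  obtain ⟨-, h⟩ := h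
  induction h using Relation.ReflTransGen.head_induction_on with
  | refl => exact ⟨[], rfl, rfl⟩
  | head h1 _ ih =>
    obtain ⟨w, h2, h3⟩ := ih
    obtain ⟨γ, h4, h5⟩ := step_trans h1.1
    exact ⟨γ :: w, ⟨_, h4, h2⟩, by rw [h3, h5]; rfl⟩

theorem reach_iff {S : CPS P B K} (k0 : K) (M : DFA K σ) {c c' : P × Stack2 B}
    (hv : VS (rv c.2)) (hn : c.2 ≠ []) :
    ReachL S M.accepts c c' ↔ ∃ d ∈ M.accept,
      G S.bot (dl S M) 0 ((c.1, M.start), rv c.2) ((c'.1, d), rv c'.2) := by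
  rw [reachL_iff_path k0]
  constructor
  · rintro ⟨w, hw, h⟩
    exact ⟨_, hw, Path.toG M w c c' M.start h hv hn⟩
  · rintro ⟨d, hd, h⟩
    obtain ⟨w, h1, h2⟩ := h.toPath
    simp only [rv_rv] at h1 h2
    exact ⟨w, by rw [h2] at hd; exact hd, h1⟩

/-! ### The regular languages of the contraction -/

theorem mem_epsStar {e : K} {w : List K} : w ∈ epsStar e ↔ ∀ x ∈ w, x = e := by
  rw [epsStar, Language.mem_kstar]
  constructor
  · rintro ⟨L, rfl, h⟩ x hx
    obtain ⟨y, hy, hx⟩ := List.mem_flatten.1 hx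
    have : y = [e] := h y hy
    subst this
    simpa using hx
  · intro h
    refine ⟨w.map fun x => [x], by simp [← List.flatMap_def], ?_⟩
    intro y hy
    obtain ⟨x, hx, rfl⟩ := List.mem_map.1 hy
    rw [h x hx]; rfl

theorem mem_edge {e g : K} {w : List K} :
    w ∈ edgeLang e g ↔ ∃ u, (∀ x ∈ u, x = e) ∧ w = u ++ [g] := by
  rw [edgeLang, Language.mem_mul]
  constructor
  · rintro ⟨u, hu, v, hv, rfl⟩
    have : v = [g] := hv
    exact ⟨u, mem_epsStar.1 hu, by rw [this]⟩
  · rintro ⟨u, hu, rfl⟩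
    exact ⟨u, mem_epsStar.2 hu, [g], rfl, rfl⟩

open Classical in
theorem edge_regular (e g : K) (hg : g ≠ e) : (edgeLang e g).IsRegular := by
  let M : DFA K (Option Bool) :=
    ⟨fun s x => if s = some false ∧ x = e then some false else
      if s = some false ∧ x = g then some true else none, some false, {some true}⟩
  refine ⟨Option Bool, inferInstance, M, ?_⟩
  have h0 : ∀ w : List K, M.eval w = some false ↔ ∀ x ∈ w, x = e := by
    intro w
    induction w using List.reverseRecOn with
    | nil => simp [M, DFA.eval]
    | append_singleton w x ih =>
      rw [DFA.eval_append_singleton]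
      simp only [List.mem_append, List.mem_singleton]
      constructor
      · intro h y hy
        by_cases h1 : M.eval w = some false ∧ x = e
        · rcases hy with hy | rfl
          · exact ih.1 h1.1 y hy
          · exact h1.2
        · simp only [M] at h h1
          rw [if_neg h1] at h
          split_ifs at h <;> simp at h
      · intro h
        exact if_pos ⟨ih.2 fun y hy => h y (Or.inl hy), h x (Or.inr rfl)⟩
  ext w
  rw [mem_edge, DFA.mem_accepts]
  change M.eval w = some true ↔ _
  induction w using List.reverseRecOn with
  | nil => simp [M, DFA.eval]
  | append_singleton w x ih =>
    rw [DFA.eval_append_singleton]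
    constructor
    · intro h
      by_cases h1 : M.eval w = some false ∧ x = e
      · simp only [M] at h h1
        rw [if_pos h1] at h
        simp at h
      · by_cases h2 : M.eval w = some false ∧ x = g
        · exact ⟨w, (h0 w).1 h2.1, by rw [h2.2]⟩
        · simp only [M] at h h1 h2
          rw [if_neg h1, if_neg h2] at h
          simp at h
    · rintro ⟨u, hu, h⟩
      obtain ⟨hw, hx⟩ := List.append_inj' h rfl
      have hx' : x = g := by simpa using hx
      subst hw hx'
      have h1 := (h0 w).2 hu
      rw [h1]
      simp [M, hg]

theorem snoc_mem_dom {e x : K} {u v : List K} (hu : u ∈ domLang e) (hv : ∀ y ∈ v, y = e)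
    (hx : x ≠ e) : u ++ (v ++ [x]) ∈ domLang e := by
  rw [domLang, Language.mem_kstar] at hu ⊢
  obtain ⟨L, rfl, hL⟩ := hu
  refine ⟨L ++ [v ++ [x]], by simp, ?_⟩
  intro y hy
  rcases List.mem_append.1 hy with hy | hy
  · exact hL y hy
  · rw [List.mem_singleton.1 hy]
    exact Language.mem_mul.2 ⟨v, mem_epsStar.2 hv, [x], ⟨x, hx, rfl⟩, rfl⟩

theorem dom_split (e : K) (w : List K) :
    ∃ u v, u ∈ domLang e ∧ (∀ y ∈ v, y = e) ∧ w = u ++ v := by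
  induction w using List.reverseRecOn with
  | nil => exact ⟨[], [], Language.nil_mem_kstar _, by simp, rfl⟩
  | append_singleton w x ih =>
    obtain ⟨u, v, h1, h2, rfl⟩ := ih
    by_cases hx : x = e
    · refine ⟨u, v ++ [x], h1, ?_, by simp⟩
      intro y hy
      rcases List.mem_append.1 hy with hy | hy
      · exact h2 y hy
      · rw [List.mem_singleton.1 hy, hx]
    · exact ⟨u ++ (v ++ [x]), [], snoc_mem_dom h1 h2 hx, by simp, by simp⟩

open Classical in
theorem dom_regular (e : K) : (domLang e).IsRegular := by
  let M : DFA K Bool := ⟨fun _ x => decide (x ≠ e), true, {true}⟩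
  refine ⟨Bool, inferInstance, M, ?_⟩
  ext w
  rw [DFA.mem_accepts]
  change M.eval w = true ↔ _
  rcases List.eq_nil_or_concat w with rfl | ⟨w, x, rfl⟩
  · simp only [DFA.eval_nil]
    exact ⟨fun _ => Language.nil_mem_kstar _, fun _ => rfl⟩
  · rw [List.concat_eq_append, DFA.eval_append_singleton]
    change decide (x ≠ e) = true ↔ _
    rw [decide_eq_true_iff]
    constructor
    · intro hx
      obtain ⟨u, v, h1, h2, rfl⟩ := dom_split e w
      rw [List.append_assoc]
      exact snoc_mem_dom h1 h2 hx
    · intro h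
      rw [domLang, Language.mem_kstar] at h
      obtain ⟨L, h1, h2⟩ := h
      rcases List.eq_nil_or_concat L with rfl | ⟨L, y, rfl⟩
      · simp at h1
      · obtain ⟨u, -, v, ⟨z, hz, rfl⟩, rfl⟩ := Language.mem_mul.1 (h2 y (by simp))
        simp only [List.concat_eq_append, List.flatten_append, List.flatten_cons, List.flatten_nil,
          List.append_nil, ← List.append_assoc] at h1
        have := (List.append_inj' h1 rfl).2
        simp only [List.cons.injEq, and_true] at this
        rw [this]; exact hz

end Part10



/-! ## Part 11: the main theorem -/

section Part11

set_option linter.unusedSectionVars false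

variable {P B K σ : Type} [DecidableEq B]

/-- The stack encoded by a forest. -/
def dec (bot : B) (F : BT (Lb B)) : Stk B := decS F [Sum.inl bot] []

/-- The type of the bottom word. -/
noncomputable def t0 (S : CPS P B K) (M : DFA K σ) : Ty (P × σ) B :=
  ty S.bot (dl S M) (List.map (tg (([] : Stk B).length)) [Sum.inl S.bot])

theorem lkLe_bot (bot : B) (n : ℕ) : lkLe n [(Sum.inl bot : Letter B)] := by
  intro x k h; simp at h

theorem dec_VS (bot : B) (F : BT (Lb B)) : VS (dec bot F) :=
  decS_VS F _ _ (lkLe_bot bot _) trivial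

theorem dec_ne {bot : B} {F : BT (Lb B)} (h : Can F) (h' : F ≠ .nil) : rv (dec bot F) ≠ [] := by
  have := decS_lt h h' [Sum.inl bot] []
  rw [← List.length_pos_iff, rv_length]
  exact this

theorem rr_reach {S : CPS P B K} (k0 : K) (M : DFA K σ) {F F' : BT (Lb B)} (hF : Can F)
    (hF' : Can F') (hn : F ≠ .nil) (q q' : P) :
    ReachL S M.accepts (q, rv (dec S.bot F)) (q', rv (dec S.bot F')) ↔ ∃ d ∈ M.accept,
      rr S.bot (dl S M) F F' false false (t0 S M) (q, M.start) (q', d) := by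
  rw [reach_iff k0 M (by simpa only [rv_rv] using dec_VS _ _) (dec_ne hF hn)]
  simp only [rv_rv]
  refine exists_congr fun d => and_congr_right fun _ => ?_
  exact (rr_iff F F' hF hF' false false [Sum.inl S.bot] [] _ _ (by simp) (lkLe_bot _ _) trivial).symm

theorem rv_bottom (bot : B) : rv (bottom2 bot) = [[Sum.inl bot]] := by simp [rv, bottom2]

theorem VS_bottom (bot : B) : VS (rv (bottom2 bot)) := by
  rw [rv_bottom]; exact ⟨lkLe_bot _ _, trivial⟩

theorem uu_reach {S : CPS P B K} (k0 : K) (M : DFA K σ) {F : BT (Lb B)} (hF : Can F) (q q' : P) :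
    ReachL S M.accepts (q, bottom2 S.bot) (q', rv (dec S.bot F)) ↔ ∃ d ∈ M.accept,
      uu S.bot (dl S M) F false (t0 S M) (q, M.start) (q', d) := by
  rw [reach_iff k0 M (VS_bottom _) (by simp [bottom2])]
  simp only [rv_rv, rv_bottom]
  refine exists_congr fun d => and_congr_right fun _ => ?_
  exact (uu_iff F hF false [Sum.inl S.bot] [] _ _ (by simp) (lkLe_bot _ _) trivial).symm

theorem reach_forest {S : CPS P B K} (k0 : K) (M : DFA K σ) {q : P} {c : P × Stack2 B}
    (h : ReachL S M.accepts (q, bottom2 S.bot) c) :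
    ∃ F, Can F ∧ F ≠ .nil ∧ rv (dec S.bot F) = c.2 := by
  rw [reach_iff k0 M (VS_bottom _) (by simp [bottom2])] at h
  obtain ⟨d, -, h⟩ := h
  have h1 := h.right
  have h2 : OK S.bot (rv c.2) := by
    obtain ⟨-, h⟩ := h
    have : ∀ x, Relation.ReflTransGen (fun c c' : Cf (P × σ) B => Step S.bot (dl S M) c c' ∧
        0 < c'.2.length) ((q, M.start), rv (bottom2 S.bot)) x → OK S.bot x.2 := by
      intro x hx
      induction hx with
      | refl =>
        rw [rv_bottom]
        refine ⟨List.suffix_refl _, ?_, trivial⟩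
        intro x k t ht
        have := ht.subset (List.mem_cons_self)
        simp at this
      | tail _ h ih => exact h.1.ok ih
    exact this _ h
  obtain ⟨F, a1, a2, a3⟩ := exists_forest _ h2 (List.length_pos_iff.1 h1)
  exact ⟨F, a1, a2, by rw [dec, a3, rv_rv]⟩

/-- The tree encoding a configuration. -/
def ct (q : P) (F : BT (Lb B)) : BT (P ⊕ Lb B) := .node (.inl q) (emb F) .nil

theorem ct_inj {q q' : P} {F F' : BT (Lb B)} (h : ct q F = ct q' F') : q = q' ∧ F = F' := by
  simp only [ct, BT.node.injEq, Sum.inl.injEq, and_true] at h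
  refine ⟨h.1, ?_⟩
  rw [← st_emb (C := P) F, h.2, st_emb]

theorem rel_aut [Finite P] [Finite B] (S : CPS P B K) (k0 : K) (L : Language K)
    (hL : L.IsRegular) :
    ∃ M : TreeAut (Option (P ⊕ Lb B) × Option (P ⊕ Lb B)), ∀ t u q F q' F',
      t.bt = ct q F → u.bt = ct q' F' → Can F → Can F' → F ≠ .nil →
      (M.Accepts (PTree.conv t u) ↔
        ReachL S L (q, rv (dec S.bot F)) (q', rv (dec S.bot F'))) := by
  obtain ⟨σ, _, M, rfl⟩ := hL
  obtain ⟨N, hN⟩ := aut_bin (C := P) S.bot (dl S M) (fun q q' R => ∃ d ∈ M.accept,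
    R false false (t0 S M) (q, M.start) (q', d))
  refine ⟨N, fun t u q F q' F' ht hu hF hF' hn => ?_⟩
  rw [hN, rr_reach k0 M hF hF' hn, ht, hu]
  constructor
  · rintro ⟨q1, q1', l, r, l', r', h1, h2, h3⟩
    simp only [ct, BT.node.injEq, Sum.inl.injEq] at h1 h2
    obtain ⟨rfl, rfl, rfl⟩ := h1
    obtain ⟨rfl, rfl, rfl⟩ := h2
    simpa only [st_emb] using h3
  · intro h
    exact ⟨q, q', _, _, _, _, rfl, rfl, by simpa only [st_emb] using h⟩

theorem dom_aut [Finite P] [Finite B] (S : CPS P B K) (k0 : K) (L : Language K)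
    (hL : L.IsRegular) :
    ∃ M : TreeAut (P ⊕ Lb B), ∀ t, M.Accepts t ↔ ∃ q F, t.bt = ct q F ∧ Can F ∧ F ≠ .nil ∧
      ReachL S L (S.q0, bottom2 S.bot) (q, rv (dec S.bot F)) := by
  obtain ⟨σ, _, M, rfl⟩ := hL
  obtain ⟨N, hN⟩ := aut_un (C := P) S.bot (dl S M) (fun q U => ∃ d ∈ M.accept,
    U false (t0 S M) (S.q0, M.start) (q, d))
  refine ⟨N, fun t => ?_⟩
  rw [hN]
  constructor
  · rintro ⟨q, l, h1, h2, h3, h4, h5⟩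
    refine ⟨q, st l, by rw [h1, ct, h2], h4, ?_, (uu_reach k0 M h4 _ _).2 h5⟩
    rw [st, ne_eq, BT.map_eq_nil]; exact h3
  · rintro ⟨q, F, h1, h2, h3, h4⟩
    refine ⟨q, emb F, h1, by rw [st_emb], ?_, by rwa [st_emb], ?_⟩
    · rw [emb, ne_eq, BT.map_eq_nil]; exact h3
    · rw [st_emb]; exact (uu_reach k0 M h2 _ _).1 h4

end Part11

/-- For a level-2 collapsible pushdown system `S` with `ε ∈ Γ` and
regular languages `L₁,…,L_n`, the expansion of the ε-contraction `G/ε` of the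
configuration graph of `S` by the relations `Reach_{L₁},…,Reach_{L_n}` is tree-automatic. -/
theorem epsContraction_with_regular_reachability_isTreeAutomatic
    {Q A Γ : Type} [Fintype Q] [Fintype A] [Fintype Γ] [DecidableEq A]
    (S : CPS Q A Γ) (eps : Γ) (n : ℕ) (L : Fin n → Language Γ)
    (hL : ∀ i, (L i).IsRegular) :
    IsTreeAutomatic
      (B := {c : Q × Stack2 A // c ∈ EpsDomain S eps})
      (I := {γ : Γ // γ ≠ eps} ⊕ Fin n)
      (fun i c₁ c₂ =>
        match i with
        | Sum.inl γ => ReachL S (edgeLang eps γ.1) c₁.1 c₂.1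
        | Sum.inr j => ReachL S (L j) c₁.1 c₂.1) := by
  obtain ⟨AB, hAB⟩ := dom_aut S eps (domLang eps) (dom_regular eps)
  have hE : ∀ i : {γ : Γ // γ ≠ eps} ⊕ Fin n,
      (match i with
        | Sum.inl γ => edgeLang eps γ.1
        | Sum.inr j => L j).IsRegular := by
    rintro (γ | j)
    · exact edge_regular eps γ.1 γ.2
    · exact hL j
  choose AE hAE using fun i => rel_aut S eps _ (hE i)
  choose q F h1 h2 h3 h4 using fun t : {t : PTree (Q ⊕ Lb A) // AB.Accepts t} => (hAB t.1).1 t.2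
  refine ⟨Q ⊕ Lb A, inferInstance, AB, AE, fun t => ⟨(q t, rv (dec S.bot (F t))), h4 t⟩,
    ⟨?_, ?_⟩, ?_⟩
  · intro t u h
    have h : q t = q u ∧ rv (dec S.bot (F t)) = rv (dec S.bot (F u)) :=
      Prod.mk.inj (congrArg Subtype.val h)
    have hd : dec S.bot (F t) = dec S.bot (F u) := by
      rw [← rv_rv (dec S.bot (F t)), h.2, rv_rv]
    have hF := decS_inj (h2 t) (h2 u) hd
    apply Subtype.ext
    apply PTree.bt_inj
    rw [h1, h1, h.1, hF]
  · rintro ⟨⟨p, s⟩, hc⟩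
    have hc' : ReachL S (domLang eps) (S.q0, bottom2 S.bot) (p, s) := hc
    obtain ⟨σ, _, M, hM⟩ := dom_regular eps
    have hc2 := hc'
    rw [← hM] at hc2
    obtain ⟨F', a1, a2, a3⟩ := reach_forest eps M hc2
    simp only at a3
    obtain ⟨t, ht⟩ := exists_bt (Sum.inl p : Q ⊕ Lb A) (emb F') .nil
    have hacc : AB.Accepts t := (hAB t).2 ⟨p, F', ht, a1, a2, by rw [a3]; exact hc'⟩
    refine ⟨⟨t, hacc⟩, ?_⟩
    have h5 := h1 ⟨t, hacc⟩
    obtain ⟨e1, e2⟩ := ct_inj (h5.symm.trans ht)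
    apply Subtype.ext
    simp only [e1, e2, a3]
  · intro i t u
    have := hAE i t.1 u.1 _ _ _ _ (h1 t) (h1 u) (h2 t) (h2 u) (h3 t)
    rcases i with γ | j
    · exact this
    · exact this

end CPG
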